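/- arXiv:0811.2251 — 2 statements merged into one kernel-verified Lean document; each statement's English description precedes it below -/
import Mathlib

section
/- Let n ≥ 2. For each j = 1, …, n let T_{j,1}, …, T_{j,A(j)} be finitely many unit cylinders in ℝ^n, and let v_{j,a} be a unit vector parallel to the core of T_{j,a}. Assume the families are quantitatively transverse: for every choice of indices a_1, …, a_n, the determinant of the matrix with columns v_{1,a_1}, v_{2,a_2}, …, v_{n,a_n} has absolute value at least θ, where θ > 0. Then ∫_{ℝ^n} [ ∏_{j=1}^n ( ∑_{a=1}^{A(j)} χ_{T_{j,a}}(x) ) ]^{1/(n-1)} dx ≤ C(n) θ^{-1/(n-1)} ∏_{j=1}^n A(j)^{1/(n-1)}, where C(n) is a constant depending only on n and the integral is with respect to Lebesgue measure. -/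
open MeasureTheory
open scoped ENNReal

/-- The cylinder of radius `r` around the line through `p` with direction `v`. -/
noncomputable def cylinder {n : ℕ} (p v : EuclideanSpace ℝ (Fin n)) (r : ℝ) :
    Set (EuclideanSpace ℝ (Fin n)) :=
  {x | Metric.infDist x {y | ∃ t : ℝ, y = p + t • v} ≤ r}

namespace MK
open ProbabilityTheory


lemma gauss_lower (a b : ℝ) (h : ∀ x ∈ Set.Icc a b, |x| ≤ 2) :
    ENNReal.ofReal (gaussianPDFReal 0 1 2) * ENNReal.ofReal (b - a) ≤
      gaussianReal 0 1 (Set.Icc a b) := by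
  rw [gaussianReal_apply _ one_ne_zero, ← Real.volume_Icc, ← setLIntegral_const]
  refine setLIntegral_mono' measurableSet_Icc fun x hx => ?_
  rw [gaussianPDF]
  apply ENNReal.ofReal_le_ofReal
  simp only [gaussianPDFReal]
  have := abs_le.1 (h x hx)
  have h2 : (x - 0) ^ 2 ≤ (2 - 0) ^ 2 := by nlinarith [this.1, this.2]
  gcongr

lemma map_inner_std {E : Type*} [NormedAddCommGroup E] [InnerProductSpace ℝ E]
    [FiniteDimensional ℝ E] [MeasurableSpace E] [BorelSpace E] (u : E) :
    (stdGaussian E).map (fun a => inner ℝ u a) = (gaussianReal 0 1).map (‖u‖ * ·) := by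
  have h := IsGaussian.map_eq_gaussianReal (μ := stdGaussian E) (innerSL ℝ u)
  rw [variance_dual_stdGaussian, integral_strongDual_stdGaussian] at h
  rw [gaussianReal_map_const_mul]
  have h1 : (⇑(innerSL ℝ u) : E → ℝ) = fun a => inner ℝ u a := by ext a; simp
  rw [h1] at h
  rw [h]
  congr 1
  · simp
  · ext; simp

lemma indep_inner_std {E : Type*} [NormedAddCommGroup E] [InnerProductSpace ℝ E]
    [FiniteDimensional ℝ E] [MeasurableSpace E] [BorelSpace E] (u v : E) (h : inner ℝ u v = 0) :
    IndepFun (fun a => inner ℝ u a) (fun a => inner ℝ v a) (stdGaussian E) := by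
  apply HasGaussianLaw.indepFun_of_covariance_eq_zero
  · have := (IsGaussian.hasGaussianLaw_id (μ := stdGaussian E)).map_fun
      ((innerSL ℝ u).prod (innerSL ℝ v))
    simpa using this
  · rw [← covarianceBilin_apply_eq_cov IsGaussian.memLp_two_id, covarianceBilin_stdGaussian]
    exact h

theorem crofton : ∃ c : ℝ, 0 < c ∧ ∀ (E : Type) [NormedAddCommGroup E] [InnerProductSpace ℝ E]
    [FiniteDimensional ℝ E] [MeasurableSpace E] [BorelSpace E] (u v : E), ‖u‖ = 1 → ‖v‖ = 1 →
    ENNReal.ofReal (c * ‖u - v‖) ≤ stdGaussian E {a | inner ℝ a u * inner ℝ a v < 0} := by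
  set k := gaussianPDFReal 0 1 2 with hk
  have hk0 : 0 < k := gaussianPDFReal_pos _ _ _ one_ne_zero
  refine ⟨k * (1 / 4) * k, by positivity, ?_⟩
  intro E _ _ _ _ _ u v hu hv
  by_cases huv : u = v
  · simp [huv]
  have hd : 0 < ‖u - v‖ := norm_pos_iff.2 (sub_ne_zero.2 huv)
  have hd2 : ‖u - v‖ ≤ 2 := by
    have := norm_sub_le u v; linarith
  have hp2 : ‖u + v‖ ≤ 2 := by
    have := norm_add_le u v; linarith
  have horth : inner ℝ (u + v) (u - v) = 0 := by
    rw [real_inner_add_sub_eq_zero_iff, hu, hv]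
  have hind := indep_inner_std _ _ horth
  have hsub : (fun a => inner ℝ (u + v) a) ⁻¹' {x | |x| < ‖u - v‖} ∩
      (fun a => inner ℝ (u - v) a) ⁻¹' {x | ‖u - v‖ ≤ |x|} ⊆ {a | inner ℝ a u * inner ℝ a v < 0} := by
    rintro a ⟨h1, h2⟩
    simp only [Set.mem_preimage, Set.mem_ofPred_eq] at h1 h2 ⊢
    have h3 := sq_lt_sq.2 (h1.trans_le h2)
    rw [inner_add_left, inner_sub_left] at h3
    rw [real_inner_comm u a, real_inner_comm v a]
    nlinarith
  refine le_trans ?_ (measure_mono hsub)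
  have m1 : MeasurableSet {x : ℝ | |x| < ‖u - v‖} := measurableSet_lt (by fun_prop) (by fun_prop)
  have m2 : MeasurableSet {x : ℝ | ‖u - v‖ ≤ |x|} := measurableSet_le (by fun_prop) (by fun_prop)
  rw [hind.measure_inter_preimage_eq_mul _ _ m1 m2]
  rw [← Measure.map_apply (by fun_prop) m1, ← Measure.map_apply (by fun_prop) m2,
    map_inner_std, map_inner_std, Measure.map_apply (by fun_prop) m1,
    Measure.map_apply (by fun_prop) m2]
  have e1 : Set.Icc 0 (‖u - v‖ / 2 / 2) ⊆ (fun x => ‖u + v‖ * x) ⁻¹' {x | |x| < ‖u - v‖} := by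
    rintro x ⟨hx0, hx1⟩
    simp only [Set.mem_preimage, Set.mem_ofPred_eq, abs_mul, abs_norm, abs_of_nonneg hx0]
    nlinarith [norm_nonneg (u + v)]
  have e2 : Set.Icc 1 2 ⊆ (fun x => ‖u - v‖ * x) ⁻¹' {x | ‖u - v‖ ≤ |x|} := by
    rintro x ⟨hx0, hx1⟩
    simp only [Set.mem_preimage, Set.mem_ofPred_eq, abs_mul, abs_norm,
      abs_of_nonneg (zero_le_one.trans hx0)]
    nlinarith
  have g1 := (gauss_lower 0 (‖u - v‖ / 2 / 2) (by
    rintro x ⟨hx0, hx1⟩; rw [abs_of_nonneg hx0]; linarith)).trans (measure_mono e1)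
  have g2 := (gauss_lower 1 2 (by
    rintro x ⟨hx0, hx1⟩; rw [abs_of_nonneg (by linarith)]; linarith)).trans (measure_mono e2)
  refine le_trans ?_ (mul_le_mul' g1 g2)
  rw [← ENNReal.ofReal_mul hk0.le, ← ENNReal.ofReal_mul hk0.le,
    ← ENNReal.ofReal_mul (mul_nonneg hk0.le (by linarith))]
  apply le_of_eq
  congr 1
  ring
end MK

namespace MK
open Matrix

section iso
set_option linter.unusedSectionVars false
variable {Ω ι : Type*} [MeasurableSpace Ω] [Fintype ι] [DecidableEq ι]

/-- squared Euclidean norm of `T w` -/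
noncomputable def nn (T : Matrix ι ι ℝ) (w : ι → ℝ) : ℝ := (T *ᵥ w) ⬝ᵥ (T *ᵥ w)

lemma unif_delta (ν : Measure Ω) [IsFiniteMeasure ν] (f : Ω → ι → ℝ) (hf : Measurable f) (K : ℝ)
    (hK : ∀ᵐ x ∂ν, ∀ i, |f x i| ≤ K)
    (hnull : ∀ b : ι → ℝ, b ≠ 0 → ν {x | b ⬝ᵥ f x = 0} = 0) (η : ℝ≥0∞) (hη : 0 < η) :
    ∃ δ : ℝ, 0 < δ ∧ ∀ b : ι → ℝ, ‖b‖ = 1 → ν {x | |b ⬝ᵥ f x| ≤ δ} ≤ η := by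
  have hm : ∀ b : ι → ℝ, Measurable fun x => |b ⬝ᵥ f x| := by
    intro b; simp only [dotProduct]; fun_prop
  suffices h : ∃ δ : ℝ, 0 < δ ∧ ∀ b ∈ Metric.sphere (0 : ι → ℝ) 1,
      ν {x | |b ⬝ᵥ f x| ≤ δ} ≤ η by
    obtain ⟨δ, h1, h2⟩ := h
    exact ⟨δ, h1, fun b hb => h2 b (by simpa using hb)⟩
  refine (isCompact_sphere (0 : ι → ℝ) 1).induction_on
    (p := fun s => ∃ δ : ℝ, 0 < δ ∧ ∀ b ∈ s, ν {x | |b ⬝ᵥ f x| ≤ δ} ≤ η) ?_ ?_ ?_ ?_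
  · exact ⟨1, one_pos, by simp⟩
  · rintro s t hst ⟨δ, h1, h2⟩
    exact ⟨δ, h1, fun b hb => h2 b (hst hb)⟩
  · rintro s t ⟨δ, h1, h2⟩ ⟨δ', h1', h2'⟩
    refine ⟨min δ δ', lt_min h1 h1', ?_⟩
    rintro b (hb | hb)
    · refine le_trans (measure_mono fun x hx => ?_) (h2 b hb)
      simp only [Set.mem_ofPred_eq] at hx ⊢
      exact le_trans hx (min_le_left _ _)
    · refine le_trans (measure_mono fun x hx => ?_) (h2' b hb)
      simp only [Set.mem_ofPred_eq] at hx ⊢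
      exact le_trans hx (min_le_right _ _)
  · intro b hb
    have hb0 : b ≠ 0 := by rintro rfl; simp at hb
    -- continuity from above
    have hlim : Filter.Tendsto (fun k : ℕ => ν {x | |b ⬝ᵥ f x| ≤ 1 / ((k : ℝ) + 1)}) Filter.atTop
        (nhds (ν (⋂ k : ℕ, {x | |b ⬝ᵥ f x| ≤ 1 / ((k : ℝ) + 1)}))) := by
      apply tendsto_measure_iInter_atTop
      · intro k; exact (measurableSet_le (hm b) measurable_const).nullMeasurableSet
      · intro k l hkl x hx
        simp only [Set.mem_ofPred_eq] at hx ⊢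
        exact le_trans hx (Nat.one_div_le_one_div hkl)
      · exact ⟨0, measure_ne_top _ _⟩
    have hz : ν (⋂ k : ℕ, {x | |b ⬝ᵥ f x| ≤ 1 / ((k : ℝ) + 1)}) = 0 := by
      refine measure_mono_null ?_ (hnull b hb0)
      intro x hx
      simp only [Set.mem_iInter, Set.mem_ofPred_eq] at hx ⊢
      by_contra hne
      obtain ⟨k, hk⟩ := exists_nat_one_div_lt (abs_pos.2 hne)
      exact absurd (hx k) (not_le.2 hk)
    rw [hz] at hlim
    obtain ⟨k, hk⟩ := (hlim.eventually (gt_mem_nhds hη)).exists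
    set ε : ℝ := 1 / ((k : ℝ) + 1) with hε
    have hε0 : 0 < ε := by positivity
    set r : ℝ := ε / 2 / ((Fintype.card ι + 1) * (|K| + 1)) with hr
    have hr0 : 0 < r := by positivity
    refine ⟨Metric.ball b r, mem_nhdsWithin_of_mem_nhds (Metric.ball_mem_nhds _ hr0), ε / 2,
      by positivity, ?_⟩
    intro b' hb'
    refine le_trans (measure_mono_ae ?_) hk.le
    filter_upwards [hK] with x hx h
    change |b' ⬝ᵥ f x| ≤ ε / 2 at h
    change |b ⬝ᵥ f x| ≤ ε
    have h1 : |(b - b') ⬝ᵥ f x| ≤ ε / 2 := by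
      simp only [dotProduct]
      calc |∑ i, (b - b') i * f x i| ≤ ∑ i, |(b - b') i * f x i| := Finset.abs_sum_le_sum_abs _ _
        _ ≤ ∑ i : ι, r * (|K| + 1) := by
            apply Finset.sum_le_sum
            intro i _
            rw [abs_mul]
            apply mul_le_mul
            · have := norm_le_pi_norm (b - b') i
              rw [Metric.mem_ball, dist_comm, dist_eq_norm] at hb'
              exact this.trans hb'.le
            · exact (hx i).trans ((le_abs_self K).trans (by linarith))
            · positivity
            · positivity
        _ = Fintype.card ι * (r * (|K| + 1)) := by simp
        _ ≤ (Fintype.card ι + 1) * (r * (|K| + 1)) := by gcongr; linarith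
        _ = ε / 2 := by rw [hr]; field_simp
    have h2 : b ⬝ᵥ f x = (b - b') ⬝ᵥ f x + b' ⬝ᵥ f x := by rw [sub_dotProduct]; ring
    rw [h2]
    exact (abs_add_le _ _).trans (by linarith)

lemma nn_eq (T : Matrix ι ι ℝ) (w : ι → ℝ) : nn T w = ∑ i, (T i ⬝ᵥ w) ^ 2 := by
  simp [nn, dotProduct, mulVec, sq]

lemma nn_nonneg (T : Matrix ι ι ℝ) (w : ι → ℝ) : 0 ≤ nn T w := by
  rw [nn_eq]; positivity

lemma row_le_nn (T : Matrix ι ι ℝ) (w : ι → ℝ) (i : ι) : (T i ⬝ᵥ w) ^ 2 ≤ nn T w := by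
  rw [nn_eq]
  exact Finset.single_le_sum (f := fun i => (T i ⬝ᵥ w) ^ 2) (fun _ _ => sq_nonneg _)
    (Finset.mem_univ i)

lemma det_sq_le (T : Matrix ι ι ℝ) (w : ι → ℝ) (i₀ : ι) (h : w i₀ = 1) :
    T.det ^ 2 ≤ (∑ j, T.adjugate i₀ j ^ 2) * nn T w := by
  have h1 : T.det = ∑ j, T.adjugate i₀ j * (T *ᵥ w) j := by
    have : (T.adjugate *ᵥ (T *ᵥ w)) i₀ = T.det := by
      rw [mulVec_mulVec, adjugate_mul, smul_mulVec, one_mulVec]; simp [h]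
    rw [← this]; rfl
  rw [h1]
  refine (Finset.sum_mul_sq_le_sq_mul_sq _ _ _).trans (le_of_eq ?_)
  congr 1
  simp [nn, dotProduct, sq]

lemma nn_pos (T : Matrix ι ι ℝ) (hT : T.det ≠ 0) (w : ι → ℝ) (i₀ : ι) (h : w i₀ = 1) :
    0 < nn T w := by
  refine lt_of_le_of_ne (nn_nonneg T w) fun h0 => ?_
  have := det_sq_le T w i₀ h
  rw [← h0, mul_zero] at this
  exact hT (by nlinarith)

lemma continuous_nn (T : Matrix ι ι ℝ) : Continuous (nn T) := by
  unfold nn; fun_prop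

lemma integrable_log_nn (ν : Measure Ω) [IsFiniteMeasure ν] (f : Ω → ι → ℝ) (hf : Measurable f)
    (K : ℝ) (hK : ∀ᵐ x ∂ν, ∀ i, |f x i| ≤ K) (i₀ : ι) (h1 : ∀ x, f x i₀ = 1)
    (T : Matrix ι ι ℝ) (hT : T.det ≠ 0) : Integrable (fun x => Real.log (nn T (f x))) ν := by
  have hc : IsCompact ({w : ι → ℝ | w i₀ = 1} ∩ Set.pi Set.univ fun _ => Set.Icc (-K) K) := by
    apply IsCompact.inter_left
    · exact isCompact_univ_pi fun _ => isCompact_Icc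
    · exact isClosed_eq (by fun_prop) (by fun_prop)
  obtain ⟨B, hB⟩ := hc.exists_bound_of_continuousOn (f := fun w => Real.log (nn T w)) (by
    apply ContinuousOn.log
    · exact (continuous_nn T).continuousOn
    · intro w hw; exact (nn_pos T hT w i₀ hw.1).ne')
  apply Integrable.of_bound (C := B)
  · exact (((continuous_nn T).measurable.comp hf).log).aestronglyMeasurable
  · filter_upwards [hK] with x hx
    exact hB (f x) ⟨h1 x, fun i _ => abs_le.1 (hx i)⟩

/-- The functional being minimised. -/
noncomputable def FF (ν : Measure Ω) (f : Ω → ι → ℝ) (T : Matrix ι ι ℝ) : ℝ :=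
  (∫ x, Real.log (nn T (f x)) ∂ν) - 2 * ν.real Set.univ / Fintype.card ι * Real.log |T.det|

lemma FF_lower [Nonempty ι] (ν : Measure Ω) [IsFiniteMeasure ν] (f : Ω → ι → ℝ) (hf : Measurable f)
    (K : ℝ) (hK : ∀ᵐ x ∂ν, ∀ i, |f x i| ≤ K) (i₀ : ι) (h1 : ∀ x, f x i₀ = 1)
    (hnull : ∀ b : ι → ℝ, b ≠ 0 → ν {x | b ⬝ᵥ f x = 0} = 0) (hm : 0 < ν.real Set.univ) :
    ∃ B : ℝ, ∀ S : Matrix ι ι ℝ, S.det ≠ 0 → (∀ i j, |S i j| ≤ 1) → (∃ i j, |S i j| = 1) →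
      B ≤ FF ν f S := by
  set m := ν.real Set.univ with hmdef
  set N : ℝ := (Fintype.card ι : ℝ) with hN
  have hN1 : 1 ≤ N := by rw [hN]; exact_mod_cast Fintype.card_pos
  obtain ⟨δ', hδ', hb'⟩ := unif_delta ν f hf K hK hnull (ENNReal.ofReal (m / N))
    (by rw [ENNReal.ofReal_pos]; positivity)
  obtain ⟨δ, hδ, hδ1, hb⟩ : ∃ δ : ℝ, 0 < δ ∧ δ ≤ 1 ∧ ∀ b : ι → ℝ, ‖b‖ = 1 →
      ν.real {x | |b ⬝ᵥ f x| ≤ δ} ≤ m / N := by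
    refine ⟨min δ' 1, lt_min hδ' one_pos, min_le_right _ _, fun b h => ?_⟩
    apply ENNReal.toReal_le_of_le_ofReal (by positivity)
    refine le_trans (measure_mono fun x hx => ?_) (hb' b h)
    simp only [Set.mem_ofPred_eq] at hx ⊢
    exact le_trans hx (min_le_left _ _)
  set l : ℝ := ((Fintype.card ι).factorial : ℝ) with hl
  have hl1 : 1 ≤ l := by rw [hl]; exact_mod_cast Nat.succ_le_of_lt (Nat.factorial_pos _)
  set C0 : ℝ := N * l ^ 2 with hC0
  have hC01 : 1 ≤ C0 := by rw [hC0]; nlinarith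
  have hdetle : ∀ A : Matrix ι ι ℝ, (∀ i j, |A i j| ≤ 1) → |A.det| ≤ l := by
    intro A hA
    have := Matrix.det_le (A := A) (abv := AbsoluteValue.abs) (x := 1) hA
    simpa [hl] using this
  refine ⟨2 * Real.log δ * m - m * Real.log C0 - 2 * m / N * Real.log l, ?_⟩
  rintro S hdet hS ⟨i, j, hij⟩
  have hadj : ∑ j, S.adjugate i₀ j ^ 2 ≤ C0 := by
    calc ∑ j, S.adjugate i₀ j ^ 2 ≤ ∑ j : ι, l ^ 2 := by
          apply Finset.sum_le_sum
          intro j _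
          rw [sq_le_sq, abs_of_pos (by linarith : 0 < l), adjugate_apply]
          apply hdetle
          intro a b
          rw [updateRow_apply]
          split_ifs
          · rw [Pi.single_apply]; split_ifs <;> simp
          · exact hS _ _
      _ = C0 := by simp [hC0, hN]
  have hrow : ‖S i‖ = 1 := by
    apply le_antisymm
    · rw [pi_norm_le_iff_of_nonneg zero_le_one]; exact fun k => hS i k
    · rw [← hij]; exact norm_le_pi_norm (S i) j
  set bad := {x | |S i ⬝ᵥ f x| ≤ δ} with hbad
  have hbadm : MeasurableSet bad := by
    refine measurableSet_le ?_ measurable_const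
    simp only [dotProduct]; fun_prop
  have hbadle : ν.real bad ≤ m / N := hb _ hrow
  have hdpos : 0 < |S.det| := abs_pos.2 hdet
  have hpt : ∀ x, 2 * Real.log δ + bad.indicator
      (fun _ => 2 * Real.log |S.det| - Real.log C0) x ≤ Real.log (nn S (f x)) := by
    intro x
    have hpos := nn_pos S hdet (f x) i₀ (h1 x)
    by_cases hx : x ∈ bad
    · rw [Set.indicator_of_mem hx]
      have hlogδ : Real.log δ ≤ 0 := Real.log_nonpos hδ.le hδ1
      have h2 : S.det ^ 2 ≤ C0 * nn S (f x) :=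
        (det_sq_le S (f x) i₀ (h1 x)).trans (by gcongr)
      have h3 := Real.log_le_log (by positivity) h2
      rw [Real.log_mul (by positivity) hpos.ne', ← sq_abs, Real.log_pow] at h3
      push_cast at h3
      linarith
    · rw [Set.indicator_of_notMem hx]
      have h2 : δ < |S i ⬝ᵥ f x| := not_le.1 hx
      have h3 : δ ^ 2 ≤ nn S (f x) := by
        refine le_trans ?_ (row_le_nn S (f x) i)
        rw [sq_le_sq, abs_of_pos hδ]; exact h2.le
      have h4 := Real.log_le_log (by positivity) h3
      rw [Real.log_pow] at h4
      push_cast at h4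
      linarith
  have hInt : 2 * Real.log δ * m + (2 * Real.log |S.det| - Real.log C0) * ν.real bad ≤
      ∫ x, Real.log (nn S (f x)) ∂ν := by
    have hi : Integrable (bad.indicator fun _ => 2 * Real.log |S.det| - Real.log C0) ν :=
      (integrable_const _).indicator hbadm
    have := integral_mono ((integrable_const _).add hi)
      (integrable_log_nn ν f hf K hK i₀ h1 S hdet) hpt
    rw [integral_add' (integrable_const _) hi, integral_const, integral_indicator hbadm,
      setIntegral_const] at this
    simp only [smul_eq_mul] at this
    linarith
  have hlogdet : Real.log |S.det| ≤ Real.log l := Real.log_le_log hdpos (hdetle S hS)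
  have hlogl : 0 ≤ Real.log l := Real.log_nonneg hl1
  have hlogC : 0 ≤ Real.log C0 := Real.log_nonneg hC01
  have hbm : ν.real bad ≤ m := measureReal_mono (Set.subset_univ _)
  have hb0 : 0 ≤ ν.real bad := measureReal_nonneg
  have hprod : 0 ≤ (Real.log l - Real.log |S.det|) * (m / N - ν.real bad) :=
    mul_nonneg (by linarith) (by linarith)
  have hC2 : 0 ≤ Real.log C0 * (m - ν.real bad) := mul_nonneg hlogC (by linarith)
  have hl2 : 0 ≤ Real.log l * ν.real bad := mul_nonneg hlogl hb0
  unfold FF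
  rw [← hmdef, ← hN]
  have e1 : 2 * m / N = 2 * (m / N) := by ring
  rw [e1]
  nlinarith

lemma nn_smul (T : Matrix ι ι ℝ) (c : ℝ) (w : ι → ℝ) : nn (c • T) w = c ^ 2 * nn T w := by
  simp [nn, smul_mulVec, smul_dotProduct, dotProduct_smul]; ring

lemma FF_smul [Nonempty ι] (ν : Measure Ω) [IsFiniteMeasure ν] (f : Ω → ι → ℝ) (hf : Measurable f)
    (K : ℝ) (hK : ∀ᵐ x ∂ν, ∀ i, |f x i| ≤ K) (i₀ : ι) (h1 : ∀ x, f x i₀ = 1)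
    (T : Matrix ι ι ℝ) (hT : T.det ≠ 0) (c : ℝ) (hc : 0 < c) : FF ν f (c • T) = FF ν f T := by
  unfold FF
  have hN : (Fintype.card ι : ℝ) ≠ 0 := by exact_mod_cast Fintype.card_ne_zero
  have e : ∀ x, Real.log (nn (c • T) (f x)) = 2 * Real.log c + Real.log (nn T (f x)) := by
    intro x
    rw [nn_smul, Real.log_mul (by positivity) (nn_pos T hT _ i₀ (h1 x)).ne', Real.log_pow]
    norm_num
  simp_rw [e]
  rw [integral_add (integrable_const _) (integrable_log_nn ν f hf K hK i₀ h1 T hT), integral_const,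
    det_smul, abs_mul, Real.log_mul (by positivity) (abs_ne_zero.2 hT), abs_pow, abs_of_pos hc,
    Real.log_pow]
  simp only [smul_eq_mul]
  field_simp
  ring

lemma nn_reflect (T : Matrix ι ι ℝ) (e : ι → ℝ) (he : e ⬝ᵥ e = 1) (w : ι → ℝ) :
    nn ((1 - (1 / 2 : ℝ) • vecMulVec e e) * T) w = nn T w - 3 / 4 * (e ⬝ᵥ (T *ᵥ w)) ^ 2 := by
  have : ((1 - (1 / 2 : ℝ) • vecMulVec e e) * T) *ᵥ w =
      T *ᵥ w - (1 / 2 * (e ⬝ᵥ (T *ᵥ w))) • e := by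
    rw [← mulVec_mulVec, sub_mulVec, one_mulVec, smul_mulVec, vecMulVec_mulVec]
    ext i; simp; ring
  rw [nn, this, nn]
  simp only [sub_dotProduct, dotProduct_sub, smul_dotProduct, dotProduct_smul, smul_eq_mul, he,
    dotProduct_comm (T *ᵥ w) e]
  ring

lemma det_reflect (T : Matrix ι ι ℝ) (e : ι → ℝ) (he : e ⬝ᵥ e = 1) :
    ((1 - (1 / 2 : ℝ) • vecMulVec e e) * T).det = 1 / 2 * T.det := by
  rw [det_mul]
  congr 1
  have : (1 - (1 / 2 : ℝ) • vecMulVec e e) =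
      1 + replicateCol Unit ((-(1 / 2) : ℝ) • e) * replicateRow Unit e := by
    ext i j; simp [vecMulVec, mul_apply, sub_eq_add_neg]; ring
  rw [this, det_one_add_replicateCol_mul_replicateRow]
  simp [dotProduct_smul, he]; norm_num

theorem isotropic [Nonempty ι] (ν : Measure Ω) [IsFiniteMeasure ν] (f : Ω → ι → ℝ)
    (hf : Measurable f)
    (K : ℝ) (hK : ∀ᵐ x ∂ν, ∀ i, |f x i| ≤ K) (i₀ : ι) (h1 : ∀ x, f x i₀ = 1)
    (hnull : ∀ b : ι → ℝ, b ≠ 0 → ν {x | b ⬝ᵥ f x = 0} = 0) :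
    ∃ T : Matrix ι ι ℝ, T.det ≠ 0 ∧ ∀ e : ι → ℝ, e ⬝ᵥ e = 1 →
      ∫⁻ x, ENNReal.ofReal ((e ⬝ᵥ (T *ᵥ f x)) ^ 2 / nn T (f x)) ∂ν ≤
        ENNReal.ofReal (3 * ν.real Set.univ / Fintype.card ι) := by
  set m := ν.real Set.univ with hmdef
  set N : ℝ := (Fintype.card ι : ℝ) with hN
  have hN0 : 0 < N := by rw [hN]; exact_mod_cast Fintype.card_pos
  have hm0 : 0 ≤ m := measureReal_nonneg
  rcases hm0.eq_or_lt with hm | hm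
  · have : ν = 0 := by
      rw [← Measure.measure_univ_eq_zero]
      rwa [eq_comm, hmdef, measureReal_eq_zero_iff] at hm
    exact ⟨1, by simp, by simp [this]⟩
  obtain ⟨B, hB⟩ := FF_lower ν f hf K hK i₀ h1 hnull hm
  have hB' : ∀ T : Matrix ι ι ℝ, T.det ≠ 0 → B ≤ FF ν f T := by
    intro T hT
    obtain ⟨⟨i, j⟩, -, hij⟩ := Finset.exists_max_image (Finset.univ : Finset (ι × ι))
      (fun q => |T q.1 q.2|) ⟨(i₀, i₀), Finset.mem_univ _⟩
    have hpos : 0 < |T i j| := by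
      rcases (abs_nonneg (T i j)).eq_or_lt with h0 | h0
      · exfalso
        apply hT
        have : T = 0 := by
          ext a b
          have := hij (a, b) (Finset.mem_univ _)
          simp only [← h0] at this
          simpa using le_antisymm this (abs_nonneg _)
        rw [this, det_zero]
      · exact h0
    rw [← FF_smul ν f hf K hK i₀ h1 T hT (|T i j|)⁻¹ (by positivity)]
    apply hB
    · rw [det_smul]; exact mul_ne_zero (by positivity) hT
    · intro a b
      simp only [Matrix.smul_apply, smul_eq_mul, abs_mul, abs_inv, abs_abs]
      rw [inv_mul_le_iff₀ hpos, mul_one]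
      exact hij (a, b) (Finset.mem_univ _)
    · refine ⟨i, j, ?_⟩
      simp only [Matrix.smul_apply, smul_eq_mul, abs_mul, abs_inv, abs_abs]
      exact inv_mul_cancel₀ hpos.ne'
  set s : Set ℝ := FF ν f '' {T | T.det ≠ 0} with hs
  have hbdd : BddBelow s := ⟨B, by rintro _ ⟨T, hT, rfl⟩; exact hB' T hT⟩
  have hne : s.Nonempty := ⟨_, 1, by simp, rfl⟩
  obtain ⟨_, ⟨T, hT, rfl⟩, hlt⟩ := exists_lt_of_csInf_lt hne
    (show sInf s < sInf s + m / N / 2 by have : 0 < m / N := by positivity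
                                         linarith)
  refine ⟨T, hT, fun e he => ?_⟩
  set T' := (1 - (1 / 2 : ℝ) • vecMulVec e e) * T with hT'
  have hd' : T'.det = 1 / 2 * T.det := det_reflect T e he
  have hT'0 : T'.det ≠ 0 := by rw [hd']; exact mul_ne_zero (by norm_num) hT
  have hle : sInf s ≤ FF ν f T' := csInf_le hbdd ⟨T', hT'0, rfl⟩
  set y : Ω → ℝ := fun x => (e ⬝ᵥ (T *ᵥ f x)) ^ 2 / nn T (f x) with hy
  have hy0 : ∀ x, 0 ≤ y x := fun x => div_nonneg (sq_nonneg _) (nn_nonneg _ _)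
  have hy1 : ∀ x, y x ≤ 1 := by
    intro x
    apply div_le_one_of_le₀ _ (nn_nonneg _ _)
    have := Finset.sum_mul_sq_le_sq_mul_sq Finset.univ e (T *ᵥ f x)
    have h2 : ∑ i, e i ^ 2 = 1 := by rw [← he]; simp [dotProduct, sq]
    rw [h2, one_mul] at this
    refine this.trans (le_of_eq ?_)
    simp [nn, dotProduct, sq]
  have hym : Measurable y := by
    apply Measurable.div
    · apply Measurable.pow_const
      have : Continuous fun w : ι → ℝ => e ⬝ᵥ (T *ᵥ w) := by fun_prop
      exact this.measurable.comp hf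
    · exact (continuous_nn T).measurable.comp hf
  have hyi : Integrable y ν := by
    apply Integrable.of_bound (C := 1) hym.aestronglyMeasurable
    exact ae_of_all _ fun x => by rw [Real.norm_of_nonneg (hy0 x)]; exact hy1 x
  have hi := integrable_log_nn ν f hf K hK i₀ h1 T hT
  have hi' := integrable_log_nn ν f hf K hK i₀ h1 T' hT'0
  have hpt : ∀ x, Real.log (nn T' (f x)) ≤ Real.log (nn T (f x)) - 3 / 4 * y x := by
    intro x
    have hp := nn_pos T hT (f x) i₀ (h1 x)
    have e1 : nn T' (f x) = nn T (f x) * (1 - 3 / 4 * y x) := by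
      rw [hT', nn_reflect T e he, hy]; field_simp
    have h3 : 0 < 1 - 3 / 4 * y x := by have := hy1 x; linarith
    rw [e1, Real.log_mul hp.ne' h3.ne']
    have := Real.log_le_sub_one_of_pos h3
    linarith
  have hInt := integral_mono hi' (hi.sub (hyi.const_mul (3 / 4))) hpt
  rw [integral_sub' hi (hyi.const_mul (3 / 4)), integral_const_mul] at hInt
  rw [← ofReal_integral_eq_lintegral_ofReal hyi (ae_of_all _ hy0)]
  apply ENNReal.ofReal_le_ofReal
  have hlog : Real.log |T'.det| = Real.log |T.det| - Real.log 2 := by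
    rw [hd', abs_mul, Real.log_mul (by norm_num) (abs_ne_zero.2 hT), abs_of_pos (by norm_num),
      one_div, Real.log_inv]; ring
  have hl2 := Real.log_two_lt_d9
  unfold FF at hlt hle
  rw [hlog, ← hmdef, ← hN] at hle
  rw [← hmdef, ← hN] at hlt
  have hmN : 0 < m / N := by positivity
  have e1 : 2 * m / N = 2 * (m / N) := by ring
  have e2 : 3 * m / N = 3 * (m / N) := by ring
  rw [e1] at hlt hle
  rw [e2]
  have : m / N * Real.log 2 ≤ m / N * 0.6931471808 := by gcongr
  nlinarith
end iso
end MK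

namespace MK
open Matrix

/-- monomials of degree at most `D` in each variable -/
def ev (n D : ℕ) (x : Fin n → ℝ) : (Fin n → Fin (D + 1)) → ℝ := fun α => ∏ i, x i ^ (α i : ℕ)

lemma continuous_ev (n D : ℕ) : Continuous (ev n D) := by
  unfold ev; fun_prop

open Polynomial in
lemma line_poly (n D : ℕ) (b : (Fin n → Fin (D + 1)) → ℝ) (x v : Fin n → ℝ) :
    ∃ P : Polynomial ℝ, P.natDegree ≤ n * D ∧ ∀ t : ℝ, P.eval t = b ⬝ᵥ ev n D (x + t • v) := by
  refine ⟨∑ α, C (b α) * ∏ i, (C (x i) + C (v i) * X) ^ (α i : ℕ), ?_, ?_⟩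
  · apply natDegree_sum_le_of_forall_le
    intro α _
    refine (natDegree_C_mul_le _ _).trans ?_
    refine (natDegree_prod_le _ _).trans ?_
    calc ∑ i, ((C (x i) + C (v i) * X) ^ (α i : ℕ)).natDegree ≤ ∑ i : Fin n, D := by
          apply Finset.sum_le_sum
          intro i _
          refine natDegree_pow_le.trans ?_
          have h1 : (C (x i) + C (v i) * X).natDegree ≤ 1 := by
            rw [add_comm]; exact natDegree_linear_le
          calc (α i : ℕ) * (C (x i) + C (v i) * X).natDegree ≤ (α i : ℕ) * 1 := by gcongr
            _ ≤ D := by have := (α i).isLt; omega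
      _ = n * D := by simp
  · intro t
    simp only [eval_finsetSum, eval_mul, eval_prod, eval_pow, eval_add, eval_C, eval_X, dotProduct, ev,
      Pi.add_apply, Pi.smul_apply, smul_eq_mul, mul_comm t]

lemma exists_ne_zero (n D : ℕ) (b : (Fin n → Fin (D + 1)) → ℝ) (hb : b ≠ 0) :
    ∃ x, b ⬝ᵥ ev n D x ≠ 0 := by
  by_contra! h
  apply hb
  let e : (Fin n → Fin (D + 1)) → (Fin n →₀ ℕ) := fun α =>
    Finsupp.equivFunOnFinite.symm fun i => (α i : ℕ)
  have he : Function.Injective e := by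
    intro α β hab
    have := Finsupp.equivFunOnFinite.symm.injective hab
    ext i
    exact congrFun this i
  have hp : (∑ α, MvPolynomial.monomial (e α) (b α)) = (0 : MvPolynomial (Fin n) ℝ) := by
    apply MvPolynomial.funext
    intro x
    rw [map_sum, map_zero, ← h x]
    simp only [dotProduct, ev]
    apply Finset.sum_congr rfl
    intro α _
    rw [MvPolynomial.eval_monomial, Finsupp.prod_fintype _ _ (by simp)]
    simp [e]
  ext β
  have := congrArg (MvPolynomial.coeff (e β)) hp
  rw [MvPolynomial.coeff_sum] at this
  simp only [MvPolynomial.coeff_monomial, he.eq_iff, MvPolynomial.coeff_zero] at this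
  simpa using this

lemma null_zeros (n D : ℕ) (b : (Fin n → Fin (D + 1)) → ℝ) (hb : b ≠ 0) :
    volume {x | b ⬝ᵥ ev n D x = 0} = 0 := by
  obtain ⟨x₁, hx₁⟩ := exists_ne_zero n D b hb
  set Z := {x | b ⬝ᵥ ev n D x = 0} with hZ
  have hcont : Continuous fun x => b ⬝ᵥ ev n D x := by
    have := continuous_ev n D
    fun_prop
  have hZm : MeasurableSet Z := (isClosed_eq hcont continuous_const).measurableSet
  have hmeas : Measurable fun q : ℝ × (Fin n → ℝ) => Z.indicator (fun _ => (1 : ℝ≥0∞)) (x₁ + q.1 • q.2) := by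
    apply (measurable_const.indicator hZm).comp
    fun_prop
  have h1 : ∫⁻ t in Set.Icc (1 : ℝ) 2, ∫⁻ y, Z.indicator (fun _ => (1 : ℝ≥0∞)) (x₁ + t • y) = 0 := by
    rw [lintegral_lintegral_swap (f := fun t y => Z.indicator (fun _ => (1 : ℝ≥0∞)) (x₁ + t • y))
      hmeas.aemeasurable]
    rw [lintegral_eq_zero_iff' (by fun_prop)]
    refine ae_of_all _ fun y => ?_
    obtain ⟨P, -, hP⟩ := line_poly n D b x₁ y
    have hP0 : P ≠ 0 := by
      rintro rfl
      have := hP 0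
      simp at this
      exact hx₁ this.symm
    have hfin : Set.Finite {t : ℝ | x₁ + t • y ∈ Z} := by
      refine (P.roots.toFinset.finite_toSet).subset ?_
      intro t ht
      simp only [Finset.mem_coe, Multiset.mem_toFinset, Polynomial.mem_roots hP0,
        Polynomial.IsRoot, hP]
      exact ht
    refine le_antisymm ?_ zero_le
    refine (setLIntegral_le_lintegral _ _).trans ?_
    have e1 : (fun t : ℝ => Z.indicator (fun _ => (1 : ℝ≥0∞)) (x₁ + t • y)) =
      Set.indicator {t : ℝ | x₁ + t • y ∈ Z} 1 := by
      ext t; simp [Set.indicator]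
    rw [e1, lintegral_indicator_one hfin.measurableSet, hfin.measure_zero]
    rfl
  rw [lintegral_eq_zero_iff' (by fun_prop)] at h1
  have h2 : ∃ t ∈ Set.Icc (1 : ℝ) 2, ∫⁻ y, Z.indicator (fun _ => (1 : ℝ≥0∞)) (x₁ + t • y) = 0 := by
    have hpos : volume.restrict (Set.Icc (1 : ℝ) 2) ≠ 0 := by
      rw [Ne, Measure.restrict_eq_zero]; simp; 
    have hh := (h1.and (ae_restrict_mem measurableSet_Icc))
    have : (ae (volume.restrict (Set.Icc (1 : ℝ) 2))).NeBot := ae_neBot.2 hpos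
    obtain ⟨t, ht, ht2⟩ := hh.exists
    exact ⟨t, ht2, ht⟩
  obtain ⟨t, ht, h3⟩ := h2
  have ht0 : t ≠ 0 := by rintro rfl; norm_num at ht
  have e2 : (fun y => Z.indicator (fun _ => (1 : ℝ≥0∞)) (x₁ + t • y)) =
      Set.indicator ((fun y => t • y) ⁻¹' ((fun y => x₁ + y) ⁻¹' Z)) 1 := by
    ext y; simp [Set.indicator]
  rw [e2, lintegral_indicator_one (by
      exact (hZm.preimage (by fun_prop)).preimage (by fun_prop)),
    Measure.addHaar_preimage_smul _ ht0, measure_preimage_add] at h3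
  rcases mul_eq_zero.1 h3 with h | h
  · simp [ht0] at h
  · exact h

lemma exists_Phi (n D : ℕ) (ν : Measure (Fin n → ℝ)) [IsFiniteMeasure ν] (hν : ν ≪ volume) (R : ℝ)
    (hR : ∀ᵐ x ∂ν, ‖x‖ ≤ R) :
    ∃ Φ : (Fin n → ℝ) → EuclideanSpace ℝ (Fin n → Fin (D + 1)), Continuous Φ ∧ (∀ x, ‖Φ x‖ = 1) ∧
      (∀ a x v, ∃ Z : Finset ℝ, Z.card ≤ n * D ∧ ∀ t s : ℝ, t ≤ s →
        inner ℝ a (Φ (x + t • v)) * inner ℝ a (Φ (x + s • v)) < 0 → ∃ r ∈ Z, t ≤ r ∧ r ≤ s) ∧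
      ∀ e, ‖e‖ = 1 → ∫⁻ x, ENNReal.ofReal (inner ℝ e (Φ x) ^ 2) ∂ν ≤
        ENNReal.ofReal (3 * ν.real Set.univ / ((D : ℝ) + 1) ^ n) := by
  have hB : ∃ B, ∀ x ∈ Metric.closedBall (0 : Fin n → ℝ) R, ‖ev n D x‖ ≤ B :=
    (isCompact_closedBall _ _).exists_bound_of_continuousOn (continuous_ev n D).continuousOn
  obtain ⟨B, hB⟩ := hB
  obtain ⟨T, hT, hiso⟩ := isotropic ν (ev n D) (continuous_ev n D).measurable B
    (by
      filter_upwards [hR] with x hx i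
      exact (norm_le_pi_norm (ev n D x) i).trans (hB x (by simpa using hx)))
    (fun _ => 0) (by intro x; simp [ev]) (fun b hb => hν (null_zeros n D b hb))
  have hpos : ∀ x, 0 < nn T (ev n D x) := fun x => nn_pos T hT _ (fun _ => 0) (by simp [ev])
  have hin : ∀ (a : EuclideanSpace ℝ (Fin n → Fin (D + 1))) x,
      inner ℝ a ((Real.sqrt (nn T (ev n D x)))⁻¹ • WithLp.toLp 2 (T *ᵥ ev n D x)) =
      (Real.sqrt (nn T (ev n D x)))⁻¹ * (a.ofLp ⬝ᵥ (T *ᵥ ev n D x)) := by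
    intro a x
    rw [inner_smul_right, EuclideanSpace.inner_eq_star_dotProduct]
    simp [dotProduct_comm]
  refine ⟨fun x => (Real.sqrt (nn T (ev n D x)))⁻¹ • WithLp.toLp 2 (T *ᵥ ev n D x), ?_, ?_, ?_, ?_⟩
  · refine Continuous.fun_smul ?_ ?_
    · apply Continuous.inv₀
      · exact ((continuous_nn T).comp (continuous_ev n D)).sqrt
      · intro x; exact (Real.sqrt_pos.2 (hpos x)).ne'
    · have := continuous_ev n D
      have h2 : Continuous fun x => T *ᵥ ev n D x := by fun_prop
      exact (PiLp.continuous_toLp 2 _).comp h2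
  · intro x
    have : ‖(WithLp.toLp 2 (T *ᵥ ev n D x) : EuclideanSpace ℝ _)‖ = Real.sqrt (nn T (ev n D x)) := by
      rw [EuclideanSpace.norm_eq]
      congr 1
      simp [nn, dotProduct, sq]
    rw [norm_smul, this, norm_inv, Real.norm_of_nonneg (Real.sqrt_nonneg _)]
    exact inv_mul_cancel₀ (Real.sqrt_pos.2 (hpos x)).ne'
  · intro a x v
    obtain ⟨P, hPd, hP⟩ := line_poly n D (a.ofLp ᵥ* T) x v
    simp_rw [← dotProduct_mulVec] at hP
    refine ⟨P.roots.toFinset, ?_, ?_⟩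
    · exact (Multiset.toFinset_card_le _).trans ((P.card_roots').trans hPd)
    · intro t s hts h
      simp only [hin] at h
      have h1 := inv_pos.2 (Real.sqrt_pos.2 (hpos (x + t • v)))
      have h2 := inv_pos.2 (Real.sqrt_pos.2 (hpos (x + s • v)))
      rw [← hP, ← hP, mul_mul_mul_comm] at h
      have h3 : P.eval t * P.eval s < 0 := by
        by_contra! h4
        exact absurd h (not_lt.2 (by positivity))
      have hP0 : P ≠ 0 := by rintro rfl; simp at h3
      have hroot : ∃ r ∈ Set.Icc t s, P.eval r = 0 := by
        have hc : ContinuousOn (fun r => P.eval r) (Set.Icc t s) := P.continuous.continuousOn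
        rcases lt_or_ge (P.eval t) 0 with hlt | hge
        · have : 0 ≤ P.eval s := by nlinarith
          exact intermediate_value_Icc hts hc ⟨hlt.le, this⟩
        · have : P.eval s ≤ 0 := by nlinarith
          exact intermediate_value_Icc' hts hc ⟨this, hge⟩
      obtain ⟨r, hr, hr0⟩ := hroot
      exact ⟨r, by simp [hP0, hr0], hr.1, hr.2⟩
  · intro e he
    have he' : e.ofLp ⬝ᵥ e.ofLp = 1 := by
      have := EuclideanSpace.real_norm_sq_eq e
      rw [he] at this
      simp [dotProduct, ← sq, ← this]
    have := hiso e.ofLp he'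
    simp only [hin, mul_pow, inv_pow, Real.sq_sqrt (hpos _).le]
    simp only [Fintype.card_pi, Fintype.card_fin, Finset.prod_const, Finset.card_univ] at this
    push_cast at this
    convert this using 4 with x
    rw [div_eq_inv_mul]
end MK

namespace MK

/-- the lattice point as a real vector -/
def kc {n : ℕ} (k : Fin n → ℤ) : Fin n → ℝ := fun i => (k i : ℝ)

lemma count_ball {n : ℕ} (y : Fin n → ℝ) (ρ : ℕ) (Q : Finset (Fin n → ℤ))
    (h : ∀ k ∈ Q, ‖y - kc k‖ ≤ ρ) : Q.card ≤ (2 * ρ + 1) ^ n := by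
  have hsub : Q ⊆ Fintype.piFinset fun i => Finset.Icc ⌈y i - ρ⌉ ⌊y i + ρ⌋ := by
    intro k hk
    rw [Fintype.mem_piFinset]
    intro i
    have h1 := (norm_le_pi_norm (y - kc k) i).trans (h k hk)
    simp only [Pi.sub_apply, kc, Real.norm_eq_abs, abs_le] at h1
    rw [Finset.mem_Icc, Int.ceil_le, Int.le_floor]
    constructor <;> linarith [h1.1, h1.2]
  refine (Finset.card_le_card hsub).trans ?_
  rw [Fintype.card_piFinset]
  calc ∏ i, (Finset.Icc ⌈y i - ρ⌉ ⌊y i + ρ⌋).card ≤ ∏ i : Fin n, (2 * ρ + 1) := by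
        apply Finset.prod_le_prod'
        intro i _
        rw [Int.card_Icc]
        have h1 := Int.floor_le (y i + ρ)
        have h2 := Int.le_ceil (y i - ρ)
        have : (⌊y i + ρ⌋ : ℝ) - ⌈y i - ρ⌉ ≤ 2 * ρ := by linarith
        have : ⌊y i + ρ⌋ - ⌈y i - ρ⌉ ≤ 2 * ρ := by exact_mod_cast this
        omega
    _ = _ := by simp

lemma count_tube (n c : ℕ) : ∃ C : ℕ, ∀ (p v : Fin n → ℝ), ‖v‖ ≤ 1 → 1 ≤ n * ‖v‖ →
    ∀ R : ℕ, 1 ≤ R → ∀ Q : Finset (Fin n → ℤ),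
    (∀ k ∈ Q, ‖kc k‖ ≤ R ∧ ∃ t : ℝ, ‖kc k - p - t • v‖ ≤ c) → Q.card ≤ C * R := by
  refine ⟨(2 * (n * (2 + 2 * c)) + 1) * (2 * (c + 1) + 1) ^ n, ?_⟩
  intro p v hv hv' R hR Q hQ
  rcases Q.eq_empty_or_nonempty with rfl | ⟨k₀, hk₀⟩
  · simp
  obtain ⟨hk₀R, t₀, ht₀⟩ := hQ k₀ hk₀
  set M : ℕ := n * (2 * R + 2 * c) with hM
  have hsub : Q ⊆ (Finset.Icc (-(M : ℤ)) M).biUnion fun m =>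
      Q.filter fun k => ‖(p + (t₀ + m) • v) - kc k‖ ≤ ((c + 1 : ℕ) : ℝ) := by
    intro k hk
    obtain ⟨hkR, t, ht⟩ := hQ k hk
    have h1 : ‖(t - t₀) • v‖ ≤ 2 * R + 2 * c := by
      have e : (t - t₀) • v = (kc k - kc k₀) - (kc k - p - t • v) + (kc k₀ - p - t₀ • v) := by
        rw [sub_smul]; abel
      rw [e]
      refine (norm_add_le _ _).trans ?_
      have := norm_sub_le (kc k - kc k₀) (kc k - p - t • v)
      have := norm_sub_le (kc k) (kc k₀)
      linarith
    rw [norm_smul, Real.norm_eq_abs] at h1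
    have h2 : |t - t₀| ≤ M := by
      rw [hM]; push_cast
      have := abs_nonneg (t - t₀)
      have hn : (0 : ℝ) ≤ n := Nat.cast_nonneg n
      nlinarith [mul_le_mul_of_nonneg_left hv' this, mul_le_mul_of_nonneg_left h1 hn]
    rw [abs_le] at h2
    rw [Finset.mem_biUnion]
    refine ⟨⌊t - t₀⌋, ?_, ?_⟩
    · rw [Finset.mem_Icc, Int.le_floor]
      refine ⟨by push_cast; exact h2.1, ?_⟩
      have := Int.floor_le (t - t₀)
      have : (⌊t - t₀⌋ : ℝ) ≤ M := by linarith
      exact_mod_cast this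
    · rw [Finset.mem_filter]
      refine ⟨hk, ?_⟩
      have e : (p + (t₀ + ⌊t - t₀⌋) • v) - kc k =
          -(kc k - p - t • v) - (t - t₀ - ⌊t - t₀⌋) • v := by
        simp only [sub_smul, add_smul]; abel
      rw [e]
      refine (norm_sub_le _ _).trans ?_
      rw [norm_neg, norm_smul, Real.norm_eq_abs]
      have h3 := Int.floor_le (t - t₀)
      have h4 := Int.lt_floor_add_one (t - t₀)
      have h5 : |t - t₀ - ⌊t - t₀⌋| ≤ 1 := by rw [abs_le]; constructor <;> linarith
      push_cast
      nlinarith [norm_nonneg v, abs_nonneg (t - t₀ - ⌊t - t₀⌋)]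
  calc Q.card ≤ _ := Finset.card_le_card hsub
    _ ≤ ∑ m ∈ Finset.Icc (-(M : ℤ)) M, (2 * (c + 1) + 1) ^ n := by
        refine Finset.card_biUnion_le.trans (Finset.sum_le_sum fun m _ => ?_)
        exact count_ball _ _ _ fun k hk => (Finset.mem_filter.1 hk).2
    _ = (2 * M + 1) * (2 * (c + 1) + 1) ^ n := by
        rw [Finset.sum_const, Int.card_Icc, smul_eq_mul]
        congr 1
        omega
    _ ≤ ((2 * (n * (2 + 2 * c)) + 1) * R) * (2 * (c + 1) + 1) ^ n := by
        gcongr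
        have : M ≤ n * (2 + 2 * c) * R := by
          rw [hM, mul_assoc]
          gcongr
          nlinarith
        nlinarith
    _ = _ := by ring

lemma exists_near {n : ℕ} (x : Fin n → ℝ) : ∃ k : Fin n → ℤ, ‖x - kc k‖ ≤ 1 / 2 := by
  refine ⟨fun i => round (x i), ?_⟩
  rw [pi_norm_le_iff_of_nonneg (by norm_num)]
  intro i
  exact abs_sub_round (x i)

/-- box of lattice points -/
noncomputable def boxZ (n R : ℕ) : Finset (Fin n → ℤ) := Fintype.piFinset fun _ => Finset.Icc (-(R : ℤ)) R

lemma mem_boxZ {n R : ℕ} (k : Fin n → ℤ) : k ∈ boxZ n R ↔ ‖kc k‖ ≤ R := by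
  rw [boxZ, Fintype.mem_piFinset, pi_norm_le_iff_of_nonneg (Nat.cast_nonneg R)]
  refine forall_congr' fun i => ?_
  rw [Finset.mem_Icc, kc, Real.norm_eq_abs, abs_le]
  constructor
  · rintro ⟨h1, h2⟩; exact ⟨by exact_mod_cast h1, by exact_mod_cast h2⟩
  · rintro ⟨h1, h2⟩; exact ⟨by exact_mod_cast h1, by exact_mod_cast h2⟩

lemma vol_half {n : ℕ} (y : Fin n → ℝ) : volume (Metric.closedBall y (1 / 2)) = 1 := by
  rw [Real.volume_pi_closedBall _ (by norm_num)]; norm_num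

lemma vol_tube (n c : ℕ) : ∃ C : ℕ, ∀ (p v : Fin n → ℝ), ‖v‖ ≤ 1 → 1 ≤ n * ‖v‖ →
    ∀ R : ℕ, 1 ≤ R → volume {x : Fin n → ℝ | ‖x‖ ≤ R ∧ ∃ t : ℝ, ‖x - p - t • v‖ ≤ c} ≤ C * R := by
  classical
  obtain ⟨C, hC⟩ := count_tube n (c + 1)
  refine ⟨C * 2, ?_⟩
  intro p v hv hv' R hR
  set Q := (boxZ n (R + 1)).filter fun k => ∃ t : ℝ, ‖kc k - p - t • v‖ ≤ ((c + 1 : ℕ) : ℝ) with hQ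
  have hcard : Q.card ≤ C * (R + 1) := by
    apply hC p v hv hv' (R + 1) (by omega) Q
    intro k hk
    rw [hQ, Finset.mem_filter, mem_boxZ] at hk
    exact hk
  have hsub : {x : Fin n → ℝ | ‖x‖ ≤ R ∧ ∃ t : ℝ, ‖x - p - t • v‖ ≤ c} ⊆
      ⋃ k ∈ Q, Metric.closedBall (kc k) (1 / 2) := by
    rintro x ⟨hx, t, ht⟩
    obtain ⟨k, hk⟩ := exists_near x
    simp only [Set.mem_iUnion]
    refine ⟨k, ?_, by rwa [Metric.mem_closedBall, dist_eq_norm]⟩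
    rw [hQ, Finset.mem_filter, mem_boxZ]
    refine ⟨?_, t, ?_⟩
    · have := norm_sub_norm_le (kc k) x
      rw [norm_sub_rev] at this
      push_cast
      linarith
    · have e : kc k - p - t • v = (x - p - t • v) - (x - kc k) := by abel
      rw [e]
      refine (norm_sub_le _ _).trans ?_
      push_cast
      linarith
  calc volume {x : Fin n → ℝ | ‖x‖ ≤ R ∧ ∃ t : ℝ, ‖x - p - t • v‖ ≤ c} ≤ _ := measure_mono hsub
    _ ≤ ∑ k ∈ Q, volume (Metric.closedBall (kc k) (1 / 2)) := measure_biUnion_finset_le _ _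
    _ = Q.card := by simp
    _ ≤ ((C * 2 * R : ℕ) : ℝ≥0∞) := by
        rw [Nat.cast_le]
        refine hcard.trans ?_
        rw [mul_assoc]
        gcongr
        omega
    _ = _ := by push_cast; ring

lemma line_count (n c : ℕ) : ∃ C : ℕ, ∀ (p v : Fin n → ℝ), ‖v‖ ≤ 1 → 1 ≤ n * ‖v‖ →
    ∀ R : ℕ, 1 ≤ R → ∀ Q : Finset (Fin n → ℤ),
    (∀ k ∈ Q, ‖kc k‖ ≤ R ∧ ∃ t : ℝ, ‖kc k - p - t • v‖ ≤ c) →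
    ∀ (τ : (Fin n → ℤ) → ℝ), (∀ k, 0 < τ k ∧ τ k ≤ 1) →
    ∀ (K : ℕ) (σ : (Fin n → ℝ) → (Fin n → ℝ) → Prop),
    (∀ x, ∃ Z : Finset ℝ, Z.card ≤ K ∧ ∀ t s : ℝ, t ≤ s → σ (x + t • v) (x + s • v) →
      ∃ r ∈ Z, t ≤ r ∧ r ≤ s) →
    (∀ w, MeasurableSet {x | σ x (x + w)}) →
    ∑ k ∈ Q, (ENNReal.ofReal (τ k))⁻¹ *
      volume (Metric.closedBall (kc k) (1 / 2) ∩ {x | σ x (x + τ k • v)}) ≤ C * K := by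
  classical
  obtain ⟨C, hC⟩ := vol_tube n (c + 1)
  refine ⟨5 ^ n * C * 3, ?_⟩
  intro p v hv hv' R hR Q hQ τ hτ K σ hσ hσm
  set A : (Fin n → ℤ) → Set (Fin n → ℝ) := fun k =>
    Metric.closedBall (kc k) (1 / 2) ∩ {x | σ x (x + τ k • v)} with hA
  have hAm : ∀ k, MeasurableSet (A k) := fun k =>
    Metric.isClosed_closedBall.measurableSet.inter (hσm _)
  set U := {x : Fin n → ℝ | ‖x‖ ≤ ((3 * R : ℕ) : ℝ) ∧ ∃ t : ℝ, ‖x - p - t • v‖ ≤ ((c + 1 : ℕ) : ℝ)} with hU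
  -- the slicing identity
  have hslice : ∀ k, (R : ℝ≥0∞) * volume (A k) =
      ∫⁻ x, ∫⁻ t in Set.Icc (0 : ℝ) R, (A k).indicator 1 (x + t • v) := by
    intro k
    have hmeas : Measurable fun q : (Fin n → ℝ) × ℝ =>
        (A k).indicator (1 : (Fin n → ℝ) → ℝ≥0∞) (q.1 + q.2 • v) := by
      apply (measurable_one.indicator (hAm k)).comp
      fun_prop
    rw [lintegral_lintegral_swap (f := fun x t =>
      (A k).indicator (1 : (Fin n → ℝ) → ℝ≥0∞) (x + t • v)) hmeas.aemeasurable]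
    have : ∀ t : ℝ, ∫⁻ x, (A k).indicator (1 : (Fin n → ℝ) → ℝ≥0∞) (x + t • v) = volume (A k) := by
      intro t
      rw [lintegral_add_right_eq_self (fun x => (A k).indicator (1 : (Fin n → ℝ) → ℝ≥0∞) x),
        lintegral_indicator_one (hAm k)]
    simp only [this]
    rw [setLIntegral_const, Real.volume_Icc, sub_zero, ENNReal.ofReal_natCast, mul_comm]
  have hmeas2 : ∀ k, Measurable fun x => ∫⁻ t in Set.Icc (0 : ℝ) R,
      (A k).indicator (1 : (Fin n → ℝ) → ℝ≥0∞) (x + t • v) := by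
    intro k
    apply Measurable.lintegral_prod_right' (f := fun q : (Fin n → ℝ) × ℝ =>
        (A k).indicator (1 : (Fin n → ℝ) → ℝ≥0∞) (q.1 + q.2 • v))
    apply (measurable_one.indicator (hAm k)).comp
    fun_prop
  have hinner : ∀ x, ∑ k ∈ Q, (ENNReal.ofReal (τ k))⁻¹ *
      ∫⁻ t in Set.Icc (0 : ℝ) R, (A k).indicator (1 : (Fin n → ℝ) → ℝ≥0∞) (x + t • v) ≤
      U.indicator (fun _ => (5 : ℝ≥0∞) ^ n * K) x := by
    intro x
    by_cases hx : x ∈ U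
    · rw [Set.indicator_of_mem hx]
      obtain ⟨Z, hZK, hZ⟩ := hσ x
      have h1 : ∀ k ∈ Q, (ENNReal.ofReal (τ k))⁻¹ *
          ∫⁻ t in Set.Icc (0 : ℝ) R, (A k).indicator (1 : (Fin n → ℝ) → ℝ≥0∞) (x + t • v) ≤
          ∑ r ∈ Z, if ‖(x + r • v) - kc k‖ ≤ ((2 : ℕ) : ℝ) then 1 else 0 := by
        intro k hk
        have h2 : ∫⁻ t in Set.Icc (0 : ℝ) R, (A k).indicator (1 : (Fin n → ℝ) → ℝ≥0∞) (x + t • v)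
            ≤ ∑ r ∈ Z.filter (fun r => ‖(x + r • v) - kc k‖ ≤ ((2 : ℕ) : ℝ)),
              volume (Set.Icc (r - τ k) r) := by
          refine (setLIntegral_le_lintegral _ _).trans ?_
          refine le_trans ?_ (measure_biUnion_finset_le _ _)
          have e1 : (fun t : ℝ => (A k).indicator (1 : (Fin n → ℝ) → ℝ≥0∞) (x + t • v)) =
              Set.indicator {t : ℝ | x + t • v ∈ A k} 1 := by
            ext t; simp [Set.indicator]
          rw [e1, lintegral_indicator_one (by
            exact (hAm k).preimage (f := fun t : ℝ => x + t • v) (by fun_prop))]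
          apply measure_mono
          intro t ht
          obtain ⟨ht1, ht2⟩ : x + t • v ∈ A k := ht
          have ht3 : σ (x + t • v) (x + (t + τ k) • v) := by
            have : x + (t + τ k) • v = x + t • v + τ k • v := by rw [add_smul, add_assoc]
            rw [this]; exact ht2
          obtain ⟨r, hr, hr1, hr2⟩ := hZ t (t + τ k) (by linarith [(hτ k).1]) ht3
          simp only [Set.mem_iUnion]
          refine ⟨r, ?_, ⟨by linarith, hr1⟩⟩
          rw [Finset.mem_filter]
          refine ⟨hr, ?_⟩
          rw [Metric.mem_closedBall, dist_eq_norm] at ht1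
          have e : x + r • v - kc k = (x + t • v - kc k) + (r - t) • v := by
            rw [sub_smul]; abel
          rw [e]
          refine (norm_add_le _ _).trans ?_
          rw [norm_smul, Real.norm_eq_abs, abs_of_nonneg (by linarith)]
          have := (hτ k).2
          push_cast
          nlinarith [norm_nonneg v]
        calc _ ≤ _ := mul_le_mul_right h2 ((ENNReal.ofReal (τ k))⁻¹)
          _ = _ := by
            rw [← Finset.sum_filter, Finset.mul_sum]
            apply Finset.sum_congr rfl
            intro r _
            rw [Real.volume_Icc, sub_sub_cancel]
            apply ENNReal.inv_mul_cancel
            · simpa using (hτ k).1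
            · exact ENNReal.ofReal_ne_top
      calc _ ≤ _ := Finset.sum_le_sum h1
        _ = ∑ r ∈ Z, ∑ k ∈ Q, if ‖(x + r • v) - kc k‖ ≤ ((2 : ℕ) : ℝ) then (1 : ℝ≥0∞) else 0 :=
            Finset.sum_comm
        _ ≤ ∑ r ∈ Z, (5 : ℝ≥0∞) ^ n := by
            apply Finset.sum_le_sum
            intro r _
            rw [← Finset.sum_filter, Finset.sum_const, nsmul_eq_mul, mul_one]
            have := count_ball (x + r • v) 2 (Q.filter fun k => ‖(x + r • v) - kc k‖ ≤ ((2 : ℕ) : ℝ))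
              fun k hk => (Finset.mem_filter.1 hk).2
            calc _ ≤ (((2 * 2 + 1) ^ n : ℕ) : ℝ≥0∞) := Nat.cast_le.2 this
              _ = _ := by norm_num
        _ = Z.card * (5 : ℝ≥0∞) ^ n := by simp
        _ ≤ 5 ^ n * K := by
            rw [mul_comm]
            gcongr
    · rw [Set.indicator_of_notMem hx]
      apply le_of_eq
      apply Finset.sum_eq_zero
      intro k hk
      have : ∫⁻ t in Set.Icc (0 : ℝ) R, (A k).indicator (1 : (Fin n → ℝ) → ℝ≥0∞) (x + t • v) = 0 := by
        rw [setLIntegral_congr_fun (g := fun _ => 0) measurableSet_Icc]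
        · simp
        · intro t ht
          apply Set.indicator_of_notMem
          intro hxt
          apply hx
          have h1 := hxt.1
          rw [Metric.mem_closedBall, dist_eq_norm] at h1
          obtain ⟨hkR, s, hs⟩ := hQ k hk
          have htv : ‖t • v‖ ≤ R := by
            rw [norm_smul, Real.norm_eq_abs, abs_of_nonneg ht.1]
            nlinarith [ht.1, ht.2, norm_nonneg v]
          refine ⟨?_, s - t, ?_⟩
          · have e : x = (x + t • v - kc k) + kc k - t • v := by abel
            rw [e]
            refine (norm_sub_le _ _).trans ?_
            have := norm_add_le (x + t • v - kc k) (kc k)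
            have hR' : (1 : ℝ) ≤ R := by exact_mod_cast hR
            push_cast
            linarith
          · have e : x - p - (s - t) • v = (x + t • v - kc k) + (kc k - p - s • v) := by
              rw [sub_smul]; abel
            rw [e]
            refine (norm_add_le _ _).trans ?_
            push_cast
            linarith
      rw [this, mul_zero]
  have hR0 : (R : ℝ≥0∞) ≠ 0 := by
    have : R ≠ 0 := by omega
    exact_mod_cast this
  have hRt : (R : ℝ≥0∞) ≠ ⊤ := ENNReal.natCast_ne_top R
  have hmain : (R : ℝ≥0∞) * ∑ k ∈ Q, (ENNReal.ofReal (τ k))⁻¹ * volume (A k) ≤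
      R * (((5 ^ n * C * 3 : ℕ) : ℝ≥0∞) * K) := by
    calc (R : ℝ≥0∞) * ∑ k ∈ Q, (ENNReal.ofReal (τ k))⁻¹ * volume (A k)
        = ∑ k ∈ Q, (ENNReal.ofReal (τ k))⁻¹ *
          ∫⁻ x, ∫⁻ t in Set.Icc (0 : ℝ) R, (A k).indicator 1 (x + t • v) := by
          rw [Finset.mul_sum]
          apply Finset.sum_congr rfl
          intro k _
          rw [← hslice]; ring
      _ = ∫⁻ x, ∑ k ∈ Q, (ENNReal.ofReal (τ k))⁻¹ *
          ∫⁻ t in Set.Icc (0 : ℝ) R, (A k).indicator 1 (x + t • v) := by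
          rw [lintegral_finsetSum _ fun k _ => (hmeas2 k).const_mul _]
          apply Finset.sum_congr rfl
          intro k _
          rw [lintegral_const_mul _ (hmeas2 k)]
      _ ≤ ∫⁻ x, U.indicator (fun _ => (5 : ℝ≥0∞) ^ n * K) x := lintegral_mono hinner
      _ ≤ (5 : ℝ≥0∞) ^ n * K * volume U := lintegral_indicator_const_le _ _
      _ ≤ (5 : ℝ≥0∞) ^ n * K * (C * ((3 * R : ℕ) : ℝ≥0∞)) := by
          gcongr
          exact hC p v hv hv' (3 * R) (by omega)
      _ = _ := by push_cast; ring
  rwa [ENNReal.mul_le_mul_iff_right hR0 hRt] at hmain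
end MK

namespace MK
open ProbabilityTheory

/-- the `L¹` displacement of `Φ` under the shift `w` over the cell of `k` -/
noncomputable def disp {n : ℕ} {E : Type} [NormedAddCommGroup E] (Φ : (Fin n → ℝ) → E)
    (k : Fin n → ℤ) (w : Fin n → ℝ) : ℝ≥0∞ :=
  ∫⁻ x in Metric.closedBall (kc k) (1 / 2), ‖Φ (x + w) - Φ x‖ₑ

lemma tube_crofton (n c : ℕ) : ∃ C : ℝ≥0∞, C ≠ ⊤ ∧ ∀ (p v : Fin n → ℝ), ‖v‖ ≤ 1 → 1 ≤ n * ‖v‖ →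
    ∀ R : ℕ, 1 ≤ R → ∀ Q : Finset (Fin n → ℤ),
    (∀ k ∈ Q, ‖kc k‖ ≤ R ∧ ∃ t : ℝ, ‖kc k - p - t • v‖ ≤ c) →
    ∀ (τ : (Fin n → ℤ) → ℝ), (∀ k, 0 < τ k ∧ τ k ≤ 1) →
    ∀ (E : Type) [NormedAddCommGroup E] [InnerProductSpace ℝ E] [FiniteDimensional ℝ E]
      [MeasurableSpace E] [BorelSpace E]
      (Φ : (Fin n → ℝ) → E) (K : ℕ), Continuous Φ → (∀ x, ‖Φ x‖ = 1) →
    (∀ a x v, ∃ Z : Finset ℝ, Z.card ≤ K ∧ ∀ t s : ℝ, t ≤ s →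
        inner ℝ a (Φ (x + t • v)) * inner ℝ a (Φ (x + s • v)) < 0 → ∃ r ∈ Z, t ≤ r ∧ r ≤ s) →
    ∑ k ∈ Q, (ENNReal.ofReal (τ k))⁻¹ * disp Φ k (τ k • v) ≤ C * K := by
  obtain ⟨C, hC⟩ := line_count n c
  obtain ⟨c0, hc0, hcr⟩ := crofton
  have hc0' : ENNReal.ofReal c0 ≠ 0 := by simpa using hc0
  refine ⟨(ENNReal.ofReal c0)⁻¹ * C, ENNReal.mul_ne_top (by simpa using hc0)
    (ENNReal.natCast_ne_top _), ?_⟩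
  intro p v hv hv' R hR Q hQ τ hτ E _ _ _ _ _ Φ K hΦ hΦ1 hZ
  set γ := stdGaussian E with hγ
  set σ : E → (Fin n → ℝ) → (Fin n → ℝ) → Prop := fun a x y =>
    inner ℝ a (Φ x) * inner ℝ a (Φ y) < 0 with hσ
  -- measurability
  have hjm : ∀ w, MeasurableSet {q : (Fin n → ℝ) × E | σ q.2 q.1 (q.1 + w)} := by
    intro w
    refine measurableSet_lt (Continuous.measurable ?_) measurable_const
    fun_prop
  have hσm : ∀ a w, MeasurableSet {x | σ a x (x + w)} := by
    intro a w
    exact measurable_prodMk_right (hjm w)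
  have hσm' : ∀ x w, MeasurableSet {a | σ a x (x + w)} := by
    intro x w
    exact measurable_prodMk_left (hjm w)
  have hind : ∀ w, Measurable fun q : (Fin n → ℝ) × E =>
      {q : (Fin n → ℝ) × E | σ q.2 q.1 (q.1 + w)}.indicator (1 : (Fin n → ℝ) × E → ℝ≥0∞) q := by
    intro w
    exact measurable_one.indicator (hjm w)
  have hswap : ∀ k w, ∫⁻ x in Metric.closedBall (kc k) (1 / 2), γ {a | σ a x (x + w)} =
      ∫⁻ a, volume (Metric.closedBall (kc k) (1 / 2) ∩ {x | σ a x (x + w)}) ∂γ := by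
    intro k w
    have := lintegral_lintegral_swap (μ := volume.restrict (Metric.closedBall (kc k) (1 / 2)))
      (ν := γ) (f := fun x a =>
      {q : (Fin n → ℝ) × E | σ q.2 q.1 (q.1 + w)}.indicator (1 : (Fin n → ℝ) × E → ℝ≥0∞) (x, a))
      (hind w).aemeasurable
    have e1 : ∀ x, ∫⁻ a, {q : (Fin n → ℝ) × E | σ q.2 q.1 (q.1 + w)}.indicator (1 : (Fin n → ℝ) × E → ℝ≥0∞) (x, a) ∂γ
        = γ {a | σ a x (x + w)} := by
      intro x
      rw [← lintegral_indicator_one (hσm' x w)]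
      rfl
    have e2 : ∀ a, ∫⁻ x in Metric.closedBall (kc k) (1 / 2),
        {q : (Fin n → ℝ) × E | σ q.2 q.1 (q.1 + w)}.indicator (1 : (Fin n → ℝ) × E → ℝ≥0∞) (x, a)
        = volume (Metric.closedBall (kc k) (1 / 2) ∩ {x | σ a x (x + w)}) := by
      intro a
      rw [Set.inter_comm, ← Measure.restrict_apply (hσm a w),
        ← lintegral_indicator_one (hσm a w)]
      rfl
    simp only [e1, e2] at this
    exact this
  have hdisp : ∀ k w, ENNReal.ofReal c0 * disp Φ k w ≤
      ∫⁻ a, volume (Metric.closedBall (kc k) (1 / 2) ∩ {x | σ a x (x + w)}) ∂γ := by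
    intro k w
    rw [← hswap, disp, ← lintegral_const_mul _ (by fun_prop)]
    apply lintegral_mono
    intro x
    have := hcr E (Φ x) (Φ (x + w)) (hΦ1 _) (hΦ1 _)
    rw [ENNReal.ofReal_mul hc0.le, norm_sub_rev, ofReal_norm] at this
    exact this
  have hvm : ∀ k w, Measurable fun a =>
      volume (Metric.closedBall (kc k) (1 / 2) ∩ {x | σ a x (x + w)}) := by
    intro k w
    have hm := (hjm w).inter (Metric.isClosed_closedBall (x := kc k) (ε := 1 / 2)
      |>.measurableSet.preimage (measurable_fst (β := E)))
    have := measurable_measure_prodMk_right (μ := (volume : Measure (Fin n → ℝ))) hm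
    convert this using 2 with a
    congr 1
    ext x
    exact and_comm
  have hmain : ENNReal.ofReal c0 * ∑ k ∈ Q, (ENNReal.ofReal (τ k))⁻¹ * disp Φ k (τ k • v) ≤ C * K := by
    calc ENNReal.ofReal c0 * ∑ k ∈ Q, (ENNReal.ofReal (τ k))⁻¹ * disp Φ k (τ k • v)
        = ∑ k ∈ Q, (ENNReal.ofReal (τ k))⁻¹ * (ENNReal.ofReal c0 * disp Φ k (τ k • v)) := by
          rw [Finset.mul_sum]
          exact Finset.sum_congr rfl fun k _ => by ring
      _ ≤ ∑ k ∈ Q, (ENNReal.ofReal (τ k))⁻¹ *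
          ∫⁻ a, volume (Metric.closedBall (kc k) (1 / 2) ∩ {x | σ a x (x + τ k • v)}) ∂γ := by
          gcongr
          exact hdisp _ _
      _ = ∫⁻ a, ∑ k ∈ Q, (ENNReal.ofReal (τ k))⁻¹ *
          volume (Metric.closedBall (kc k) (1 / 2) ∩ {x | σ a x (x + τ k • v)}) ∂γ := by
          rw [lintegral_finsetSum _ fun k _ => (hvm k _).const_mul _]
          apply Finset.sum_congr rfl
          intro k _
          rw [lintegral_const_mul _ (hvm k _)]
      _ ≤ ∫⁻ a, C * K ∂γ := by
          apply lintegral_mono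
          intro a
          exact hC p v hv hv' R hR Q hQ τ hτ K (σ a) (fun x => hZ a x v) (hσm a)
      _ = C * K := by simp
  rw [mul_assoc, ← ENNReal.div_eq_inv_mul, ENNReal.le_div_iff_mul_le (Or.inl hc0')
    (Or.inl ENNReal.ofReal_ne_top), mul_comm]
  exact hmain

lemma exists_W (n c : ℕ) : ∃ C : ℝ≥0∞, C ≠ ⊤ ∧ ∀ (p v : Fin n → ℝ), ‖v‖ ≤ 1 → 1 ≤ n * ‖v‖ →
    ∀ R : ℕ, 1 ≤ R → ∀ Q : Finset (Fin n → ℤ),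
    (∀ k ∈ Q, ‖kc k‖ ≤ R ∧ ∃ t : ℝ, ‖kc k - p - t • v‖ ≤ c) →
    ∀ (E : Type) [NormedAddCommGroup E] [InnerProductSpace ℝ E] [FiniteDimensional ℝ E]
      [MeasurableSpace E] [BorelSpace E]
      (Φ : (Fin n → ℝ) → E) (K : ℕ), Continuous Φ → (∀ x, ‖Φ x‖ = 1) →
    (∀ a x v, ∃ Z : Finset ℝ, Z.card ≤ K ∧ ∀ t s : ℝ, t ≤ s →
        inner ℝ a (Φ (x + t • v)) * inner ℝ a (Φ (x + s • v)) < 0 → ∃ r ∈ Z, t ≤ r ∧ r ≤ s) →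
    ∃ W : (Fin n → ℤ) → ℝ≥0∞, (∀ k ∈ Q, 1 ≤ W k ∧ W k ≠ ⊤ ∧
      ∀ τ : ℝ, 0 < τ → τ ≤ 1 → disp Φ k (τ • v) ≤ ENNReal.ofReal τ * W k) ∧
      ∑ k ∈ Q, W k ≤ C * (R + K) := by
  obtain ⟨C, hCt, hC⟩ := tube_crofton n c
  obtain ⟨C', hC'⟩ := count_tube n c
  refine ⟨C + 2 * C', ENNReal.add_ne_top.2 ⟨hCt, ENNReal.mul_ne_top (by simp) (ENNReal.natCast_ne_top _)⟩, ?_⟩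
  intro p v hv hv' R hR Q hQ E _ _ _ _ _ Φ K hΦ hΦ1 hZ
  set S : (Fin n → ℤ) → ℝ≥0∞ := fun k =>
    ⨆ τ : Set.Ioc (0 : ℝ) 1, (ENNReal.ofReal τ)⁻¹ * disp Φ k ((τ : ℝ) • v) with hS
  have hSt : ∀ k ∈ Q, S k ≠ ⊤ := by
    intro k hk
    have : S k ≤ C * K := by
      apply iSup_le
      rintro ⟨τ, hτ⟩
      have := hC p v hv hv' R hR {k} (by simpa using hQ k hk) (fun _ => τ) (fun _ => hτ) E Φ K
        hΦ hΦ1 hZ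
      simpa using this
    exact ne_top_of_le_ne_top (ENNReal.mul_ne_top hCt (ENNReal.natCast_ne_top _)) this
  have hpick : ∀ k, ∃ τ : Set.Ioc (0 : ℝ) 1, k ∈ Q →
      S k ≤ (ENNReal.ofReal τ)⁻¹ * disp Φ k ((τ : ℝ) • v) + 1 := by
    intro k
    by_cases hk : k ∈ Q
    · by_cases h0 : S k = 0
      · exact ⟨⟨1, by simp⟩, fun _ => by simp [h0]⟩
      · have hlt : S k - 1 < S k := ENNReal.sub_lt_self (hSt k hk) h0 one_ne_zero
        obtain ⟨τ, hτ⟩ := lt_iSup_iff.1 hlt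
        exact ⟨τ, fun _ => tsub_le_iff_right.1 hτ.le⟩
    · exact ⟨⟨1, by simp⟩, fun h => absurd h hk⟩
  choose τ hτ using hpick
  refine ⟨fun k => 1 + S k, ?_, ?_⟩
  · intro k hk
    refine ⟨le_self_add, by simp [hSt k hk], ?_⟩
    intro s hs0 hs1
    have h1 : (ENNReal.ofReal s)⁻¹ * disp Φ k (s • v) ≤ S k :=
      le_iSup (fun τ : Set.Ioc (0 : ℝ) 1 => (ENNReal.ofReal τ)⁻¹ * disp Φ k ((τ : ℝ) • v))
        ⟨s, hs0, hs1⟩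
    have hs' : ENNReal.ofReal s ≠ 0 := by simpa using hs0
    calc disp Φ k (s • v) = ENNReal.ofReal s * ((ENNReal.ofReal s)⁻¹ * disp Φ k (s • v)) := by
          rw [← mul_assoc, ENNReal.mul_inv_cancel hs' ENNReal.ofReal_ne_top, one_mul]
      _ ≤ ENNReal.ofReal s * (1 + S k) := by
          gcongr
          exact h1.trans le_add_self
  · calc ∑ k ∈ Q, (1 + S k)
        ≤ ∑ k ∈ Q, (2 + (ENNReal.ofReal (τ k))⁻¹ * disp Φ k ((τ k : ℝ) • v)) := by
          apply Finset.sum_le_sum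
          intro k hk
          calc 1 + S k ≤ 1 + ((ENNReal.ofReal (τ k))⁻¹ * disp Φ k ((τ k : ℝ) • v) + 1) := by
                gcongr; exact hτ k hk
            _ = _ := by ring
      _ = 2 * Q.card + ∑ k ∈ Q, (ENNReal.ofReal (τ k))⁻¹ * disp Φ k ((τ k : ℝ) • v) := by
          rw [Finset.sum_add_distrib]; simp [mul_comm]
      _ ≤ 2 * ((C' * R : ℕ) : ℝ≥0∞) + C * K := by
          gcongr
          · exact hC' p v hv hv' R hR Q hQ
          · exact hC p v hv hv' R hR Q hQ (fun k => τ k) (fun k => (τ k).2) E Φ K hΦ hΦ1 hZ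
      _ ≤ 2 * C' * (R + K) + C * (R + K) := by
          push_cast
          rw [← mul_assoc]
          gcongr
          · exact le_self_add
          · exact le_add_self
      _ = _ := by ring
end MK

namespace MK

lemma shift_le {n : ℕ} (S T : Set (Fin n → ℝ)) (hS : MeasurableSet S) (hT : MeasurableSet T)
    (w : Fin n → ℝ) (h : ∀ x ∈ S, x + w ∈ T) (f : (Fin n → ℝ) → ℝ≥0∞) :
    ∫⁻ x in S, f (x + w) ≤ ∫⁻ x in T, f x := by
  rw [← lintegral_indicator hS, ← lintegral_indicator hT,
    ← lintegral_add_right_eq_self (fun x => T.indicator f x) w]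
  refine lintegral_mono fun x => ?_
  by_cases hx : x ∈ S
  · simp [hx, h x hx]
  · simp [hx]

lemma vol_quarter {n : ℕ} (y : Fin n → ℝ) :
    volume (Metric.closedBall y (1 / 4)) = ENNReal.ofReal ((1 / 2) ^ n) := by
  rw [Real.volume_pi_closedBall _ (by norm_num)]
  simp only [Fintype.card_fin]
  norm_num

lemma norm_sum_le {n : ℕ} (V : Fin n → Fin n → ℝ) (hV : ∀ j, ‖V j‖ ≤ 1) (ε : ℝ) (τ : Fin n → ℝ)
    (hε : 0 ≤ ε) (hnε : n * ε ≤ 1 / 4)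
    (hτ : ∀ j, 0 ≤ τ j ∧ τ j ≤ ε) (s : Finset (Fin n)) : ‖∑ j ∈ s, τ j • V j‖ ≤ 1 / 4 := by
  refine (_root_.norm_sum_le _ _).trans ?_
  calc ∑ j ∈ s, ‖τ j • V j‖ ≤ ∑ j ∈ s, ε := by
        apply Finset.sum_le_sum
        intro j _
        rw [norm_smul, Real.norm_eq_abs, abs_of_nonneg (hτ j).1]
        have := norm_nonneg (V j)
        nlinarith [(hτ j).1, (hτ j).2, hV j]
    _ ≤ ∑ j : Fin n, ε := Finset.sum_le_sum_of_subset_of_nonneg (Finset.subset_univ s) fun _ _ _ => hε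
    _ ≤ 1 / 4 := by simpa using hnε

lemma disp_sum {n : ℕ} {E : Type} [NormedAddCommGroup E] (Φ : (Fin n → ℝ) → E) (hΦ : Continuous Φ)
    (k : Fin n → ℤ) (V : Fin n → Fin n → ℝ) (hV : ∀ j, ‖V j‖ ≤ 1) (ε : ℝ) (τ : Fin n → ℝ)
    (hε : 0 ≤ ε) (hnε : n * ε ≤ 1 / 4) (hτ : ∀ j, 0 ≤ τ j ∧ τ j ≤ ε)
    (hd : ∀ j, disp Φ k (τ j • V j) ≤ ENNReal.ofReal ε) (s : Finset (Fin n)) :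
    ∫⁻ x in Metric.closedBall (kc k) (1 / 4), ‖Φ (x + ∑ j ∈ s, τ j • V j) - Φ x‖ₑ
      ≤ s.card * ENNReal.ofReal ε := by
  induction s using Finset.induction_on with
  | empty => simp
  | insert j s hj ih =>
    rw [Finset.sum_insert hj, Finset.card_insert_of_notMem hj]
    set w := ∑ j ∈ s, τ j • V j with hw
    have hwn : ‖w‖ ≤ 1 / 4 := norm_sum_le V hV ε τ hε hnε hτ s
    calc ∫⁻ x in Metric.closedBall (kc k) (1 / 4), ‖Φ (x + (τ j • V j + w)) - Φ x‖ₑ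
        ≤ ∫⁻ x in Metric.closedBall (kc k) (1 / 4),
            (‖Φ ((x + w) + τ j • V j) - Φ (x + w)‖ₑ + ‖Φ (x + w) - Φ x‖ₑ) := by
          refine lintegral_mono fun x => ?_
          have e : Φ (x + (τ j • V j + w)) - Φ x
              = (Φ ((x + w) + τ j • V j) - Φ (x + w)) + (Φ (x + w) - Φ x) := by
            rw [add_assoc, add_comm w]; abel
          rw [e]
          exact enorm_add_le _ _
      _ = (∫⁻ x in Metric.closedBall (kc k) (1 / 4),
            ‖Φ ((x + w) + τ j • V j) - Φ (x + w)‖ₑ) +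
            ∫⁻ x in Metric.closedBall (kc k) (1 / 4), ‖Φ (x + w) - Φ x‖ₑ := by
          rw [lintegral_add_left]
          have : Continuous fun x => ‖Φ ((x + w) + τ j • V j) - Φ (x + w)‖ₑ := by fun_prop
          exact this.measurable
      _ ≤ disp Φ k (τ j • V j) + s.card * ENNReal.ofReal ε := by
          refine add_le_add ?_ ih
          refine shift_le (Metric.closedBall (kc k) (1 / 4)) (Metric.closedBall (kc k) (1 / 2))
            Metric.isClosed_closedBall.measurableSet Metric.isClosed_closedBall.measurableSet w ?_
            (fun x => ‖Φ (x + τ j • V j) - Φ x‖ₑ)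
          intro x hx
          rw [mem_closedBall_iff_norm] at hx ⊢
          have := norm_add_le (x - kc k) w
          have e : x + w - kc k = x - kc k + w := by abel
          rw [e]; linarith
      _ ≤ _ := by
          push_cast
          rw [add_mul, one_mul, add_comm]
          gcongr
          exact hd j

lemma ip_sq {E : Type} [NormedAddCommGroup E] [InnerProductSpace ℝ E] (u v : E) (hu : ‖u‖ = 1)
    (hv : ‖v‖ = 1) : 1 ≤ (inner ℝ u v) ^ 2 + 2 * ‖v - u‖ := by
  have h := norm_sub_sq_real v u
  rw [hu, hv, real_inner_comm] at h
  have h2 : ‖v - u‖ ≤ 2 := by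
    have := norm_sub_le v u
    linarith
  have := norm_nonneg (v - u)
  nlinarith [sq_nonneg (inner ℝ u v - 1)]

lemma key {n : ℕ} {E : Type} [NormedAddCommGroup E] [InnerProductSpace ℝ E]
    (Φ : (Fin n → ℝ) → E) (hΦ : Continuous Φ) (hΦ1 : ∀ x, ‖Φ x‖ = 1)
    (k : Fin n → ℤ) (V : Fin n → Fin n → ℝ) (hV : ∀ j, ‖V j‖ ≤ 1) (W : Fin n → ℝ)
    (hW : ∀ j, 1 ≤ W j) (ε : ℝ) (hε : 0 < ε) (hnε : 2 * (n * ε) ≤ 1 / 2 * (1 / 2) ^ n) (hε1 : ε ≤ 1)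
    (hd : ∀ j, ∀ τ : ℝ, 0 < τ → τ ≤ 1 →
      disp Φ k (τ • V j) ≤ ENNReal.ofReal τ * ENNReal.ofReal (W j))
    (m B : ℝ≥0∞) (hB : ∀ e : E, ‖e‖ = 1 → m * ∫⁻ y in Metric.closedBall (kc k) (1 / 2),
      ENNReal.ofReal ((inner ℝ e (Φ y)) ^ 2) ≤ B) :
    m * (ENNReal.ofReal |Matrix.det (Matrix.of fun i j : Fin n => V j i)| *
      ∏ j, ENNReal.ofReal (ε / W j)) ≤ 2 * B := by
  classical
  have hnε' : n * ε ≤ 1 / 4 := by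
    have : ((1:ℝ) / 2) ^ n ≤ 1 := pow_le_one₀ (by norm_num) (by norm_num)
    linarith
  set M : Matrix (Fin n) (Fin n) ℝ := Matrix.of fun i j : Fin n => V j i with hM
  set b : Set (Fin n → ℝ) := Set.Icc 0 (fun j => ε / W j) with hb
  have hL : ∀ τ : Fin n → ℝ, Matrix.toLin' M τ = ∑ j, τ j • V j := by
    intro τ
    ext i
    simp [Matrix.toLin'_apply, Matrix.mulVec, dotProduct, hM, mul_comm]
  set P : Set (Fin n → ℝ) := Matrix.toLin' M '' b with hP
  have hPc : IsCompact P := isCompact_Icc.image (LinearMap.continuous_of_finiteDimensional _)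
  have hPm : MeasurableSet P := hPc.measurableSet
  have hvolP : volume P = ENNReal.ofReal |M.det| * ∏ j, ENNReal.ofReal (ε / W j) := by
    rw [hP, Measure.addHaar_image_linearMap, LinearMap.det_toLin', hb, Real.volume_Icc_pi]
    simp
  rw [← hvolP]
  set q : ℝ≥0∞ := ENNReal.ofReal ((1 / 2) ^ n) with hq
  have hq0 : q ≠ 0 := by
    rw [hq, ENNReal.ofReal_ne_zero_iff]; positivity
  set S := Metric.closedBall (kc k) (1 / 4) with hS
  have hSm : MeasurableSet S := Metric.isClosed_closedBall.measurableSet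
  -- facts on `P`
  have hPmem : ∀ w ∈ P, ‖w‖ ≤ 1 / 4 ∧ q / 2 ≤ ∫⁻ x in S, ENNReal.ofReal ((inner ℝ (Φ x) (Φ (x + w))) ^ 2) := by
    rintro w ⟨τ, hτ, rfl⟩
    rw [hL]
    have hτ0 : ∀ j, 0 ≤ τ j := fun j => hτ.1 j
    have hτ1 : ∀ j, τ j ≤ ε / W j := fun j => hτ.2 j
    have hWp : ∀ j, 0 < W j := fun j => lt_of_lt_of_le one_pos (hW j)
    have hτ2 : ∀ j, 0 ≤ τ j ∧ τ j ≤ ε := fun j =>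
      ⟨hτ0 j, (hτ1 j).trans (div_le_self hε.le (hW j))⟩
    refine ⟨norm_sum_le V hV ε τ hε.le hnε' hτ2 _, ?_⟩
    have hds : ∀ j, disp Φ k (τ j • V j) ≤ ENNReal.ofReal ε := by
      intro j
      rcases (hτ0 j).eq_or_lt with h0 | h0
      · rw [← h0]; simp [disp]
      · refine (hd j (τ j) h0 ((hτ2 j).2.trans hε1)).trans ?_
        rw [← ENNReal.ofReal_mul h0.le]
        apply ENNReal.ofReal_le_ofReal
        have := hτ1 j
        rwa [le_div_iff₀ (hWp j)] at this
    have h1 := disp_sum Φ hΦ k V hV ε τ hε.le hnε' hτ2 hds Finset.univ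
    set w := ∑ j, τ j • V j
    have h2 : q ≤ (∫⁻ x in S, ENNReal.ofReal ((inner ℝ (Φ x) (Φ (x + w))) ^ 2))
        + 2 * ∫⁻ x in S, ‖Φ (x + w) - Φ x‖ₑ := by
      have c1 : Continuous fun x => ENNReal.ofReal ((inner ℝ (Φ x) (Φ (x + w))) ^ 2) :=
        ENNReal.continuous_ofReal.comp (by fun_prop)
      have c2 : Continuous fun x => ‖Φ (x + w) - Φ x‖ₑ := by fun_prop
      rw [← lintegral_const_mul _ c2.measurable, ← lintegral_add_left c1.measurable]
      calc q = ∫⁻ x in S, 1 := by rw [setLIntegral_one, hS, vol_quarter]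
        _ ≤ _ := by
          refine lintegral_mono fun x => ?_
          have := ip_sq (Φ x) (Φ (x + w)) (hΦ1 _) (hΦ1 _)
          have h3 := ENNReal.ofReal_le_ofReal this
          rw [ENNReal.ofReal_one, ENNReal.ofReal_add (by positivity) (by positivity),
            ENNReal.ofReal_mul (by norm_num), ofReal_norm] at h3
          simpa using h3
    have h4 : 2 * ∫⁻ x in S, ‖Φ (x + w) - Φ x‖ₑ ≤ q / 2 := by
      calc 2 * ∫⁻ x in S, ‖Φ (x + w) - Φ x‖ₑ ≤ 2 * (n * ENNReal.ofReal ε) := by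
            rw [Finset.card_univ, Fintype.card_fin] at h1; gcongr
        _ = ENNReal.ofReal (2 * (n * ε)) := by
            rw [ENNReal.ofReal_mul (by norm_num), ENNReal.ofReal_mul (by positivity)]
            simp
        _ ≤ ENNReal.ofReal (1 / 2 * (1 / 2) ^ n) := ENNReal.ofReal_le_ofReal hnε
        _ = q / 2 := by
            rw [ENNReal.ofReal_mul (by norm_num), ← hq, ENNReal.div_eq_inv_mul]
            congr 1
            rw [one_div, ENNReal.ofReal_inv_of_pos (by norm_num)]
            simp
    have h5 : q / 2 + q / 2 ≤ (∫⁻ x in S, ENNReal.ofReal ((inner ℝ (Φ x) (Φ (x + w))) ^ 2)) + q / 2 := by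
      rw [ENNReal.add_halves]
      exact h2.trans (by gcongr)
    refine ENNReal.le_of_add_le_add_right ?_ h5
    exact (ENNReal.div_lt_top ENNReal.ofReal_ne_top (by norm_num)).ne
  -- Tonelli
  have c3 : Continuous fun z : (Fin n → ℝ) × (Fin n → ℝ) =>
      ENNReal.ofReal ((inner ℝ (Φ z.1) (Φ (z.1 + z.2))) ^ 2) :=
    ENNReal.continuous_ofReal.comp (by fun_prop)
  have hup : m * ∫⁻ x in S, ∫⁻ w in P, ENNReal.ofReal ((inner ℝ (Φ x) (Φ (x + w))) ^ 2) ≤ B * q := by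
    rw [← lintegral_const_mul _ (by
      exact Measurable.lintegral_prod_right' (f := fun z : (Fin n → ℝ) × (Fin n → ℝ) =>
        ENNReal.ofReal ((inner ℝ (Φ z.1) (Φ (z.1 + z.2))) ^ 2)) c3.measurable)]
    calc _ ≤ ∫⁻ x in S, B := by
          refine setLIntegral_mono measurable_const fun x hx => ?_
          refine le_trans ?_ (hB (Φ x) (hΦ1 x))
          refine mul_le_mul_right ?_ m
          have := shift_le P (Metric.closedBall (kc k) (1 / 2)) hPm
            Metric.isClosed_closedBall.measurableSet x (by
              intro w hw
              rw [hS, mem_closedBall_iff_norm] at hx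
              rw [mem_closedBall_iff_norm]
              have e : w + x - kc k = w + (x - kc k) := by abel
              rw [e]
              have := norm_add_le w (x - kc k)
              have := (hPmem w hw).1
              linarith) (fun y => ENNReal.ofReal ((inner ℝ (Φ x) (Φ y)) ^ 2))
          simpa only [add_comm _ x] using this
      _ = B * q := by rw [setLIntegral_const, hS, vol_quarter]
  rw [lintegral_lintegral_swap c3.measurable.aemeasurable] at hup
  have hlow : q / 2 * volume P ≤
      ∫⁻ w in P, ∫⁻ x in S, ENNReal.ofReal ((inner ℝ (Φ x) (Φ (x + w))) ^ 2) := by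
    rw [← setLIntegral_const]
    refine setLIntegral_mono' hPm fun w hw => (hPmem w hw).2
  have h6 : q * (m * volume P) ≤ q * (2 * B) := by
    calc q * (m * volume P) = 2 * (m * (q / 2 * volume P)) := by
          have : q = 2 * (q / 2) := (ENNReal.mul_div_cancel (by norm_num) (by norm_num)).symm
          conv_lhs => rw [this]
          ring
      _ ≤ 2 * (B * q) := by exact mul_le_mul_right ((mul_le_mul_right hlow m).trans hup) 2
      _ = _ := by ring
  exact (ENNReal.mul_le_mul_iff_right hq0 ENNReal.ofReal_ne_top).1 h6

end MK

namespace MK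

lemma holder_pow {n : ℕ} (hn : 1 ≤ n) {ι : Type} (s : Finset ι) (μ : ι → ℝ) (hμ : ∀ k ∈ s, 0 ≤ μ k)
    (G : Fin n → ι → ℝ) (hG : ∀ j, ∀ k ∈ s, 0 ≤ G j k) (H : ℝ) (hH : 0 ≤ H)
    (h : ∀ k ∈ s, μ k ^ n ≤ H * ∏ j, G j k) :
    (∑ k ∈ s, μ k) ^ n ≤ H * ∏ j, ∑ k ∈ s, G j k := by
  have hg0 : ∀ j, 0 ≤ ∑ k ∈ s, G j k := fun j => Finset.sum_nonneg (hG j)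
  by_cases hz : ∃ j, ∑ k ∈ s, G j k = 0
  · obtain ⟨j, hj⟩ := hz
    rw [Finset.sum_eq_zero_iff_of_nonneg (hG j)] at hj
    have : ∑ k ∈ s, μ k = 0 := by
      apply Finset.sum_eq_zero
      intro k hk
      have h1 := h k hk
      rw [Finset.prod_eq_zero (Finset.mem_univ j) (hj k hk), mul_zero] at h1
      have h2 : μ k ^ n = 0 := le_antisymm h1 (pow_nonneg (hμ k hk) n)
      exact pow_eq_zero_iff (by omega) |>.1 h2
    rw [this, zero_pow (by omega)]
    exact mul_nonneg hH (Finset.prod_nonneg fun j _ => hg0 j)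
  · push Not at hz
    have hg : ∀ j, 0 < ∑ k ∈ s, G j k := fun j => lt_of_le_of_ne (hg0 j) (hz j).symm
    set g : Fin n → ℝ := fun j => ∑ k ∈ s, G j k with hgdef
    have hn0 : (n : ℝ) ≠ 0 := by positivity
    have hn1 : (n : ℕ) ≠ 0 := by omega
    have hP : 0 ≤ H * ∏ j, g j := mul_nonneg hH (Finset.prod_nonneg fun j _ => (hg j).le)
    set r : ℝ := (H * ∏ j, g j) ^ ((n : ℝ)⁻¹) with hr
    have hr0 : 0 ≤ r := Real.rpow_nonneg hP _
    have hrn : r ^ n = H * ∏ j, g j := Real.rpow_inv_natCast_pow hP hn1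
    have hk : ∀ k ∈ s, μ k ≤ r * ∑ j, (n : ℝ)⁻¹ * (G j k / g j) := by
      intro k hk
      have hq : ∀ j ∈ (Finset.univ : Finset (Fin n)), 0 ≤ G j k / g j := fun j _ => div_nonneg (hG j k hk) (hg j).le
      have h1 := Real.geom_mean_le_arith_mean_weighted (Finset.univ : Finset (Fin n))
        (fun _ => (n : ℝ)⁻¹) (fun j => G j k / g j) (fun _ _ => by positivity)
        (by simp [hn0]) hq
      refine le_trans ?_ (mul_le_mul_of_nonneg_left h1 hr0)
      refine le_of_pow_le_pow_left₀ hn1 (mul_nonneg hr0 (Finset.prod_nonneg fun j hj =>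
        Real.rpow_nonneg (hq j hj) _)) ?_
      rw [mul_pow, hrn, ← Finset.prod_pow]
      have e : ∀ j, ((G j k / g j) ^ ((n : ℝ)⁻¹)) ^ n = G j k / g j := fun j =>
        Real.rpow_inv_natCast_pow (hq j (Finset.mem_univ _)) hn1
      simp only [e]
      rw [mul_assoc, ← Finset.prod_mul_distrib]
      have e2 : ∀ j, g j * (G j k / g j) = G j k := fun j => mul_div_cancel₀ _ (hg j).ne'
      simp only [e2]
      exact h k hk
    have hsum : ∑ k ∈ s, μ k ≤ r := by
      refine (Finset.sum_le_sum hk).trans ?_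
      rw [← Finset.mul_sum, Finset.sum_comm]
      have : ∀ j, ∑ k ∈ s, (n : ℝ)⁻¹ * (G j k / g j) = (n : ℝ)⁻¹ := by
        intro j
        rw [← Finset.mul_sum, ← Finset.sum_div, div_self (hg j).ne', mul_one]
      simp [this, hn0]
    calc (∑ k ∈ s, μ k) ^ n ≤ r ^ n := pow_le_pow_left₀ (Finset.sum_nonneg hμ) hsum n
      _ = _ := hrn

open Classical in
/-- the tubes of a family which come near the cell of `k` -/
noncomputable def meet {n m : ℕ} (p v : Fin m → Fin n → ℝ) (k : Fin n → ℤ) : Finset (Fin m) :=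
  Finset.univ.filter fun a => ∃ t : ℝ, ‖kc k - p a - t • v a‖ ≤ (2 : ℕ)

/-- the weight of the cell `k` -/
noncomputable def wt {n : ℕ} (A : Fin n → ℕ) (p v : ∀ j : Fin n, Fin (A j) → Fin n → ℝ)
    (k : Fin n → ℤ) : ℝ :=
  (∏ j, ((meet (p j) (v j) k).card : ℝ)) ^ ((1 : ℝ) / ((n : ℝ) - 1))

lemma wt_nonneg {n : ℕ} (A : Fin n → ℕ) (p v : ∀ j : Fin n, Fin (A j) → Fin n → ℝ)
    (k : Fin n → ℤ) : 0 ≤ wt A p v k := by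
  unfold wt; positivity

/-- the weighted measure -/
noncomputable def nu {n : ℕ} (R : ℕ) (μ : (Fin n → ℤ) → ℝ) : Measure (Fin n → ℝ) :=
  ∑ k ∈ boxZ n R, ENNReal.ofReal (μ k) • volume.restrict (Metric.closedBall (kc k) (1 / 2))

lemma nu_univ {n : ℕ} (R : ℕ) (μ : (Fin n → ℤ) → ℝ) (hμ : ∀ k, 0 ≤ μ k) :
    nu R μ Set.univ = ENNReal.ofReal (∑ k ∈ boxZ n R, μ k) := by
  rw [nu, ENNReal.ofReal_sum_of_nonneg fun k _ => hμ k]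
  simp only [Measure.coe_finsetSum, Finset.sum_apply, Measure.smul_apply, Measure.restrict_apply_univ,
    vol_half, smul_eq_mul, mul_one]

lemma nu_ac {n : ℕ} (R : ℕ) (μ : (Fin n → ℤ) → ℝ) : nu R μ ≪ volume := by
  intro s hs
  rw [nu]
  simp only [Measure.coe_finsetSum, Finset.sum_apply, Measure.smul_apply, smul_eq_mul]
  apply Finset.sum_eq_zero
  intro k _
  rw [Measure.absolutelyContinuous_of_le Measure.restrict_le_self hs, mul_zero]

lemma nu_bdd {n : ℕ} (R : ℕ) (μ : (Fin n → ℤ) → ℝ) : ∀ᵐ x ∂(nu R μ), ‖x‖ ≤ (R : ℝ) + 1 := by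
  rw [ae_iff, nu]
  simp only [Measure.coe_finsetSum, Finset.sum_apply, Measure.smul_apply, smul_eq_mul]
  apply Finset.sum_eq_zero
  intro k hk
  rw [mem_boxZ] at hk
  have : ∀ᵐ x ∂(volume.restrict (Metric.closedBall (kc k) (1 / 2))), ‖x‖ ≤ (R : ℝ) + 1 := by
    refine (ae_restrict_mem Metric.isClosed_closedBall.measurableSet).mono fun x hx => ?_
    rw [mem_closedBall_iff_norm] at hx
    have := norm_add_le (x - kc k) (kc k)
    rw [sub_add_cancel] at this
    linarith
  rw [ae_iff.1 this, mul_zero]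

lemma nu_ge {n : ℕ} (R : ℕ) (μ : (Fin n → ℤ) → ℝ) (k : Fin n → ℤ) (hk : k ∈ boxZ n R)
    (f : (Fin n → ℝ) → ℝ≥0∞) :
    ENNReal.ofReal (μ k) * ∫⁻ y in Metric.closedBall (kc k) (1 / 2), f y ≤ ∫⁻ y, f y ∂(nu R μ) := by
  rw [nu, lintegral_finsetSum_measure]
  refine le_trans (le_of_eq ?_) (Finset.single_le_sum (f := fun k => ∫⁻ y, f y ∂(ENNReal.ofReal (μ k) •
    volume.restrict (Metric.closedBall (kc k) (1 / 2)))) (fun _ _ => zero_le) hk)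
  rw [lintegral_smul_measure, smul_eq_mul]

set_option maxHeartbeats 2000000 in
lemma sum_wt (n : ℕ) (hn : 2 ≤ n) : ∃ C : ℝ, 0 < C ∧
    ∀ (A : Fin n → ℕ) (p v : ∀ j : Fin n, Fin (A j) → Fin n → ℝ) (θ : ℝ), 0 < θ →
      (∀ j a, ‖v j a‖ ≤ 1 ∧ 1 ≤ n * ‖v j a‖) →
      (∀ a : ∀ j : Fin n, Fin (A j), θ ≤ |Matrix.det (Matrix.of fun i j : Fin n => v j (a j) i)|) →
      ∀ R : ℕ, 1 ≤ R → ∑ k ∈ boxZ n R, wt A p v k ≤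
        C * θ ^ (-(1:ℝ) / ((n:ℝ) - 1)) * ∏ j : Fin n, (A j : ℝ) ^ ((1:ℝ) / ((n:ℝ) - 1)) := by
  classical
  obtain ⟨Cw, hCwt, hCw⟩ := exists_W n 2
  have hn0 : (0 : ℝ) < n := by positivity
  have hn1 : (0 : ℝ) < (n : ℝ) - 1 := by
    have : (2 : ℝ) ≤ n := by exact_mod_cast hn
    linarith
  set ε : ℝ := (1 / 2) ^ n / (4 * n) with hεdef
  have hε : 0 < ε := by positivity
  have hnε : 2 * (n * ε) ≤ 1 / 2 * (1 / 2) ^ n := by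
    rw [hεdef]; field_simp; norm_num
  have hε1 : ε ≤ 1 := by
    have h1 : ((1:ℝ) / 2) ^ n ≤ 1 := pow_le_one₀ (by norm_num) (by norm_num)
    have h2 : (2 : ℝ) ≤ n := by exact_mod_cast hn
    nlinarith
  clear_value ε
  set Cr : ℝ := Cw.toReal + 1 with hCr
  have hCr0 : 0 < Cr := by positivity
  set C1 : ℝ := 6 * (Cr * (n + 1) / ε) ^ n with hC1
  have hC10 : 0 < C1 := by positivity
  refine ⟨C1 ^ ((1:ℝ) / ((n:ℝ) - 1)), by positivity, ?_⟩
  intro A p v θ hθ hv hdet R hR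
  have hR0 : (0 : ℝ) < R := by exact_mod_cast hR
  set μ := wt A p v with hμdef
  have hμ : ∀ k, 0 ≤ μ k := wt_nonneg A p v
  set I : ℝ := ∑ k ∈ boxZ n R, μ k with hI
  have hI0 : 0 ≤ I := Finset.sum_nonneg fun k _ => hμ k
  have : IsFiniteMeasure (nu R μ) := ⟨by rw [nu_univ R μ hμ]; exact ENNReal.ofReal_lt_top⟩
  obtain ⟨Φ, hΦ, hΦ1, hZ, hΦI⟩ := exists_Phi n R (nu R μ) (nu_ac R μ) (R + 1) (nu_bdd R μ)
  have hreal : (nu R μ).real Set.univ = I := by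
    rw [Measure.real, nu_univ R μ hμ, ENNReal.toReal_ofReal hI0]
  rw [hreal] at hΦI
  set N : ℝ := ((R : ℝ) + 1) ^ n with hN
  have hN0 : 0 < N := by positivity
  -- the numbers `W`
  have hWex : ∀ j (a : Fin (A j)), ∃ W : (Fin n → ℤ) → ℝ, (∀ k ∈ boxZ n R, a ∈ meet (p j) (v j) k →
      1 ≤ W k ∧ ∀ τ : ℝ, 0 < τ → τ ≤ 1 → disp Φ k (τ • v j a) ≤ ENNReal.ofReal τ * ENNReal.ofReal (W k)) ∧
      ∑ k ∈ (boxZ n R).filter (fun k => a ∈ meet (p j) (v j) k), W k ≤ Cr * ((n + 1) * R) := by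
    intro j a
    obtain ⟨W, hW, hWs⟩ := hCw (p j a) (v j a) (hv j a).1 (hv j a).2 R hR
      ((boxZ n R).filter fun k => a ∈ meet (p j) (v j) k) (by
        intro k hk
        rw [Finset.mem_filter, mem_boxZ, meet, Finset.mem_filter] at hk
        exact ⟨hk.1, hk.2.2⟩) _ Φ (n * R) hΦ hΦ1 hZ
    refine ⟨fun k => (W k).toReal, ?_, ?_⟩
    · intro k hk ha
      obtain ⟨h1, h2, h3⟩ := hW k (Finset.mem_filter.2 ⟨hk, ha⟩)
      refine ⟨?_, ?_⟩
      · have := ENNReal.toReal_mono h2 h1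
        simpa using this
      · rw [ENNReal.ofReal_toReal h2]; exact h3
    · rw [← ENNReal.toReal_sum fun k hk => (hW k hk).2.1]
      have h4 : (Cw * ((R : ℝ≥0∞) + (n * R : ℕ))).toReal = Cw.toReal * ((n + 1) * R) := by
        rw [ENNReal.toReal_mul, ENNReal.toReal_add (ENNReal.natCast_ne_top _) (ENNReal.natCast_ne_top _),
          ENNReal.toReal_natCast, ENNReal.toReal_natCast]
        push_cast
        ring
      have h5 := ENNReal.toReal_mono (ENNReal.mul_ne_top hCwt (by
        rw [← Nat.cast_add]; exact ENNReal.natCast_ne_top _)) hWs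
      rw [h4] at h5
      refine h5.trans ?_
      rw [hCr]
      gcongr
      linarith
  choose W hW hWs using hWex
  set G : Fin n → (Fin n → ℤ) → ℝ := fun j k => ∑ a ∈ meet (p j) (v j) k, W j a k with hG
  have hG0 : ∀ j, ∀ k ∈ boxZ n R, 0 ≤ G j k := fun j k hk =>
    Finset.sum_nonneg fun a ha => zero_le_one.trans (hW j a k hk ha).1
  set H : ℝ := 6 * I / (N * θ * ε ^ n) with hH
  have hH0 : 0 ≤ H := by positivity
  -- the pointwise inequality
  have hpt : ∀ k ∈ boxZ n R, μ k ^ n ≤ H * ∏ j, G j k := by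
    intro k hk
    have htup : ∀ a ∈ Fintype.piFinset (fun j => meet (p j) (v j) k),
        μ k ≤ H * ∏ j, W j (a j) k := by
      intro a ha
      rw [Fintype.mem_piFinset] at ha
      have hW1 : ∀ j, 1 ≤ W j (a j) k := fun j => (hW j (a j) k hk (ha j)).1
      have hW0 : ∀ j, 0 < W j (a j) k := fun j => lt_of_lt_of_le one_pos (hW1 j)
      have h1 := key Φ hΦ hΦ1 k (fun j => v j (a j)) (fun j => (hv j (a j)).1)
        (fun j => W j (a j) k) hW1 ε hε hnε hε1
        (fun j => (hW j (a j) k hk (ha j)).2) (ENNReal.ofReal (μ k)) (ENNReal.ofReal (3 * I / N))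
        (fun e he => (nu_ge R μ k hk _).trans (hΦI e he))
      rw [← ENNReal.ofReal_prod_of_nonneg fun j _ => (div_pos hε (hW0 j)).le,
        ← ENNReal.ofReal_mul (abs_nonneg _), ← ENNReal.ofReal_mul (hμ k)] at h1
      have h2 : (2 : ℝ≥0∞) * ENNReal.ofReal (3 * I / N) = ENNReal.ofReal (2 * (3 * I / N)) := by
        rw [ENNReal.ofReal_mul (by norm_num)]; simp
      rw [h2, ENNReal.ofReal_le_ofReal_iff (by positivity)] at h1
      have hPW : 0 < ∏ j, W j (a j) k := Finset.prod_pos fun j _ => hW0 j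
      have h3 : ∏ j, ε / W j (a j) k = ε ^ n / ∏ j, W j (a j) k := by
        rw [Finset.prod_div_distrib]; simp
      rw [h3] at h1
      have h4 : μ k * (θ * (ε ^ n / ∏ j, W j (a j) k)) ≤ 2 * (3 * I / N) := by
        refine le_trans ?_ h1
        have := hdet a
        have := hμ k
        gcongr
      rw [hH]
      have h5 : μ k * (θ * (ε ^ n / ∏ j, W j (a j) k)) = (μ k * (θ * ε ^ n)) / ∏ j, W j (a j) k := by
        ring
      rw [h5, div_le_iff₀ hPW] at h4
      rw [div_mul_eq_mul_div, le_div_iff₀ (by positivity)]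
      calc μ k * (N * θ * ε ^ n) = N * (μ k * (θ * ε ^ n)) := by ring
        _ ≤ N * (2 * (3 * I / N) * ∏ j, W j (a j) k) := by gcongr
        _ = _ := by field_simp; ring
    have h6 := Finset.sum_le_sum htup
    rw [Finset.sum_const, ← Finset.mul_sum, ← Finset.prod_univ_sum (fun j => meet (p j) (v j) k) (fun j a => W j a k), Fintype.card_piFinset,
      nsmul_eq_mul] at h6
    refine le_trans (le_of_eq ?_) h6
    push_cast
    have hF0 : 0 ≤ ∏ j, ((meet (p j) (v j) k).card : ℝ) :=
      Finset.prod_nonneg fun j _ => Nat.cast_nonneg _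
    have hF : ∏ j, ((meet (p j) (v j) k).card : ℝ) = μ k ^ (n - 1) := by
      rw [hμdef, wt, ← Real.rpow_natCast, ← Real.rpow_mul hF0, Nat.cast_sub (by omega)]
      rw [Nat.cast_one, one_div_mul_cancel hn1.ne', Real.rpow_one]
    rw [hF, ← pow_succ, Nat.sub_add_cancel (by omega)]
  have hhol := holder_pow (by omega) (boxZ n R) μ (fun k _ => hμ k) G hG0 H hH0 hpt
  have hGs : ∀ j, ∑ k ∈ boxZ n R, G j k ≤ A j * (Cr * ((n + 1) * R)) := by
    intro j
    have : ∑ k ∈ boxZ n R, G j k =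
        ∑ a : Fin (A j), ∑ k ∈ (boxZ n R).filter (fun k => a ∈ meet (p j) (v j) k), W j a k := by
      apply Finset.sum_comm'
      intro k a
      simp
    rw [this]
    refine (Finset.sum_le_sum fun a _ => hWs j a).trans ?_
    simp
  have hfin : I ^ n ≤ H * ∏ j, ((A j : ℝ) * (Cr * ((n + 1) * R))) := by
    refine hhol.trans ?_
    gcongr with j _
    · exact fun j _ => Finset.sum_nonneg (hG0 j)
    · exact hGs j
  set PA : ℝ := ∏ j, (A j : ℝ) with hPA
  have hPA0 : 0 ≤ PA := by positivity
  have hfin2 : I ^ n ≤ I * (C1 * θ⁻¹ * PA) := by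
    refine hfin.trans ?_
    rw [Finset.prod_mul_distrib, Finset.prod_const, Finset.card_univ, Fintype.card_fin, hH, hC1]
    have hRN : (R : ℝ) ^ n ≤ N := by rw [hN]; gcongr; linarith
    have e1 : 6 * I / (N * θ * ε ^ n) * (PA * (Cr * ((n + 1) * R)) ^ n)
        = I * (6 * (Cr * (n + 1) / ε) ^ n * θ⁻¹ * PA) * (R ^ n / N) := by
      rw [div_pow, mul_pow Cr, mul_pow Cr, mul_pow _ (R : ℝ)]
      field_simp
    rw [e1]
    refine mul_le_of_le_one_right (by positivity) ?_
    rw [div_le_one hN0]; exact hRN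
  have hRHS : C1 ^ ((1:ℝ) / ((n:ℝ) - 1)) * θ ^ (-(1:ℝ) / ((n:ℝ) - 1)) *
      ∏ j : Fin n, (A j : ℝ) ^ ((1:ℝ) / ((n:ℝ) - 1)) = (C1 * θ⁻¹ * PA) ^ ((1:ℝ) / ((n:ℝ) - 1)) := by
    rw [Real.mul_rpow (by positivity) hPA0, Real.mul_rpow hC10.le (by positivity), hPA,
      Real.finsetProd_rpow _ _ (fun j _ => by positivity), neg_div, Real.rpow_neg hθ.le,
      Real.inv_rpow hθ.le]
  rw [hRHS]
  rcases hI0.eq_or_lt with h0 | h0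
  · rw [← h0]; positivity
  · have h7 : I ^ (n - 1) ≤ C1 * θ⁻¹ * PA := by
      have : I * I ^ (n - 1) = I ^ n := by
        rw [← pow_succ', Nat.sub_add_cancel (by omega)]
      rw [← this] at hfin2
      exact le_of_mul_le_mul_left hfin2 h0
    calc I = (I ^ (n - 1)) ^ ((1:ℝ) / ((n:ℝ) - 1)) := by
          rw [← Real.rpow_natCast, ← Real.rpow_mul hI0, Nat.cast_sub (by omega), Nat.cast_one,
            mul_one_div_cancel hn1.ne', Real.rpow_one]
      _ ≤ _ := Real.rpow_le_rpow (by positivity) h7 (by positivity)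

end MK

namespace MK

lemma sup_le {n : ℕ} (x : EuclideanSpace ℝ (Fin n)) : ‖x.ofLp‖ ≤ ‖x‖ := by
  rw [pi_norm_le_iff_of_nonneg (norm_nonneg _)]
  intro i
  exact PiLp.norm_apply_le x i

lemma cyl_near {n : ℕ} (p v x : EuclideanSpace ℝ (Fin n)) (hx : x ∈ cylinder p v 1)
    (k : Fin n → ℤ) (hk : ‖x.ofLp - kc k‖ ≤ 1 / 2) :
    ∃ t : ℝ, ‖kc k - p.ofLp - t • v.ofLp‖ ≤ (2 : ℕ) := by
  have h1 : Metric.infDist x {y | ∃ t : ℝ, y = p + t • v} ≤ 1 := hx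
  have h2 : Metric.infDist x {y | ∃ t : ℝ, y = p + t • v} < 3 / 2 := by linarith
  have hne : {y | ∃ t : ℝ, y = p + t • v}.Nonempty := ⟨p + (0 : ℝ) • v, 0, rfl⟩
  rw [Metric.infDist_lt_iff hne] at h2
  obtain ⟨y, ⟨t, rfl⟩, hy⟩ := h2
  refine ⟨t, ?_⟩
  rw [dist_eq_norm] at hy
  have h3 := sup_le (x - (p + t • v))
  have e : kc k - p.ofLp - t • v.ofLp = (x - (p + t • v)).ofLp - (x.ofLp - kc k) := by
    simp only [WithLp.ofLp_sub, WithLp.ofLp_add, WithLp.ofLp_smul]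
    abel
  rw [e]
  have := norm_sub_le (x - (p + t • v)).ofLp (x.ofLp - kc k)
  push_cast
  linarith

lemma unit_norms {n : ℕ} (v : EuclideanSpace ℝ (Fin n)) (hv : ‖v‖ = 1) :
    ‖v.ofLp‖ ≤ 1 ∧ 1 ≤ n * ‖v.ofLp‖ := by
  have h1 : ‖v.ofLp‖ ≤ 1 := hv ▸ sup_le v
  refine ⟨h1, ?_⟩
  have h2 := EuclideanSpace.norm_sq_eq v
  rw [hv] at h2
  have h3 : ∑ i, ‖v i‖ ^ 2 ≤ ∑ i : Fin n, ‖v.ofLp‖ := by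
    apply Finset.sum_le_sum
    intro i _
    have h4 : ‖v i‖ ≤ ‖v.ofLp‖ := norm_le_pi_norm v.ofLp i
    have := norm_nonneg (v i)
    nlinarith
  simp only [Finset.sum_const, Finset.card_univ, Fintype.card_fin, nsmul_eq_mul] at h3
  linarith

lemma exists_box {n : ℕ} (s : Finset (Fin n → ℤ)) : ∃ R : ℕ, 1 ≤ R ∧ s ⊆ boxZ n R := by
  refine ⟨(s.sup fun k => ⌈‖kc k‖⌉₊) + 1, by omega, fun k hk => ?_⟩
  rw [mem_boxZ]
  have h1 : ⌈‖kc k‖⌉₊ ≤ s.sup fun k => ⌈‖kc k‖⌉₊ := Finset.le_sup (f := fun k => ⌈‖kc k‖⌉₊) hk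
  have h2 := Nat.le_ceil ‖kc k‖
  have h3 : (⌈‖kc k‖⌉₊ : ℝ) ≤ ((s.sup fun k => ⌈‖kc k‖⌉₊ : ℕ) : ℝ) := by exact_mod_cast h1
  push_cast
  linarith

end MK

/-- **Multilinear Kakeya (endpoint case, Guth).** For each `j` a family of unit cylinders
`T_{j,a}` with unit core directions `v j a`, quantitatively transverse in the sense that every
determinant of core directions, one from each family, is at least `θ` in absolute value.  Then
`∫ (∏_j ∑_a χ_{T_{j,a}})^{1/(n-1)} ≤ C(n) θ^{-1/(n-1)} ∏_j A(j)^{1/(n-1)}`. -/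
theorem multilinear_kakeya (n : ℕ) (hn : 2 ≤ n) :
    ∃ C : ℝ, 0 < C ∧
      ∀ (A : Fin n → ℕ) (p v : ∀ j : Fin n, Fin (A j) → EuclideanSpace ℝ (Fin n)) (θ : ℝ),
        0 < θ →
        (∀ j a, ‖v j a‖ = 1) →
        (∀ a : ∀ j : Fin n, Fin (A j),
          θ ≤ |Matrix.det (Matrix.of fun i j : Fin n => v j (a j) i)|) →
        ∫ x : EuclideanSpace ℝ (Fin n),
            (∏ j : Fin n, ∑ a : Fin (A j),
              Set.indicator (cylinder (p j a) (v j a) 1) (fun _ => (1:ℝ)) x)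
            ^ ((1:ℝ) / ((n:ℝ) - 1))
          ≤ C * θ ^ (-(1:ℝ) / ((n:ℝ) - 1)) * ∏ j : Fin n, (A j : ℝ) ^ ((1:ℝ) / ((n:ℝ) - 1)) := by
  classical
  obtain ⟨C, hC, hmain⟩ := MK.sum_wt n hn
  refine ⟨C, hC, ?_⟩
  intro A p v θ hθ hv hdet
  have hn1 : (0 : ℝ) < (n : ℝ) - 1 := by
    have : (2 : ℝ) ≤ n := by exact_mod_cast hn
    linarith
  set p' : ∀ j : Fin n, Fin (A j) → Fin n → ℝ := fun j a => (p j a).ofLp with hp'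
  set v' : ∀ j : Fin n, Fin (A j) → Fin n → ℝ := fun j a => (v j a).ofLp with hv'
  have hR := hmain A p' v' θ hθ (fun j a => MK.unit_norms _ (hv j a)) hdet
  set B : ℝ := C * θ ^ (-(1:ℝ) / ((n:ℝ) - 1)) * ∏ j : Fin n, (A j : ℝ) ^ ((1:ℝ) / ((n:ℝ) - 1)) with hB
  have hB0 : 0 ≤ B := by positivity
  set g : EuclideanSpace ℝ (Fin n) → ℝ := fun x => (∏ j : Fin n, ∑ a : Fin (A j),
              Set.indicator (cylinder (p j a) (v j a) 1) (fun _ => (1:ℝ)) x)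
            ^ ((1:ℝ) / ((n:ℝ) - 1)) with hg
  have hs0 : ∀ x j, 0 ≤ ∑ a : Fin (A j),
      Set.indicator (cylinder (p j a) (v j a) 1) (fun _ => (1:ℝ)) x := fun x j =>
    Finset.sum_nonneg fun a _ => Set.indicator_nonneg (fun _ _ => zero_le_one) x
  have hg0 : ∀ x, 0 ≤ g x := fun x =>
    Real.rpow_nonneg (Finset.prod_nonneg fun j _ => hs0 x j) _
  change ∫ x, g x ≤ B
  have hgle : ∀ x k, ‖x.ofLp - MK.kc k‖ ≤ 1 / 2 → g x ≤ MK.wt A p' v' k := by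
    intro x k hk
    refine Real.rpow_le_rpow (Finset.prod_nonneg fun j _ => hs0 x j) ?_ (by positivity)
    refine Finset.prod_le_prod (fun j _ => hs0 x j) fun j _ => ?_
    rw [MK.meet, Finset.card_filter, Nat.cast_sum]
    refine Finset.sum_le_sum fun a _ => ?_
    by_cases hx : x ∈ cylinder (p j a) (v j a) 1
    · have := MK.cyl_near _ _ _ hx k hk
      rw [Set.indicator_of_mem hx, if_pos this]
      simp
    · rw [Set.indicator_of_notMem hx]
      positivity
  by_cases hInt : Integrable g
  swap
  · rw [integral_undef hInt]; exact hB0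
  rw [integral_eq_lintegral_of_nonneg_ae (Filter.Eventually.of_forall hg0) hInt.1]
  refine ENNReal.toReal_le_of_le_ofReal hB0 ?_
  have hmp := PiLp.volume_preserving_ofLp (Fin n)
  have hmeas : ∀ k : Fin n → ℤ, MeasurableSet
      ((fun x : EuclideanSpace ℝ (Fin n) => x.ofLp) ⁻¹' Metric.closedBall (MK.kc k) (1 / 2)) := fun k =>
    hmp.measurable Metric.isClosed_closedBall.measurableSet
  have hvol : ∀ k : Fin n → ℤ, volume
      ((fun x : EuclideanSpace ℝ (Fin n) => x.ofLp) ⁻¹' Metric.closedBall (MK.kc k) (1 / 2)) = 1 := by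
    intro k
    rw [← MK.vol_half (MK.kc k)]
    exact hmp.measure_preimage Metric.isClosed_closedBall.measurableSet.nullMeasurableSet
  calc ∫⁻ x, ENNReal.ofReal (g x)
      ≤ ∫⁻ x, ∑' k : Fin n → ℤ, ((fun x : EuclideanSpace ℝ (Fin n) => x.ofLp) ⁻¹'
          Metric.closedBall (MK.kc k) (1 / 2)).indicator
            (fun _ => ENNReal.ofReal (MK.wt A p' v' k)) x := by
        refine lintegral_mono fun x => ?_
        obtain ⟨k, hk⟩ := MK.exists_near x.ofLp
        refine le_trans ?_ (ENNReal.le_tsum k)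
        rw [Set.indicator_of_mem (by
          rw [Set.mem_preimage, mem_closedBall_iff_norm]; exact hk)]
        exact ENNReal.ofReal_le_ofReal (hgle x k hk)
    _ = ∑' k : Fin n → ℤ, ENNReal.ofReal (MK.wt A p' v' k) := by
        rw [lintegral_tsum fun k => (measurable_const.indicator (hmeas k)).aemeasurable]
        congr 1
        funext k
        rw [lintegral_indicator (hmeas k), setLIntegral_const, hvol, mul_one]
    _ ≤ ENNReal.ofReal B := by
        refine ENNReal.summable.tsum_le_of_sum_le fun s => ?_
        obtain ⟨R, hR1, hsR⟩ := MK.exists_box s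
        rw [← ENNReal.ofReal_sum_of_nonneg fun k _ => MK.wt_nonneg A p' v' k]
        refine ENNReal.ofReal_le_ofReal ((Finset.sum_le_sum_of_subset_of_nonneg hsR
          fun k _ _ => MK.wt_nonneg A p' v' k).trans (hR R hR1))
end

section
/- Let n ≥ 2 and let A ≥ 1 be an integer. Suppose we have a finite collection of unit cylinders T_{j,a} ⊆ ℝ^n, where 1 ≤ j ≤ n and 1 ≤ a ≤ A, such that for each j and a the core direction v_{j,a} of T_{j,a} satisfies ‖v_{j,a} − e_j‖ ≤ (100 n)^{-1}, where e_j is the j-th standard basis vector (i.e. each T_{j,a} runs nearly parallel to the x_j-axis). Let I := ⋂_{j=1}^n [ ⋃_{a=1}^A T_{j,a} ] be the set of points belonging to at least one cylinder in each direction. Then the Lebesgue measure of I satisfies Vol(I) ≤ C(n) A^{n/(n-1)}, where C(n) is a constant depending only on n. -/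
open MeasureTheory
open scoped ENNReal

namespace BU
open Finsupp

abbrev Ch (E : Type*) := List E →₀ ZMod 2

section basic
variable {E : Type*}

lemma Ch.add_self (c : Ch E) : c + c = 0 := by
  ext l; simp [CharTwo.add_self_eq_zero]

noncomputable def cone (v : E) : Ch E →ₗ[ZMod 2] Ch E :=
  Finsupp.lmapDomain _ _ (List.cons v)

lemma cone_single (v : E) (l : List E) (a : ZMod 2) :
    cone v (single l a) = single (v :: l) a := by
  simp [cone, Finsupp.mapDomain_single]

noncomputable def bdL : List E → Ch E
  | [] => 0
  | v :: l => single l 1 + cone v (bdL l)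

noncomputable def bd : Ch E →ₗ[ZMod 2] Ch E := Finsupp.linearCombination (ZMod 2) bdL

lemma bd_single (l : List E) : bd (single l 1) = bdL l := by simp [bd]

lemma lin_ext {M : Type*} [AddCommMonoid M] [Module (ZMod 2) M] {f g : Ch E →ₗ[ZMod 2] M}
    (h : ∀ l, f (single l 1) = g (single l 1)) : f = g := by
  apply Finsupp.lhom_ext'
  intro l
  apply LinearMap.ext_ring
  simpa using h l

lemma bd_cone (v : E) (c : Ch E) : bd (cone v c) = c + cone v (bd c) := by
  have : bd ∘ₗ cone v = LinearMap.id + cone v ∘ₗ bd := by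
    apply lin_ext; intro l
    simp [cone_single, bd_single, bdL]
  exact congrArg (fun f => f c) this

lemma bd_bdL (l : List E) : bd (bdL l) = 0 := by
  induction l with
  | nil => simp [bdL]
  | cons v l ih =>
    simp [bdL, bd_cone, ih, bd_single, Ch.add_self]

lemma bd_bd (c : Ch E) : bd (bd c) = 0 := by
  have : bd ∘ₗ bd = (0 : Ch E →ₗ[ZMod 2] Ch E) := by
    apply lin_ext; intro l
    simp [bd_single, bd_bdL]
  exact congrArg (fun f => f c) this

/-- functional -/
noncomputable def ev (F : List E → ZMod 2) : Ch E →ₗ[ZMod 2] ZMod 2 :=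
  Finsupp.linearCombination (ZMod 2) F

lemma ev_single (F : List E → ZMod 2) (l : List E) : ev F (single l 1) = F l := by simp [ev]

def dL : (List E → ZMod 2) → List E → ZMod 2
  | _, [] => 0
  | F, v :: l => F l + dL (fun l' => F (v :: l')) l

lemma ev_cone (F : List E → ZMod 2) (v : E) (c : Ch E) :
    ev F (cone v c) = ev (fun l => F (v :: l)) c := by
  have : ev F ∘ₗ cone v = ev (fun l => F (v :: l)) := by
    apply lin_ext; intro l
    simp [cone_single, ev_single]
  exact congrArg (fun f => f c) this

lemma ev_bdL (F : List E → ZMod 2) (l : List E) : ev F (bdL l) = dL F l := by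
  induction l generalizing F with
  | nil => simp [bdL, dL]
  | cons v l ih => simp [bdL, dL, ev_cone, ih, ev_single]

lemma dL_map {L : Type*} (g : E → L) (F : List L → ZMod 2) (l : List E) :
    dL (fun l => F (l.map g)) l = dL F (l.map g) := by
  induction l generalizing F with
  | nil => simp [dL]
  | cons v l ih => 
    simp only [dL, List.map_cons]
    rw [← ih]

lemma dL_congr (F G : List E → ZMod 2) (l : List E) (h : ∀ l', l'.Sublist l → F l' = G l') :
    dL F l = dL G l := by
  induction l generalizing F G with
  | nil => simp [dL]
  | cons v l ih => 
    simp only [dL]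
    rw [h l (List.sublist_cons_self v l), ih]
    intro l' hl'
    exact h _ (hl'.cons_cons v)

lemma dL_multiset [DecidableEq E] (F : Multiset E → ZMod 2) (l : List E) :
    dL (fun l => F (l : Multiset E)) l = ((l : Multiset E).map (fun x => F ((l : Multiset E).erase x))).sum := by
  induction l generalizing F with
  | nil => simp [dL]
  | cons v l ih => 
    simp only [dL]
    have := ih (fun m => F (v ::ₘ m))
    simp only [Multiset.cons_coe] at this
    rw [this, ← Multiset.cons_coe, Multiset.map_cons, Multiset.sum_cons, Multiset.erase_cons_head]
    congr 2
    apply Multiset.map_congr rfl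
    intro x hx
    rw [Multiset.erase_cons_tail_of_mem hx]

lemma dL_perm (F : Multiset E → ZMod 2) {l l' : List E} (h : l.Perm l') :
    dL (fun l => F (l : Multiset E)) l = dL (fun l => F (l : Multiset E)) l' := by
  classical
  rw [dL_multiset, dL_multiset, Multiset.coe_eq_coe.mpr h]

def alt : Bool → List Bool → ZMod 2
  | _, [] => 1
  | s, x :: l => if x = s then alt (!s) l else 0

lemma alt_dL (s : Bool) (l : List Bool) : dL (alt s) l = alt s l + alt (!s) l := by
  induction l generalizing s with
  | nil => simp [dL, alt]; decide
  | cons v l ih =>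
    simp only [dL, alt]
    by_cases hv : v = s
    · simp only [hv, if_true]
      rw [ih]; simp
      rw [← add_assoc, add_right_comm, CharTwo.add_self_eq_zero, zero_add]
    · have h2 : v = !s := by cases v <;> cases s <;> simp_all
      have : ∀ l : List Bool, dL (fun _ => (0 : ZMod 2)) l = 0 := by
        intro l; induction l with
        | nil => rfl
        | cons v l ih => simp [dL, ih]
      simp [h2, this]

lemma alt_map_not (s : Bool) (l : List Bool) : alt s (l.map not) = alt (!s) l := by
  induction l generalizing s with
  | nil => rfl
  | cons v l ih =>
    simp only [List.map_cons, alt, ih]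
    cases v <;> cases s <;> simp

abbrev Lb := ℕ ×ₗ Bool

def sg (x : Lb) : Bool := (ofLex x).2
def mg (x : Lb) : ℕ := (ofLex x).1
def ng (x : Lb) : Lb := toLex (mg x, !(sg x))

def NC (l : List Lb) : Prop := ∀ x ∈ l, ∀ y ∈ l, mg x = mg y → sg x = sg y

def alM (m : Multiset Lb) : ZMod 2 := alt true ((m.sort (· ≤ ·)).map sg)

lemma sort_map_ng (l : List Lb) (h : NC l) :
    ((l.map ng : List Lb) : Multiset Lb).sort (· ≤ ·) = ((l : Multiset Lb).sort (· ≤ ·)).map ng := by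
  have hp : ((l : Multiset Lb).sort (· ≤ ·)).Perm l := Multiset.coe_eq_coe.mp (Multiset.sort_eq _ _)
  apply List.Perm.eq_of_pairwise' (r := (· ≤ ·))
  · exact Multiset.pairwise_sort _ _
  · rw [List.pairwise_map]
    refine List.Pairwise.imp_of_mem ?_ (Multiset.pairwise_sort (l : Multiset Lb) (· ≤ ·))
    intro a b ha hb hab
    have ha' := hp.mem_iff.mp ha
    have hb' := hp.mem_iff.mp hb
    have := h a ha' b hb'
    rw [Prod.Lex.le_iff] at hab ⊢
    rcases hab with hab | hab
    · left; exact hab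
    · right; exact ⟨hab.1, by simp only [ng, ofLex_toLex]; rw [this hab.1]⟩
  · refine (Multiset.coe_eq_coe.mp (Multiset.sort_eq _ _)).trans ?_
    exact (hp.map ng).symm

lemma alM_key (l : List Lb) (h : NC l) :
    dL (fun l => alM (l : Multiset Lb)) l = alM (l : Multiset Lb) + alM ((l.map ng : List Lb) : Multiset Lb) := by
  have hp : ((l : Multiset Lb).sort (· ≤ ·)).Perm l := Multiset.coe_eq_coe.mp (Multiset.sort_eq _ _)
  rw [← dL_perm _ hp]
  rw [dL_congr _ (fun l => alt true (l.map sg))]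
  · rw [dL_map, alt_dL]
    congr 1
    rw [alM, sort_map_ng l h, List.map_map]
    rw [show sg ∘ ng = not ∘ sg from rfl, ← List.map_map, alt_map_not]
  · intro l' hl'
    rw [alM]
    congr 2
    apply List.Perm.eq_of_pairwise' (r := (· ≤ ·))
    · exact Multiset.pairwise_sort _ _
    · exact (Multiset.pairwise_sort _ _).sublist hl'
    · exact Multiset.coe_eq_coe.mp (Multiset.sort_eq _ _)

lemma alt_chain (s : Bool) (t : List Lb) (hs : t.Pairwise (· ≤ ·)) (h : NC t)
    (ha : alt s (t.map sg) ≠ 0) : t.IsChain (fun a b => mg a < mg b) := by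
  induction t generalizing s with
  | nil => simp
  | cons x t ih =>
    simp only [List.map_cons, alt] at ha
    have hx : sg x = s := by by_contra hc; simp [hc] at ha
    simp only [hx, if_true] at ha
    have h1 := ih (!s) hs.of_cons (fun a ha b hb => h a (List.mem_cons_of_mem _ ha) b (List.mem_cons_of_mem _ hb)) ha
    cases t with
    | nil => simp
    | cons y t =>
      rw [List.isChain_cons_cons]
      refine ⟨?_, h1⟩
      simp only [List.map_cons, alt] at ha
      have hy : sg y = !s := by by_contra hc; simp [hc] at ha
      have hxy : x ≤ y := by
        rw [List.pairwise_cons] at hs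
        exact hs.1 y (by simp)
      rw [Prod.Lex.le_iff] at hxy
      rcases hxy with h2 | h2
      · exact h2
      · exfalso
        have := h x (by simp) y (by simp) h2.1
        rw [hx, hy] at this
        simp at this

lemma alM_zero (n : ℕ) (l : List Lb) (h : NC l) (hm : ∀ x ∈ l, mg x < n) (hl : n < l.length) :
    alM (l : Multiset Lb) = 0 := by
  by_contra hc
  have hp : ((l : Multiset Lb).sort (· ≤ ·)).Perm l := Multiset.coe_eq_coe.mp (Multiset.sort_eq _ _)
  have := alt_chain true _ (Multiset.pairwise_sort _ _) (fun a ha b hb => h a (hp.mem_iff.mp ha) b (hp.mem_iff.mp hb)) hc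
  have h2 : ((((l : Multiset Lb).sort (· ≤ ·))).map mg).IsChain (· < ·) := by
    rw [List.isChain_map]; exact this
  have h3 := (List.isChain_iff_pairwise.mp h2).nodup
  have h4 : ((((l : Multiset Lb).sort (· ≤ ·))).map mg) ⊆ List.range n := by
    intro x hx
    rw [List.mem_map] at hx
    obtain ⟨y, hy, rfl⟩ := hx
    exact List.mem_range.mpr (hm y (hp.mem_iff.mp hy))
  have h5 := (List.subperm_of_subset h3 h4).length_le
  rw [List.length_map, hp.length_eq, List.length_range] at h5
  omega

end basic
end BU

set_option linter.unusedSectionVars false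
namespace BU
open Finsupp

section sdsec
variable {E : Type*} [NormedAddCommGroup E] [NormedSpace ℝ E]

noncomputable def nm : Ch E →ₗ[ZMod 2] Ch E :=
  Finsupp.lmapDomain _ _ (List.map Neg.neg)

lemma nm_single (l : List E) (a : ZMod 2) :
    nm (single l a) = single (l.map Neg.neg) a := by
  simp [nm, Finsupp.mapDomain_single]

lemma nm_cone (v : E) (c : Ch E) : nm (cone v c) = cone (-v) (nm c) := by
  have : nm ∘ₗ cone v = cone (-v) ∘ₗ nm := by
    apply lin_ext; intro l
    simp [cone_single, nm_single]
  exact congrArg (fun f => f c) this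

lemma nm_nm (c : Ch E) : nm (nm c) = c := by
  have : nm ∘ₗ nm = (LinearMap.id : Ch E →ₗ[ZMod 2] Ch E) := by
    apply lin_ext; intro l
    simp [nm_single]
  exact congrArg (fun f => f c) this

lemma nm_bdL (l : List E) : nm (bdL l) = bdL (l.map Neg.neg) := by
  induction l with
  | nil => simp [bdL]
  | cons v l ih => simp [bdL, nm_cone, ih, nm_single]

lemma nm_bd (c : Ch E) : nm (bd c) = bd (nm c) := by
  have : nm ∘ₗ bd = bd ∘ₗ (nm : Ch E →ₗ[ZMod 2] Ch E) := by
    apply lin_ext; intro l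
    simp [nm_single, bd_single, nm_bdL]
  exact congrArg (fun f => f c) this

noncomputable def bary (l : List E) : E := (l.length : ℝ)⁻¹ • l.sum

lemma bary_neg (l : List E) : bary (l.map Neg.neg) = - bary l := by
  have : (l.map Neg.neg).sum = - l.sum := by
    induction l with
    | nil => simp
    | cons v l ih => simp only [List.map_cons, List.sum_cons, ih]; abel
  simp [bary, this]

noncomputable def sd : ℕ → (Ch E →ₗ[ZMod 2] Ch E)
  | 0 => LinearMap.id
  | k + 1 => Finsupp.linearCombination (ZMod 2) (fun l => cone (bary l) (sd k (bdL l)))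

lemma sd_single (k : ℕ) (l : List E) :
    sd (k+1) (single l 1) = cone (bary l) (sd k (bdL l)) := by simp [sd]

lemma bd_sd (k : ℕ) (c : Ch E) : bd (sd (k+1) c) = sd k (bd c) := by
  induction k generalizing c with
  | zero =>
    have : bd ∘ₗ sd 1 = sd 0 ∘ₗ (bd : Ch E →ₗ[ZMod 2] Ch E) := by
      apply lin_ext; intro l
      simp only [LinearMap.comp_apply, sd_single, bd_cone, bd_single]
      simp [sd, bd_bdL]
    exact congrArg (fun f => f c) this
  | succ k ih =>
    have : bd ∘ₗ sd (k+1+1) = sd (k+1) ∘ₗ (bd : Ch E →ₗ[ZMod 2] Ch E) := by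
      apply lin_ext; intro l
      simp only [LinearMap.comp_apply, sd_single (k+1), bd_cone, bd_single, ih, bd_bdL]
      simp
    exact congrArg (fun f => f c) this

lemma nm_sd (k : ℕ) (c : Ch E) : nm (sd k c) = sd k (nm c) := by
  induction k generalizing c with
  | zero => simp [sd]
  | succ k ih =>
    have : nm ∘ₗ sd (k+1) = sd (k+1) ∘ₗ (nm : Ch E →ₗ[ZMod 2] Ch E) := by
      apply lin_ext; intro l
      simp only [LinearMap.comp_apply, sd_single, nm_cone, nm_single, ih, nm_bdL, bary_neg]
    exact congrArg (fun f => f c) this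

/-- iterated subdivision -/
noncomputable def sdi (m k : ℕ) (c : Ch E) : Ch E := (sd k)^[m] c

lemma sdi_add (m k : ℕ) (c d : Ch E) : sdi m k (c + d) = sdi m k c + sdi m k d := by
  induction m with
  | zero => rfl
  | succ m ih => simp only [sdi, Function.iterate_succ_apply'] at ih ⊢; rw [ih, map_add]

lemma bd_sdi (m k : ℕ) (c : Ch E) : bd (sdi m (k+1) c) = sdi m k (bd c) := by
  induction m with
  | zero => rfl
  | succ m ih => simp only [sdi, Function.iterate_succ_apply'] at ih ⊢; rw [bd_sd, ih]

lemma nm_sdi (m k : ℕ) (c : Ch E) : nm (sdi m k c) = sdi m k (nm c) := by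
  induction m with
  | zero => rfl
  | succ m ih => simp only [sdi, Function.iterate_succ_apply'] at ih ⊢; rw [nm_sd, ih]

lemma sdi_zero (m : ℕ) (c : Ch E) : sdi m 0 c = c := by
  induction m with
  | zero => rfl
  | succ m ih => simp only [sdi, Function.iterate_succ_apply'] at ih ⊢; rw [ih]; rfl

abbrev sup (S : Set (List E)) : Submodule (ZMod 2) (Ch E) := Finsupp.supported (ZMod 2) (ZMod 2) S

lemma map_sup {S T : Set (List E)} (f : Ch E →ₗ[ZMod 2] Ch E)
    (h : ∀ l ∈ S, f (single l 1) ∈ sup T) {c : Ch E} (hc : c ∈ sup S) : f c ∈ sup T := by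
  have : sup S ≤ (sup T).comap f := by
    rw [sup, Finsupp.supported_eq_span_single, Submodule.span_le]
    rintro _ ⟨l, hl, rfl⟩
    exact h l hl
  exact this hc

lemma single_sup {S : Set (List E)} {l : List E} (h : l ∈ S) : (single l 1 : Ch E) ∈ sup S :=
  Finsupp.single_mem_supported _ _ h

lemma sup_mono {S T : Set (List E)} (h : S ⊆ T) {c : Ch E} (hc : c ∈ sup S) : c ∈ sup T :=
  Finsupp.supported_mono h hc

lemma cone_sup {S T : Set (List E)} (v : E) 
    (h : ∀ l ∈ S, v :: l ∈ T) {c : Ch E} (hc : c ∈ sup S) : cone v c ∈ sup T := 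
  map_sup _ (fun l hl => by rw [cone_single]; exact single_sup (h l hl)) hc

lemma bdL_sup (l : List E) : bdL l ∈ sup {l' : List E | l'.length + 1 = l.length ∧ ∀ x ∈ l', x ∈ l} := by
  induction l with
  | nil => simp [bdL]
  | cons v l ih =>
    simp only [bdL]
    apply Submodule.add_mem
    · apply single_sup
      simp; tauto
    · refine cone_sup v ?_ ih
      rintro l' ⟨h1, h2⟩
      simp [h1]
      tauto

lemma bary_dist (n : ℕ) (l : List E) (hl : l.length ≤ n + 1) (D : ℝ) (hD : 0 ≤ D)
    (h : ∀ x ∈ l, ∀ y ∈ l, ‖x - y‖ ≤ D) (v : E) (hv : v ∈ l) :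
    ‖bary l - v‖ ≤ (n / (n+1) : ℝ) * D := by
  have hpos : 0 < l.length := List.length_pos_of_mem hv
  have key : ∀ t : List E, (∀ x ∈ t, x ∈ l) → ‖t.sum - (t.length : ℝ) • v‖ ≤ t.length * D := by
    intro t
    induction t with
    | nil => simp
    | cons x t ih =>
      intro ht
      have h1 := ih (fun y hy => ht y (List.mem_cons_of_mem _ hy))
      have h2 := h x (ht x (by simp)) v hv
      have : (x :: t).sum - ((x::t).length : ℝ) • v = (x - v) + (t.sum - (t.length : ℝ) • v) := by
        simp [add_smul]; abel
      rw [this]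
      refine (norm_add_le _ _).trans ?_
      push_cast [List.length_cons]
      linarith
  obtain ⟨s, t, rfl⟩ := List.append_of_mem hv
  have hst := key (s ++ t) (fun x hx => by simp at hx ⊢; tauto)
  set L := (s ++ v :: t).length with hL
  have hLl : (L : ℝ) = ((s ++ t).length : ℝ) + 1 := by rw [hL]; simp; ring
  have hLpos : (0 : ℝ) < L := by exact_mod_cast hpos
  have e : bary (s ++ v :: t) - v = (L : ℝ)⁻¹ • ((s ++ t).sum - ((s++t).length : ℝ) • v) := by
    rw [bary, ← hL]
    have : (s ++ v :: t).sum = v + (s++t).sum := by simp; abel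
    rw [this, eq_sub_of_add_eq hLl.symm, sub_smul, one_smul]
    have h3 : v = (L : ℝ)⁻¹ • (L : ℝ) • v := by rw [smul_smul, inv_mul_cancel₀ hLpos.ne', one_smul]
    nth_rewrite 2 [h3]
    rw [← smul_sub]; congr 1; abel
  rw [e, norm_smul, norm_inv, Real.norm_natCast]
  have : (L : ℝ) ≤ n + 1 := by exact_mod_cast hl
  calc (L : ℝ)⁻¹ * _ ≤ (L : ℝ)⁻¹ * (((s ++ t).length : ℝ) * D) := by gcongr
    _ = (((L : ℝ) - 1) / L) * D := by rw [hLl]; field_simp; ring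
    _ ≤ _ := by
      refine mul_le_mul_of_nonneg_right ?_ hD
      rw [div_le_div_iff₀ hLpos (by positivity)]
      nlinarith

lemma bary_mem (K : Set E) (hK : Convex ℝ K) (l : List E) (hl : l ≠ []) (h : ∀ x ∈ l, x ∈ K) :
    bary l ∈ K := by
  classical
  have hpos : 0 < l.length := List.length_pos_iff.mpr hl
  have : bary l = ∑ i : Fin l.length, (l.length : ℝ)⁻¹ • l.get i := by
    rw [bary, ← Finset.smul_sum]
    congr 1
    simp
  rw [this]
  apply hK.sum_mem
  · intros; positivity
  · simp; field_simp
  · intro i _; exact h _ (List.get_mem _ _)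

lemma sd_mesh (n k : ℕ) (hk : k ≤ n + 1) (l : List E) (hl : l.length = k) (D : ℝ) (hD : 0 ≤ D)
    (h : ∀ x ∈ l, ∀ y ∈ l, ‖x - y‖ ≤ D) :
    sd k (single l 1) ∈ sup {l' : List E | l'.length = k ∧ (∀ x ∈ l', x ∈ convexHull ℝ {y | y ∈ l}) ∧
      ∀ x ∈ l', ∀ y ∈ l', ‖x - y‖ ≤ (n / (n+1) : ℝ) * D} := by
  induction k generalizing l with
  | zero =>
    simp only [sd, LinearMap.id_apply]
    apply single_sup
    have : l = [] := List.length_eq_zero_iff.mp hl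
    simp [this]
  | succ k ih =>
    have hne : l ≠ [] := by rintro rfl; simp at hl
    rw [sd_single]
    have h1 : sd k (bdL l) ∈ sup {l' : List E | l'.length = k ∧ (∀ x ∈ l', x ∈ convexHull ℝ {y | y ∈ l}) ∧
      ∀ x ∈ l', ∀ y ∈ l', ‖x - y‖ ≤ (n / (n+1) : ℝ) * D} := by
      refine map_sup _ ?_ (bdL_sup l)
      rintro l' ⟨h2, h3⟩
      refine sup_mono ?_ (ih (by omega) l' (by omega) (fun x hx y hy => h x (h3 x hx) y (h3 y hy)))
      rintro l'' ⟨h4, h5, h6⟩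
      refine ⟨h4, fun x hx => ?_, h6⟩
      exact convexHull_mono (fun y hy => h3 y hy) (h5 x hx)
    refine cone_sup _ ?_ h1
    rintro l' ⟨h2, h3, h4⟩
    have hb : ∀ x ∈ l', ‖bary l - x‖ ≤ (n / (n+1) : ℝ) * D := by
      intro x hx
      have : convexHull ℝ {y | y ∈ l} ⊆ Metric.closedBall (bary l) ((n / (n+1) : ℝ) * D) := by
        apply convexHull_min _ (convex_closedBall _ _)
        intro y hy
        rw [mem_closedBall_iff_norm']
        exact bary_dist n l (by omega) D hD h y hy
      exact mem_closedBall_iff_norm'.mp (this (h3 x hx))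
    refine ⟨by simp [h2], ?_, ?_⟩
    · intro x hx
      rcases List.mem_cons.mp hx with rfl | hx
      · exact bary_mem _ (convex_convexHull ℝ _) l hne (fun x hx => subset_convexHull ℝ _ hx)
      · exact h3 x hx
    · intro x hx y hy
      rcases List.mem_cons.mp hx with rfl | hx <;> rcases List.mem_cons.mp hy with rfl | hy
      · simp; positivity
      · exact hb y hy
      · rw [norm_sub_rev]; exact hb x hx
      · exact h4 x hx y hy

end sdsec

section coarse
variable {N : ℕ}

def Face (s : Fin N → ℝ) : Set (Fin N → ℝ) := {x | (∀ i, |x i| ≤ 1) ∧ ∑ i, s i * x i = 1}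

lemma Face_convex (s : Fin N → ℝ) : Convex ℝ (Face s) := by
  intro x hx y hy a b ha hb hab
  refine ⟨fun i => ?_, ?_⟩
  · have h1 := abs_le.mp (hx.1 i)
    have h2 := abs_le.mp (hy.1 i)
    simp only [Pi.add_apply, Pi.smul_apply, smul_eq_mul]
    rw [abs_le]
    constructor <;> nlinarith
  · simp only [Pi.add_apply, Pi.smul_apply, smul_eq_mul, mul_add, Finset.sum_add_distrib]
    have e1 : ∑ i, s i * (a * x i) = a * ∑ i, s i * x i := by
      rw [Finset.mul_sum]; exact Finset.sum_congr rfl (fun i _ => by ring)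
    have e2 : ∑ i, s i * (b * y i) = b * ∑ i, s i * y i := by
      rw [Finset.mul_sum]; exact Finset.sum_congr rfl (fun i _ => by ring)
    rw [e1, e2, hx.2, hy.2]; linarith

def SS (k : ℕ) (D : ℝ) : Set (List (Fin N → ℝ)) :=
  {l | l.length = k ∧ (∃ s : Fin N → ℝ, (∀ i, |s i| ≤ 1) ∧ ∀ x ∈ l, x ∈ Face s) ∧
    ∀ x ∈ l, ∀ y ∈ l, ‖x - y‖ ≤ D}

lemma sd_SS (k n : ℕ) (hk : k ≤ n + 1) (D : ℝ) (hD : 0 ≤ D) {c : Ch (Fin N → ℝ)} (hc : c ∈ sup (SS k D)) :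
    sd k c ∈ sup (SS k ((n / (n+1) : ℝ) * D)) := by
  refine map_sup _ ?_ hc
  rintro l ⟨h1, ⟨s, hs, h2⟩, h3⟩
  refine sup_mono ?_ (sd_mesh n k hk l h1 D hD h3)
  rintro l' ⟨h4, h5, h6⟩
  refine ⟨h4, ⟨s, hs, fun x hx => ?_⟩, h6⟩
  exact convexHull_min (fun y hy => h2 y hy) (Face_convex s) (h5 x hx)

lemma sdi_SS (k n m : ℕ) (hk : k ≤ n + 1) (D : ℝ) (hD : 0 ≤ D) {c : Ch (Fin N → ℝ)} (hc : c ∈ sup (SS k D)) :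
    sdi m k c ∈ sup (SS k ((n / (n+1) : ℝ)^m * D)) := by
  induction m with
  | zero => simpa [sdi] using hc
  | succ m ih =>
    simp only [sdi, Function.iterate_succ_apply'] at ih ⊢
    have := sd_SS k n hk _ (by positivity) ih
    rwa [← mul_assoc, ← pow_succ'] at this

def eb (k : ℕ) : Fin N → ℝ := fun i => if i.val = k then 1 else 0

noncomputable def zz : ℕ → Ch (Fin N → ℝ)
  | 0 => single [] 1
  | k + 1 => cone (eb k) (zz k) + nm (cone (eb k) (zz k))

lemma nm_zz (k : ℕ) : nm (zz k : Ch (Fin N → ℝ)) = zz k := by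
  cases k with
  | zero => simp [zz, nm_single]
  | succ k => simp only [zz, map_add, nm_nm]; rw [add_comm]

lemma bd_zz_aux (k : ℕ) : bd (zz k : Ch (Fin N → ℝ)) = 0 := by
  induction k with
  | zero => simp [zz, bd_single, bdL]
  | succ k ih =>
    simp only [zz, map_add, ← nm_bd, bd_cone, ih]
    simp [nm_zz, Ch.add_self]

lemma bd_cone_zz (k : ℕ) : bd (cone (eb k) (zz k) : Ch (Fin N → ℝ)) = zz k := by
  simp [bd_cone, bd_zz_aux]

def CS (k : ℕ) : Set (List (Fin N → ℝ)) :=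
  {l | l.length = k ∧ ∃ s : Fin N → ℝ, (∀ i, |s i| ≤ 1) ∧ ∀ x ∈ l, x ∈ Face s ∧ ∀ i, k ≤ i.val → x i = 0}

lemma cone_CS (k : ℕ) (hk : k < N) {c : Ch (Fin N → ℝ)} (hc : c ∈ sup (CS k)) :
    cone (eb k) c ∈ sup (CS (k+1)) := by
  refine cone_sup _ ?_ hc
  rintro l ⟨h1, s, hs, h2⟩
  refine ⟨by simp [h1], fun i => if i.val = k then 1 else s i, ?_, ?_⟩
  · intro i
    dsimp only
    split_ifs
    · simp
    · exact hs i
  · intro x hx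
    rcases List.mem_cons.mp hx with rfl | hx
    · refine ⟨⟨fun i => ?_, ?_⟩, fun i hi => ?_⟩
      · simp only [eb]; split_ifs <;> simp
      · rw [Finset.sum_eq_single (⟨k, hk⟩ : Fin N)]
        · simp [eb]
        · intro b _ hb
          have : b.val ≠ k := fun h => hb (Fin.ext h)
          simp [eb, this]
        · simp
      · simp [eb]; omega
    · obtain ⟨⟨h3, h4⟩, h5⟩ := h2 x hx
      refine ⟨⟨h3, ?_⟩, fun i hi => h5 i (by omega)⟩
      rw [← h4]
      apply Finset.sum_congr rfl
      intro i _
      dsimp only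
      split_ifs with h
      · rw [h5 i (by omega)]; simp
      · rfl

lemma nm_CS (k : ℕ) {c : Ch (Fin N → ℝ)} (hc : c ∈ sup (CS k)) : nm c ∈ sup (CS k) := by
  refine map_sup _ ?_ hc
  rintro l ⟨h1, s, hs, h2⟩
  rw [nm_single]
  apply single_sup
  refine ⟨by simp [h1], -s, by simpa using hs, ?_⟩
  intro x hx
  rw [List.mem_map] at hx
  obtain ⟨y, hy, rfl⟩ := hx
  obtain ⟨⟨h3, h4⟩, h5⟩ := h2 y hy
  refine ⟨⟨by simpa using h3, by simpa using h4⟩, fun i hi => by simp [h5 i hi]⟩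

lemma zz_CS (k : ℕ) (hk : k ≤ N) : (zz k : Ch (Fin N → ℝ)) ∈ sup (CS k) := by
  induction k with
  | zero => 
    apply single_sup
    exact ⟨rfl, 0, by simp, by simp⟩
  | succ k ih =>
    have := cone_CS k (by omega) (ih (by omega))
    exact Submodule.add_mem _ this (nm_CS _ this)

lemma CS_SS (k : ℕ) : (CS k : Set (List (Fin N → ℝ))) ⊆ SS k 2 := by
  rintro l ⟨h1, s, hs, h2⟩
  refine ⟨h1, ⟨s, hs, fun x hx => (h2 x hx).1⟩, fun x hx y hy => ?_⟩
  rw [pi_norm_le_iff_of_nonneg (by norm_num)]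
  intro i
  have h3 := abs_le.mp ((h2 x hx).1.1 i)
  have h4 := abs_le.mp ((h2 y hy).1.1 i)
  rw [Pi.sub_apply, Real.norm_eq_abs, abs_le]
  constructor <;> linarith

/-- Tucker-type lemma. -/
lemma tucker (m : ℕ) (lab : (Fin N → ℝ) → Lb)
    (hodd : ∀ l : List (Fin N → ℝ), ∀ k ≤ N, l ∈ SS k ((N / (N+1) : ℝ)^m * 2) → ∀ x ∈ l, lab (-x) = ng (lab x))
    (hnc : ∀ l : List (Fin N → ℝ), ∀ k ≤ N, l ∈ SS k ((N / (N+1) : ℝ)^m * 2) → NC (l.map lab))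
    (hmg : ∀ x, mg (lab x) + 1 < N) (hN : 0 < N) : False := by
  set F : List (Fin N → ℝ) → ZMod 2 := fun l => alM ((l.map lab : List Lb) : Multiset Lb) with hF
  have ev_eq : ∀ (k : ℕ), k ≤ N → ∀ (f g : Ch (Fin N → ℝ) →ₗ[ZMod 2] ZMod 2) ,
      (∀ l ∈ SS k ((N / (N+1) : ℝ)^m * 2), f (single l 1) = g (single l 1)) →
      ∀ c ∈ sup (SS k ((N / (N+1) : ℝ)^m * 2)), f c = g c := by
    intro k hk f g h c hc
    have : sup (SS k ((N / (N+1) : ℝ)^m * 2)) ≤ LinearMap.eqLocus f g := by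
      rw [sup, Finsupp.supported_eq_span_single, Submodule.span_le]
      rintro _ ⟨l, hl, rfl⟩
      exact h l hl
    exact this hc
  have main : ∀ k ≤ N, ev F (sdi m k (zz k)) = 1 := by
    intro k hk
    induction k with
    | zero =>
      rw [sdi_zero]
      simp only [zz, ev_single, hF]
      simp [alM, alt]
    | succ k ih =>
      have h1 : sdi m (k+1) (cone (eb k) (zz k)) ∈ sup (SS (k+1) ((N / (N+1) : ℝ)^m * 2)) :=
        sdi_SS (k+1) N m (by omega) 2 (by norm_num)
          (sup_mono (CS_SS _) (cone_CS k (Nat.lt_of_succ_le hk) (zz_CS k (Nat.le_of_succ_le hk))))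
      rw [zz, sdi_add, ← nm_sdi, map_add]
      have h2 := ev_eq (k+1) hk (ev F ∘ₗ bd) (ev F + ev F ∘ₗ nm) (by
        intro l hl
        simp only [LinearMap.comp_apply, LinearMap.add_apply, bd_single, nm_single, ev_single, ev_bdL, hF]
        rw [dL_map lab (fun l => alM (l : Multiset Lb)), alM_key _ (hnc l (k+1) hk hl)]
        congr 3
        rw [List.map_map, List.map_map]
        apply List.map_congr_left
        intro x hx
        simp only [Function.comp]
        rw [hodd l _ hk hl x hx]) _ h1
      simp only [LinearMap.comp_apply, LinearMap.add_apply] at h2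
      rw [← h2, bd_sdi, bd_cone_zz]
      exact ih (by omega)
  have h1 := main N le_rfl
  have h2 := ev_eq N le_rfl (ev F) 0 (by
    intro l hl
    simp only [ev_single, hF, LinearMap.zero_apply]
    refine alM_zero (N-1) _ (hnc l N le_rfl hl) ?_ ?_
    · intro x hx
      rw [List.mem_map] at hx
      obtain ⟨y, hy, rfl⟩ := hx
      have := hmg y; omega
    · rw [List.length_map, hl.1]; omega) (sdi m N (zz N)) 
      (sdi_SS N N m (by omega) 2 (by norm_num) (sup_mono (CS_SS _) (zz_CS N le_rfl)))
  rw [h1] at h2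
  simp at h2

end coarse
end BU

namespace BU

theorem borsuk_ulam (N : ℕ) (f : (Fin (N+1) → ℝ) → (Fin N → ℝ)) (hodd : ∀ x, f (-x) = - f x)
    (hcont : ∀ x, x ≠ 0 → ContinuousAt f x) : ∃ x, x ≠ 0 ∧ f x = 0 := by
  rcases Nat.eq_zero_or_pos N with h0 | hN
  · subst h0
    refine ⟨fun _ => 1, ?_, Subsingleton.elim _ _⟩
    intro h
    have := congrFun h 0
    simp at this
  by_contra hcon
  push Not at hcon
  have : Nonempty (Fin N) := ⟨⟨0, hN⟩⟩
  set K : Set (Fin (N+1) → ℝ) := {x | (∀ i, |x i| ≤ 1) ∧ 1 ≤ ∑ i, |x i|} with hK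
  have hKc : IsCompact K := by
    have hb : IsCompact (Metric.closedBall (0 : Fin (N+1) → ℝ) 1) := isCompact_closedBall _ _
    refine hb.of_isClosed_subset ?_ ?_
    · have e : K = (⋂ i, {x : Fin (N+1) → ℝ | |x i| ≤ 1}) ∩ {x | 1 ≤ ∑ i, |x i|} := by
        ext x; simp [hK]
      rw [e]
      apply IsClosed.inter
      · exact isClosed_iInter (fun i => isClosed_le (by fun_prop) (by fun_prop))
      · exact isClosed_le (by fun_prop) (by fun_prop)
    · rintro x ⟨h1, _⟩
      rw [mem_closedBall_zero_iff, pi_norm_le_iff_of_nonneg (by norm_num)]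
      exact h1
  have hK0 : ∀ x ∈ K, x ≠ 0 := by
    rintro x ⟨_, h2⟩ rfl
    simp at h2
    linarith
  have hfK : ContinuousOn f K := fun x hx => (hcont x (hK0 x hx)).continuousWithinAt
  obtain ⟨δ, hδ, hδK⟩ : ∃ δ > 0, ∀ x ∈ K, δ ≤ ‖f x‖ := by
    rcases K.eq_empty_or_nonempty with he | hne
    · exact ⟨1, one_pos, by simp [he]⟩
    · obtain ⟨x0, hx0, hmin⟩ := hKc.exists_isMinOn hne hfK.norm
      exact ⟨‖f x0‖, norm_pos_iff.mpr (hcon x0 (hK0 x0 hx0)), fun x hx => hmin hx⟩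
  have huc := hKc.uniformContinuousOn_of_continuous hfK
  rw [Metric.uniformContinuousOn_iff] at huc
  obtain ⟨η, hη, hu⟩ := huc δ hδ
  have hmax : ∀ u : Fin N → ℝ, ∃ j, ∀ i, u i ≤ u j := fun u => Finite.exists_max u
  choose g hg using hmax
  have hgn : ∀ x, ‖f x‖ = |f x (g (fun i => |f x i|))| := by
    intro x
    apply le_antisymm
    · rw [pi_norm_le_iff_of_nonneg (abs_nonneg _)]
      intro i; exact hg (fun i => |f x i|) i
    · exact norm_le_pi_norm (f x) _
  set lab : (Fin (N+1) → ℝ) → Lb := fun x =>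
    toLex ((g (fun i => |f x i|)).val, decide (0 < f x (g (fun i => |f x i|)))) with hlab
  obtain ⟨m, hm⟩ : ∃ m : ℕ, (((N+1 : ℕ) : ℝ) / (((N+1 : ℕ) : ℝ)+1))^m < η / 2 := by
    apply exists_pow_lt_of_lt_one (by positivity)
    rw [div_lt_one (by positivity)]
    linarith
  have hSK : ∀ l : List (Fin (N+1) → ℝ), ∀ k D, l ∈ SS k D → ∀ x ∈ l, x ∈ K := by
    rintro l k D ⟨_, ⟨s, hs, h2⟩, _⟩ x hx
    obtain ⟨h3, h4⟩ := h2 x hx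
    refine ⟨h3, ?_⟩
    rw [← h4]
    apply Finset.sum_le_sum
    intro i _
    calc s i * x i ≤ |s i * x i| := le_abs_self _
      _ = |s i| * |x i| := abs_mul _ _
      _ ≤ 1 * |x i| := by gcongr; exact hs i
      _ = |x i| := one_mul _
  refine tucker m lab ?_ ?_ ?_ (Nat.succ_pos N)
  · intro l k hk hl x hx
    have hxK := hSK l _ _ hl x hx
    have h1 := hδK x hxK
    rw [hgn] at h1
    simp only [hlab, ng, mg, sg, ofLex_toLex, hodd, Pi.neg_apply, abs_neg]
    congr 2
    set t := f x (g (fun i => |f x i|))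
    have ht : t ≠ 0 := by rintro h; rw [h] at h1; simp at h1; linarith
    rcases lt_or_gt_of_ne ht with h | h
    · simp [h, h.le]
    · simp [h, h.le]
  · intro l k hk hl
    intro a ha b hb hab
    rw [List.mem_map] at ha hb
    obtain ⟨x, hx, rfl⟩ := ha
    obtain ⟨y, hy, rfl⟩ := hb
    have hxK := hSK l _ _ hl x hx
    have hyK := hSK l _ _ hl y hy
    have hd : dist x y < η := by
      rw [dist_eq_norm]
      have := hl.2.2 x hx y hy
      linarith
    have h2 := hu x hxK y hyK hd
    simp only [hlab, mg, sg, ofLex_toLex] at hab ⊢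
    have hab' := Fin.ext hab
    have h1x := hδK x hxK
    have h1y := hδK y hyK
    rw [hgn] at h1x h1y
    rw [← hab'] at h1y ⊢
    set j := g (fun i => |f x i|)
    have h3 : |f x j - f y j| < δ := by
      have := dist_le_pi_dist (f x) (f y) j
      rw [Real.dist_eq] at this
      linarith
    rw [abs_lt] at h3
    rw [decide_eq_decide]
    rcases le_abs.mp h1x with h | h <;> rcases le_abs.mp h1y with h' | h' <;> 
      constructor <;> intro <;> linarith
  · intro x
    simp only [hlab, mg, ofLex_toLex]
    have := (g (fun i => |f x i|)).isLt
    omega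

end BU

open MeasureTheory
namespace KA
open MvPolynomial Filter Topology

lemma null_zero (n : ℕ) (P : MvPolynomial (Fin n) ℝ) (hP : P ≠ 0) :
    ∀ᵐ x : Fin n → ℝ, eval x P ≠ 0 := by
  induction n with
  | zero =>
    refine ae_of_all _ (fun x hx => hP ?_)
    apply MvPolynomial.funext
    intro y
    rw [Subsingleton.elim y x, hx, map_zero]
  | succ n ih =>
    set q := (finSuccEquiv ℝ n P).leadingCoeff with hq
    have hq0 : q ≠ 0 := by
      rw [hq, Ne, Polynomial.leadingCoeff_eq_zero]
      exact fun h => hP ((finSuccEquiv ℝ n).map_eq_zero_iff.mp h)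
    have hmp := (volume_preserving_piFinSuccAbove (fun _ : Fin (n+1) => ℝ) 0)
    have hms : MeasurableSet {y : (Fin n → ℝ) × ℝ | ¬ eval (Fin.cons y.2 y.1 : Fin (n+1) → ℝ) P ≠ 0} := by
      simp only [not_not, ne_eq]
      apply IsClosed.measurableSet
      refine isClosed_eq ?_ continuous_const
      refine (MvPolynomial.continuous_eval P).comp ?_
      refine continuous_pi (fun i => ?_)
      refine Fin.cases ?_ (fun j => ?_) i
      · simpa using continuous_snd
      · simp only [Fin.cons_succ]
        exact (continuous_apply j).comp continuous_fst
    have key : ∀ᵐ y : (Fin n → ℝ) × ℝ, eval (Fin.cons y.2 y.1 : Fin (n+1) → ℝ) P ≠ 0 := by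
      rw [ae_iff]
      refine Measure.measure_prod_null_of_ae_null hms ?_
      filter_upwards [ih q hq0] with s hs
      set r := Polynomial.map (eval s) (finSuccEquiv ℝ n P) with hr
      have hr0 : r ≠ 0 := by
        intro h
        apply hs
        have := congrArg (fun p => Polynomial.coeff p (finSuccEquiv ℝ n P).natDegree) h
        simpa [hr, Polynomial.coeff_map] using this
      have : (Prod.mk s ⁻¹' {y : (Fin n → ℝ) × ℝ | ¬ eval (Fin.cons y.2 y.1 : Fin (n+1) → ℝ) P ≠ 0}) ⊆ {y | r.IsRoot y} := by
        intro y hy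
        simp only [Set.mem_preimage, Set.mem_ofPred_eq, not_not] at hy
        rw [eval_eq_eval_mv_eval'] at hy
        exact hy
      exact measure_mono_null this ((Polynomial.finite_setOfPred_isRoot hr0).measure_zero _)
    have hsw : MeasurePreserving (Prod.swap : ℝ × (Fin n → ℝ) → (Fin n → ℝ) × ℝ) volume volume :=
      Measure.measurePreserving_swap
    have h2 := (hsw.comp hmp).quasiMeasurePreserving.ae key
    filter_upwards [h2] with x hx
    have e : (Fin.cons (Prod.swap (MeasurableEquiv.piFinSuccAbove (fun _ : Fin (n+1) => ℝ) 0 x)).2 (Prod.swap (MeasurableEquiv.piFinSuccAbove (fun _ : Fin (n+1) => ℝ) 0 x)).1 : Fin (n+1) → ℝ) = x := by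
      ext i
      refine Fin.cases ?_ (fun j => ?_) i
      · rfl
      · rfl
    simp only [Function.comp] at hx
    rwa [e] at hx

abbrev EE (n : ℕ) := EuclideanSpace ℝ (Fin n)

noncomputable def ep {n : ℕ} (P : MvPolynomial (Fin n) ℝ) (x : EE n) : ℝ := eval (fun i => x i) P

lemma ep_cont {n : ℕ} (P : MvPolynomial (Fin n) ℝ) : Continuous (ep P) :=
  (MvPolynomial.continuous_eval P).comp (by fun_prop)

lemma ep_ae {n : ℕ} (P : MvPolynomial (Fin n) ℝ) (hP : P ≠ 0) : ∀ᵐ x : EE n, ep P x ≠ 0 :=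
  (PiLp.volume_preserving_ofLp (Fin n)).quasiMeasurePreserving.ae (null_zero n P hP)

noncomputable def lp {n : ℕ} (P : MvPolynomial (Fin n) ℝ) (z v : EE n) : Polynomial ℝ :=
  aeval (fun i => Polynomial.C (z i) + Polynomial.C (v i) * Polynomial.X) P

lemma lp_eval {n : ℕ} (P : MvPolynomial (Fin n) ℝ) (z v : EE n) (s : ℝ) :
    (lp P z v).eval s = ep P (z + s • v) := by
  rw [lp, ep, ← Polynomial.coe_evalRingHom, aeval_def, MvPolynomial.hom_eval₂, MvPolynomial.eval]
  show _ = eval₂ _ _ _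
  congr 1
  · ext; simp
  · funext i; simp; ring

lemma lp_deg {n : ℕ} (P : MvPolynomial (Fin n) ℝ) (z v : EE n) :
    (lp P z v).natDegree ≤ P.totalDegree := by
  rw [lp, aeval_def, eval₂_eq]
  refine Polynomial.natDegree_sum_le_of_forall_le _ _ (fun m hm => ?_)
  refine le_trans ?_ (le_totalDegree hm)
  refine (Polynomial.natDegree_mul_le).trans ?_
  rw [Polynomial.algebraMap_eq, Polynomial.natDegree_C, zero_add]
  refine (Polynomial.natDegree_prod_le _ _).trans ?_
  rw [Finsupp.sum]
  refine Finset.sum_le_sum (fun i _ => ?_)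
  refine (Polynomial.natDegree_pow_le).trans ?_
  refine (Nat.mul_le_mul_left _ (?_ : _ ≤ 1)).trans (by simp)
  compute_degree

lemma sign_meas : Measurable Real.sign := by
  unfold Real.sign
  exact Measurable.ite measurableSet_Iio measurable_const
    (Measurable.ite measurableSet_Ioi measurable_const measurable_const)

lemma sign_contAt {x : ℝ} (hx : x ≠ 0) : ContinuousAt Real.sign x := by
  rcases lt_or_gt_of_ne hx with h | h
  · refine (continuousAt_const (y := (-1 : ℝ))).congr ?_
    filter_upwards [Iio_mem_nhds h] with y hy
    rw [Real.sign_of_neg hy]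
  · refine (continuousAt_const (y := (1 : ℝ))).congr ?_
    filter_upwards [Ioi_mem_nhds h] with y hy
    rw [Real.sign_of_pos hy]

lemma sign_norm (x : ℝ) : ‖Real.sign x‖ ≤ 1 := by
  rcases Real.sign_apply_eq x with h | h | h <;> simp [h]

theorem ham_sandwich (n d N : ℕ) (hN : N < (d+1)^n) (Q : Fin N → Set (EE n))
    (hf : ∀ i, volume (Q i) < ⊤) :
    ∃ P : MvPolynomial (Fin n) ℝ, P ≠ 0 ∧ P.totalDegree ≤ n * d ∧
      ∀ i, ∫ x in Q i, Real.sign (ep P x) = 0 := by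
  classical
  have hcard : Fintype.card (Fin (N+1)) ≤ Fintype.card (Fin n → Fin (d+1)) := by
    simp; omega
  obtain ⟨em⟩ := Function.Embedding.nonempty_of_card_le hcard
  set e : Fin (N+1) → (Fin n →₀ ℕ) := fun k => Finsupp.equivFunOnFinite.symm (fun i => (em k i : ℕ)) with he
  have hinj : Function.Injective e := by
    intro a b hab
    apply em.injective
    funext i
    have := DFunLike.congr_fun hab i
    exact Fin.ext this
  set PP : (Fin (N+1) → ℝ) → MvPolynomial (Fin n) ℝ := fun c => ∑ k, monomial (e k) (c k) with hPP
  have hP0 : ∀ c, c ≠ 0 → PP c ≠ 0 := by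
    intro c hc h
    apply hc
    funext k
    have := congrArg (coeff (e k)) h
    simp only [hPP, coeff_sum, coeff_monomial, coeff_zero] at this
    rw [Finset.sum_eq_single k] at this
    · simpa using this
    · intro b _ hb
      rw [if_neg (fun h => hb (hinj h))]
    · simp
  have hdeg : ∀ c, (PP c).totalDegree ≤ n * d := by
    intro c
    refine totalDegree_finsetSum_le (fun k _ => ?_)
    refine (totalDegree_monomial_le _ _).trans ?_
    rw [Finsupp.sum_fintype _ _ (by simp)]
    calc ∑ i, (e k) i ≤ ∑ i : Fin n, d := Finset.sum_le_sum (fun i _ => by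
          simp only [he, Finsupp.equivFunOnFinite_symm_apply_apply]; exact Nat.lt_succ_iff.mp (em k i).isLt)
      _ = n * d := by simp
  have hep : ∀ x c, ep (PP c) x = ∑ k, c k * (e k).prod (fun i m => x i ^ m) := by
    intro x c
    simp only [ep, hPP, map_sum, eval_monomial]
  set f : (Fin (N+1) → ℝ) → (Fin N → ℝ) := fun c i => ∫ x in Q i, Real.sign (ep (PP c) x) with hfdef
  obtain ⟨c, hc, hfc⟩ := BU.borsuk_ulam N f (by
    intro c
    funext i
    simp only [hfdef, Pi.neg_apply]
    rw [← integral_neg]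
    congr 1
    funext x
    rw [← Real.sign_neg, hep, hep]
    simp) (by
    intro c hc
    rw [continuousAt_pi]
    intro i
    have : IsFiniteMeasure (volume.restrict (Q i)) := ⟨by simpa using hf i⟩
    refine MeasureTheory.continuousAt_of_dominated (bound := fun _ => 1) ?_ ?_ ?_ ?_
    · exact Eventually.of_forall (fun c => (sign_meas.comp (ep_cont _).measurable).aestronglyMeasurable)
    · exact Eventually.of_forall (fun c => ae_of_all _ (fun x => sign_norm _))
    · exact integrable_const _
    · refine ae_restrict_of_ae ?_
      filter_upwards [ep_ae (PP c) (hP0 c hc)] with x hx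
      refine ContinuousAt.comp (f := fun c => ep (PP c) x) (sign_contAt hx) ?_
      simp only [hep]
      exact (continuous_finsetSum _ (fun k _ => (continuous_apply k).mul continuous_const)).continuousAt)
  exact ⟨PP c, hP0 c hc, hdeg c, fun i => congrFun hfc i⟩

end KA

open MeasureTheory
open scoped ENNReal
namespace KA
open Filter Topology

variable {n : ℕ}

def cube (k : Fin n → ℤ) : Set (EE n) := {x | ∀ i, (k i : ℝ) ≤ x i ∧ x i < k i + 1}

lemma cube_eq (k : Fin n → ℤ) : cube k = (@WithLp.ofLp 2 (Fin n → ℝ)) ⁻¹' (Set.pi Set.univ (fun i => Set.Ico (k i : ℝ) (k i + 1))) := by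
  ext x; simp [cube]

lemma cube_meas (k : Fin n → ℤ) : MeasurableSet (cube k) := by
  rw [cube_eq]
  exact (PiLp.volume_preserving_ofLp (Fin n)).measurable (MeasurableSet.univ_pi (fun i => measurableSet_Ico))

lemma cube_vol (k : Fin n → ℤ) : volume (cube k) = 1 := by
  rw [cube_eq, (PiLp.volume_preserving_ofLp (Fin n)).measure_preimage (MeasurableSet.univ_pi (fun i => measurableSet_Ico)).nullMeasurableSet, Real.volume_pi_Ico]
  simp

lemma coord_le (x : EE n) (i : Fin n) : |x i| ≤ ‖x‖ := by
  simpa using PiLp.norm_apply_le x i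

lemma norm_le_of_coord (x : EE n) (r : ℝ) (hr : 0 ≤ r) (h : ∀ i, |x i| ≤ r) : ‖x‖ ≤ n * r := by
  rw [EuclideanSpace.norm_eq]
  apply Real.sqrt_le_iff.mpr
  refine ⟨by positivity, ?_⟩
  calc ∑ i, ‖x i‖^2 ≤ ∑ i : Fin n, r^2 := Finset.sum_le_sum (fun i _ => by
        rw [Real.norm_eq_abs]; exact pow_le_pow_left₀ (abs_nonneg _) (h i) 2)
    _ = n * r^2 := by simp
    _ ≤ (n * r)^2 := by
      rw [mul_pow]
      refine mul_le_mul_of_nonneg_right ?_ (by positivity)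
      exact_mod_cast Nat.le_self_pow (by norm_num) n

lemma cube_diam (k : Fin n → ℤ) (x y : EE n) (hx : x ∈ cube k) (hy : y ∈ cube k) : ‖x - y‖ ≤ n := by
  have := norm_le_of_coord (x - y) 1 zero_le_one (fun i => by
    have h1 := hx i
    have h2 := hy i
    rw [PiLp.sub_apply, abs_le]
    constructor <;> linarith)
  simpa using this

lemma half (f : EE n → ℝ) (hf : Measurable f) (hf1 : ∀ᵐ x, f x = 1 ∨ f x = -1) (Q : Set (EE n))
    (hQ : MeasurableSet Q) (hv : volume Q = 1) (hi : ∫ x in Q, f x = 0) (s : ℝ) (hs : s = 1 ∨ s = -1) :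
    volume (Q ∩ {y | f y ≠ s}) = 2⁻¹ := by
  have : IsFiniteMeasure (volume.restrict Q) := ⟨by simp [hv]⟩
  have hms : MeasurableSet {y | f y ≠ s} := (hf (measurableSet_singleton s)).compl
  have hInteg : Integrable f (volume.restrict Q) := by
    refine Integrable.of_bound hf.aestronglyMeasurable 1 (ae_restrict_of_ae ?_)
    filter_upwards [hf1] with x hx
    rcases hx with h | h <;> simp [h]
  have h1 : ∫ x in Q, (1 - s * f x)/2 = 1/2 := by
    rw [integral_div, integral_sub (integrable_const _) (hInteg.const_mul s), integral_const_mul, hi]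
    simp [Measure.real, hv]
  have h2 : ∫ x in Q, (1 - s * f x)/2 = ∫ x in Q, ({y | f y ≠ s}.indicator (fun _ => (1:ℝ))) x := by
    apply integral_congr_ae
    refine ae_restrict_of_ae ?_
    filter_upwards [hf1] with x hx
    rcases hx with h | h <;> rcases hs with h' | h' <;> simp [h, h', Set.indicator] <;> norm_num
  rw [h2, integral_indicator hms, Measure.restrict_restrict hms] at h1
  simp only [integral_const, smul_eq_mul, mul_one, measureReal_restrict_apply_univ] at h1
  rw [Set.inter_comm]
  have h3 : volume ({y | f y ≠ s} ∩ Q) ≠ ⊤ := by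
    refine ne_top_of_le_ne_top ?_ (measure_mono Set.inter_subset_right)
    simp [hv]
  rw [← ENNReal.toReal_eq_toReal_iff' h3 (by simp)]
  simpa [Measure.real] using h1

lemma shift (f : EE n → ℝ) (hf : Measurable f) (hf1 : ∀ᵐ x, f x = 1 ∨ f x = -1) (Q : Set (EE n))
    (hQ : MeasurableSet Q) (hv : volume Q = 1) (hi : ∫ x in Q, f x = 0) (r : ℝ) (hr : 0 < r)
    (hd : ∀ x ∈ Q, ∀ y ∈ Q, ‖x - y‖ ≤ r) :
    ∃ u : EE n, ‖u‖ ≤ r ∧ (4 * volume (Metric.closedBall (0 : EE n) r))⁻¹ ≤ volume (Q ∩ {x | f (x + u) ≠ f x}) := by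
  by_contra hcon
  push Not at hcon
  set B := Metric.closedBall (0 : EE n) r with hB
  have hB0 : volume B ≠ 0 := (Metric.measure_closedBall_pos volume _ hr).ne'
  have hBt : volume B ≠ ⊤ := measure_closedBall_lt_top.ne
  set G : EE n → EE n → ℝ≥0∞ := fun x u => B.indicator (fun u => {x | f (x+u) ≠ f x}.indicator (fun _ => (1:ℝ≥0∞)) x) u with hG
  have hGm : Measurable (Function.uncurry G) := by
    have : Function.uncurry G = Set.indicator ({p : EE n × EE n | p.2 ∈ B} ∩ {p | f (p.1 + p.2) ≠ f p.1}) (fun _ => 1) := by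
      funext ⟨x, u⟩
      by_cases h1 : u ∈ B <;> by_cases h2 : f (x+u) ≠ f x <;> simp [hG, Function.uncurry, Set.indicator, h1, h2]
    rw [this]
    refine measurable_const.indicator (MeasurableSet.inter ?_ ?_)
    · exact measurable_snd Metric.isClosed_closedBall.measurableSet
    · exact (measurableSet_eq_fun (hf.comp (by fun_prop)) (hf.comp measurable_fst)).compl
  have h1 : (2⁻¹ : ℝ≥0∞) ≤ ∫⁻ x in Q, ∫⁻ u, G x u := by
    calc (2⁻¹ : ℝ≥0∞) = ∫⁻ x in Q, 2⁻¹ := by simp [hv]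
      _ ≤ _ := by
        refine lintegral_mono_ae ?_
        filter_upwards [ae_restrict_of_ae hf1, ae_restrict_mem hQ] with x hx hxQ
        rw [← half f hf hf1 Q hQ hv hi (f x) hx]
        have hms : MeasurableSet {y | f y ≠ f x} := (hf (measurableSet_singleton _)).compl
        rw [← lintegral_indicator_one (hQ.inter hms)]
        rw [← lintegral_add_left_eq_self _ x]
        refine lintegral_mono (fun u => ?_)
        by_cases h : x + u ∈ Q ∩ {y | f y ≠ f x}
        · have hu : u ∈ B := by
            rw [hB, mem_closedBall_zero_iff]
            have := hd _ h.1 _ hxQ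
            simpa using this
          have h2 : f (x+u) ≠ f x := h.2
          simp [hG, h, hu, h2, Set.indicator]
        · simp [Set.indicator, h]
  rw [lintegral_lintegral_swap hGm.aemeasurable] at h1
  have h2 : ∫⁻ u, ∫⁻ x in Q, G x u ≤ ∫⁻ u, B.indicator (fun _ => (4 * volume B)⁻¹) u := by
    refine lintegral_mono (fun u => ?_)
    by_cases hu : u ∈ B
    · simp only [hG, Set.indicator_of_mem hu]
      have hms : MeasurableSet {x | f (x+u) ≠ f x} := (measurableSet_eq_fun (hf.comp (by fun_prop)) hf).compl
      rw [lintegral_indicator hms, Measure.restrict_restrict hms]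
      simp only [lintegral_const, one_mul, Measure.restrict_apply_univ]
      rw [Set.inter_comm]
      exact (hcon u (by simpa [hB] using hu)).le
    · simp [hG, hu]
  rw [lintegral_indicator Metric.isClosed_closedBall.measurableSet] at h2
  have h3 := h1.trans h2
  simp only [lintegral_const, Measure.restrict_apply_univ] at h3
  rw [ENNReal.mul_inv (by simp) (by simp), mul_assoc, ENNReal.inv_mul_cancel hB0 hBt, mul_one] at h3
  rw [ENNReal.inv_le_inv] at h3
  norm_num at h3

/-- nearly orthonormal vectors span with controlled coefficients -/
lemma near_basis (hn : 1 ≤ n) (v : Fin n → EE n)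
    (hv : ∀ j, ‖v j - EuclideanSpace.single j (1:ℝ)‖ ≤ (100 * (n:ℝ))⁻¹) (u : EE n) :
    ∃ t : Fin n → ℝ, u = ∑ j, t j • v j ∧ ∀ j, |t j| ≤ 2 * ‖u‖ := by
  set T : EE n →ₗ[ℝ] EE n := 
    { toFun := fun t => ∑ j, t j • v j
      map_add' := by intro x y; simp [add_smul, Finset.sum_add_distrib]
      map_smul' := by intro c x; simp [Finset.smul_sum, smul_smul] } with hT
  have hT' : ∀ t : EE n, T t = ∑ j, t j • v j := fun t => rfl
  have hn0 : (0:ℝ) < n := by exact_mod_cast hn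
  have key : ∀ t : EE n, ‖t‖ ≤ 2 * ‖T t‖ := by
    intro t
    have e : T t - t = ∑ j, t j • (v j - EuclideanSpace.single j (1:ℝ)) := by
      rw [hT']
      have : t = ∑ j, t j • EuclideanSpace.single j (1:ℝ) := by
        ext i
        simp [Finset.sum_apply, Pi.single_apply]
      conv_lhs => rw [this]
      simp only [smul_sub, Finset.sum_sub_distrib]
      rw [← this]
    have h1 : ‖T t - t‖ ≤ ‖t‖ / 100 := by
      rw [e]
      refine (norm_sum_le _ _).trans ?_
      calc ∑ j, ‖t j • (v j - EuclideanSpace.single j (1:ℝ))‖ ≤ ∑ j : Fin n, ‖t‖ * (100 * (n:ℝ))⁻¹ := by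
            refine Finset.sum_le_sum (fun j _ => ?_)
            rw [norm_smul]
            exact mul_le_mul (coord_le t j) (hv j) (norm_nonneg _) (norm_nonneg _)
        _ = ‖t‖ / 100 := by simp; field_simp
    have h2 : ‖t‖ ≤ ‖T t‖ + ‖T t - t‖ := by
      have := norm_sub_le (T t) (T t - t)
      simpa using this
    have := norm_nonneg t
    linarith
  have hinj : Function.Injective T := by
    rw [injective_iff_map_eq_zero]
    intro t ht
    have := key t
    rw [ht] at this
    simpa using this
  have hsurj := LinearMap.injective_iff_surjective.mp hinj
  obtain ⟨t, ht⟩ := hsurj u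
  refine ⟨fun j => t j, by rw [← ht, hT'], fun j => ?_⟩
  rw [← ht]
  exact (coord_le t j).trans (key t)

lemma cube_dir (hn : 1 ≤ n) (f : EE n → ℝ) (hf : Measurable f) (hf1 : ∀ᵐ x, f x = 1 ∨ f x = -1)
    (k : Fin n → ℤ) (hi : ∫ x in cube k, f x = 0) (v : Fin n → EE n) (hv1 : ∀ j, ‖v j‖ = 1)
    (hv : ∀ j, ‖v j - EuclideanSpace.single j (1:ℝ)‖ ≤ (100 * (n:ℝ))⁻¹) :
    ∃ (j : Fin n) (t : ℝ) (w : EE n), |t| ≤ 2 * n ∧ ‖w‖ ≤ 2 * n * n ∧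
      (4 * volume (Metric.closedBall (0 : EE n) n))⁻¹ / n ≤
        volume (cube k ∩ {x | f (x + w + t • v j) ≠ f (x + w)}) := by
  have hn0 : (0:ℝ) < n := by exact_mod_cast hn
  obtain ⟨u, hu, huv⟩ := shift f hf hf1 (cube k) (cube_meas k) (cube_vol k) hi n hn0
    (fun x hx y hy => cube_diam k x y hx hy)
  obtain ⟨t, htu, ht⟩ := near_basis hn v hv u
  have ht' : ∀ j, |t j| ≤ 2 * n := fun j => (ht j).trans (by linarith)
  by_contra hcon
  push Not at hcon
  set t' : ℕ → ℝ := fun i => if h : i < n then t ⟨i, h⟩ else 0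
  set W : ℕ → EE n := fun m => ∑ i ∈ Finset.range m, (if h : i < n then t ⟨i, h⟩ • v ⟨i, h⟩ else 0) with hW
  have hWn : W n = u := by
    rw [hW, htu]
    simp only
    rw [Finset.sum_range]
    apply Finset.sum_congr rfl
    intro i _
    simp
  have hWs : ∀ i : Fin n, W (i + 1) = W i + t i • v i := by
    intro i
    simp only [hW, Finset.sum_range_succ]
    simp
  have hWb : ∀ i : Fin n, ‖W i‖ ≤ 2 * n * n := by
    intro i
    refine (norm_sum_le _ _).trans ?_
    calc _ ≤ ∑ j ∈ Finset.range i, (2 * n : ℝ) := by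
          refine Finset.sum_le_sum (fun j _ => ?_)
          split_ifs with h
          · rw [norm_smul, hv1, mul_one]; exact ht' _
          · simp
      _ = i * (2 * n) := by simp
      _ ≤ _ := by
        have : (i : ℝ) ≤ n := by exact_mod_cast i.isLt.le
        nlinarith
  have hsub : cube k ∩ {x | f (x + u) ≠ f x} ⊆ ⋃ i : Fin n, cube k ∩ {x | f (x + W i + t i • v i) ≠ f (x + W i)} := by
    rintro x ⟨hx, hne⟩
    by_contra hx2
    apply hne
    simp only [Set.mem_iUnion, not_exists] at hx2
    have h3 : ∀ m ≤ n, f (x + W m) = f x := by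
      intro m hm
      induction m with
      | zero => simp [hW]
      | succ m ih =>
        rw [← ih (by omega)]
        have := hx2 ⟨m, hm⟩
        by_contra h4
        apply this
        refine ⟨hx, ?_⟩
        have h5 := hWs ⟨m, hm⟩
        simp only at h5
        rw [h5, ← add_assoc] at h4
        exact h4
    rw [← hWn]
    exact h3 n le_rfl
  have h6 := huv.trans ((measure_mono hsub).trans (measure_iUnion_fintype_le _ _))
  have : Nonempty (Fin n) := ⟨⟨0, hn⟩⟩
  have h7 : ∑ i : Fin n, volume (cube k ∩ {x | f (x + W i + t i • v i) ≠ f (x + W i)}) <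
      ∑ i : Fin n, (4 * volume (Metric.closedBall (0 : EE n) n))⁻¹ / n := by
    refine ENNReal.sum_lt_sum_of_nonempty Finset.univ_nonempty (fun i _ => ?_)
    exact hcon i (t i) (W i) (ht' i) (hWb i)
  rw [Finset.sum_const, Finset.card_univ, Fintype.card_fin, nsmul_eq_mul, ENNReal.mul_div_cancel (by exact_mod_cast (by omega)) (by simp)] at h7
  exact absurd h6 (not_le.mpr h7)

end KA

namespace KA
open Filter Topology

lemma lattice_count {n : ℕ} (x : EE n) (r : ℕ) (S : Finset (Fin n → ℤ))
    (h : ∀ k ∈ S, ∃ y ∈ cube k, ‖y - x‖ ≤ r) : S.card ≤ (2 * r + 3)^n := by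
  classical
  have hsub : S ⊆ Fintype.piFinset (fun i => Finset.Icc (⌊x i⌋ - r - 1) (⌊x i⌋ + r + 1)) := by
    intro k hk
    obtain ⟨y, hy, hyx⟩ := h k hk
    rw [Fintype.mem_piFinset]
    intro i
    have h1 := hy i
    have h2 := abs_le.mp ((coord_le (y - x) i).trans hyx)
    rw [PiLp.sub_apply] at h2
    have h3 := Int.floor_le (x i)
    have h4 := Int.lt_floor_add_one (x i)
    rw [Finset.mem_Icc]
    constructor
    · have : ((⌊x i⌋ - r - 1 : ℤ) : ℝ) < k i + 1 := by push_cast; linarith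
      have h5 : (⌊x i⌋ - r - 1 : ℤ) < k i + 1 := by exact_mod_cast this
      omega
    · have : ((k i : ℤ) : ℝ) < (⌊x i⌋ + r + 1 : ℤ) := by push_cast; linarith
      have h5 : k i < (⌊x i⌋ + r + 1 : ℤ) := by exact_mod_cast this
      omega
  refine (Finset.card_le_card hsub).trans ?_
  rw [Fintype.card_piFinset]
  have : ∀ i : Fin n, (Finset.Icc (⌊x i⌋ - (r:ℤ) - 1) (⌊x i⌋ + r + 1)).card = 2 * r + 3 := by
    intro i
    rw [Int.card_Icc]
    omega
  simp [this]

lemma root_exists {n : ℕ} (P : MvPolynomial (Fin n) ℝ) (y v : EE n) (s t R : ℝ) (ht : |t| ≤ R)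
    (h : Real.sign (ep P (y + s • v + t • v)) ≠ Real.sign (ep P (y + s • v))) :
    ∃ τ, (lp P y v).IsRoot τ ∧ |s - τ| ≤ R := by
  have e : y + s • v + t • v = y + (s + t) • v := by rw [add_smul, add_assoc]
  rw [e, ← lp_eval, ← lp_eval] at h
  have hcont : ContinuousOn (fun τ => (lp P y v).eval τ) (Set.uIcc s (s+t)) :=
    (Polynomial.continuous _).continuousOn
  have h0 : (0:ℝ) ∈ Set.uIcc ((lp P y v).eval s) ((lp P y v).eval (s+t)) := by
    rw [Set.mem_uIcc]
    by_contra hc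
    push Not at hc
    apply h
    rcases lt_trichotomy ((lp P y v).eval s) 0 with h1 | h1 | h1
    · have := hc.1 h1.le
      rw [Real.sign_of_neg h1, Real.sign_of_neg this]
    · have h2 := hc.1 h1.le
      by_contra
      have := hc.2 h2.le
      linarith
    · have h2 : 0 < (lp P y v).eval (s+t) := by
        by_contra h3
        have := hc.2 (not_lt.mp h3)
        linarith
      rw [Real.sign_of_pos h1, Real.sign_of_pos h2]
  obtain ⟨τ, hτ, hτ0⟩ := intermediate_value_uIcc hcont h0
  refine ⟨τ, hτ0, ?_⟩
  have := Set.abs_sub_left_of_mem_uIcc hτ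
  rw [abs_sub_comm]
  refine this.trans ?_
  simpa using ht

lemma cyl_count {n : ℕ} (P : MvPolynomial (Fin n) ℝ) (hP : P ≠ 0) (D : ℕ) (hD : P.totalDegree ≤ D)
    (p v : EE n) (hv : ‖v‖ = 1) (S : Finset (Fin n → ℤ)) (s t : (Fin n → ℤ) → ℝ)
    (w : (Fin n → ℤ) → EE n) (R : ℕ) (R' ρ : ℝ) (hρ : 2 + n + R' ≤ ρ) (c : ℝ≥0∞)
    (ht : ∀ k ∈ S, |t k| ≤ R) (hw : ∀ k ∈ S, ‖w k‖ ≤ R')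
    (hs : ∀ k ∈ S, ∃ y ∈ cube k, ‖y - (p + s k • v)‖ ≤ 2)
    (hc : ∀ k ∈ S, c ≤ volume (cube k ∩ 
      {x | Real.sign (ep P (x + w k + t k • v)) ≠ Real.sign (ep P (x + w k))})) :
    (S.card : ℝ≥0∞) * c ≤ ((D * (2 * (R + 2) + 3)^n : ℕ) : ℝ≥0∞) * volume (Metric.closedBall (0 : EE n) ρ) := by
  classical
  set S' : (Fin n → ℤ) → Set (EE n) := fun k => (fun y => y + (s k • v - w k)) ⁻¹' (cube k ∩ 
      {x | Real.sign (ep P (x + w k + t k • v)) ≠ Real.sign (ep P (x + w k))}) with hS'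
  have hfm : Measurable (fun x => Real.sign (ep P x)) := sign_meas.comp (ep_cont P).measurable
  have hS'm : ∀ k, MeasurableSet (S' k) := by
    intro k
    refine (measurable_add_const _) ((cube_meas k).inter ?_)
    exact (measurableSet_eq_fun (hfm.comp (by fun_prop)) (hfm.comp (by fun_prop))).compl
  have hS'v : ∀ k ∈ S, c ≤ volume (S' k) := by
    intro k hk
    simp only [hS']
    rw [measure_preimage_add_right]
    exact hc k hk
  have hmem : ∀ k, ∀ y ∈ S' k, y + (s k • v - w k) ∈ cube k ∧ 
      Real.sign (ep P (y + s k • v + t k • v)) ≠ Real.sign (ep P (y + s k • v)) := by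
    rintro k y ⟨h1, h2⟩
    refine ⟨h1, ?_⟩
    have e : y + (s k • v - w k) + w k = y + s k • v := by abel
    have h2' : Real.sign (ep P (y + (s k • v - w k) + w k + t k • v)) ≠ Real.sign (ep P (y + (s k • v - w k) + w k)) := h2
    rwa [e] at h2'
  set M : ℕ := D * (2 * (R + 2) + 3)^n with hM
  have hball : ∀ k ∈ S, ∀ y ∈ S' k, y ∈ Metric.closedBall p ρ := by
    intro k hk y hy
    obtain ⟨h1, _⟩ := hmem k y hy
    obtain ⟨z, hz, hz2⟩ := hs k hk
    have h3 := cube_diam k _ _ h1 hz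
    have h4 := hw k hk
    rw [mem_closedBall_iff_norm]
    have e : y - p = (y + (s k • v - w k) - z) + (z - (p + s k • v)) + w k := by abel
    rw [e]
    refine (norm_add₃_le).trans ?_
    linarith
  have hcount : ∀ y, ep P y ≠ 0 → (S.filter (fun k => y ∈ S' k)).card ≤ M := by
    intro y hy
    have hlp : lp P y v ≠ 0 := by
      intro h
      apply hy
      have := lp_eval P y v 0
      rw [h] at this
      simpa using this.symm
    have hsub : S.filter (fun k => y ∈ S' k) ⊆ (lp P y v).roots.toFinset.biUnion
        (fun τ => S.filter (fun k => |s k - τ| ≤ R)) := by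
      intro k hk
      rw [Finset.mem_filter] at hk
      obtain ⟨hk1, hk2⟩ := hk
      obtain ⟨_, h2⟩ := hmem k y hk2
      obtain ⟨τ, h3, h4⟩ := root_exists P y v _ _ _ (ht k hk1) h2
      rw [Finset.mem_biUnion]
      refine ⟨τ, ?_, Finset.mem_filter.mpr ⟨hk1, h4⟩⟩
      rw [Multiset.mem_toFinset, Polynomial.mem_roots hlp]
      exact h3
    refine (Finset.card_le_card hsub).trans ?_
    refine (Finset.card_biUnion_le_card_mul _ _ ((2 * (R + 2) + 3)^n) ?_).trans ?_
    · intro τ _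
      refine lattice_count (p + τ • v) (R + 2) _ ?_
      intro k hk
      rw [Finset.mem_filter] at hk
      obtain ⟨z, hz, hz2⟩ := hs k hk.1
      refine ⟨z, hz, ?_⟩
      have e : z - (p + τ • v) = (z - (p + s k • v)) + (s k - τ) • v := by
        rw [sub_smul]; abel
      rw [e]
      refine (norm_add_le _ _).trans ?_
      rw [norm_smul, hv, mul_one, Real.norm_eq_abs]
      push_cast
      linarith [hk.2]
    · rw [hM]
      refine Nat.mul_le_mul_right _ ?_
      refine (Multiset.toFinset_card_le _).trans ?_
      exact (Polynomial.card_roots' _).trans ((lp_deg P y v).trans hD)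
  calc (S.card : ℝ≥0∞) * c = ∑ k ∈ S, c := by simp
    _ ≤ ∑ k ∈ S, volume (S' k) := Finset.sum_le_sum hS'v
    _ = ∑ k ∈ S, ∫⁻ y, (S' k).indicator 1 y := by
      refine Finset.sum_congr rfl (fun k _ => ?_)
      rw [lintegral_indicator_one (hS'm k)]
    _ = ∫⁻ y, ∑ k ∈ S, (S' k).indicator 1 y := by
      rw [lintegral_finsetSum]
      intro k _
      exact measurable_one.indicator (hS'm k)
    _ ≤ ∫⁻ y, (Metric.closedBall p ρ).indicator (fun _ => (M : ℝ≥0∞)) y := by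
      refine lintegral_mono_ae ?_
      filter_upwards [ep_ae P hP] with y hy
      have e : ∑ k ∈ S, (S' k).indicator (1 : EE n → ℝ≥0∞) y = ((S.filter (fun k => y ∈ S' k)).card : ℝ≥0∞) := by
        simp [Set.indicator]
      by_cases hyb : y ∈ Metric.closedBall p ρ
      · rw [Set.indicator_of_mem hyb, e]
        exact_mod_cast hcount y hy
      · rw [Set.indicator_of_notMem hyb]
        refine (Finset.sum_eq_zero (fun k hk => ?_)).le
        rw [Set.indicator_of_notMem]
        intro h
        exact hyb (hball k hk y h)
    _ = (M : ℝ≥0∞) * volume (Metric.closedBall p ρ) := by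
      rw [lintegral_indicator Metric.isClosed_closedBall.measurableSet]
      simp
    _ = _ := by
      rw [Measure.addHaar_closedBall_center]

lemma cyl_near {n : ℕ} (p v q : EE n) (h : q ∈ cylinder p v 1) : ∃ s : ℝ, ‖q - (p + s • v)‖ ≤ 2 := by
  have h1 : Metric.infDist q {y | ∃ t : ℝ, y = p + t • v} < 2 := lt_of_le_of_lt h (by norm_num)
  have hne : ({y | ∃ t : ℝ, y = p + t • v} : Set (EE n)).Nonempty := ⟨p + (0:ℝ) • v, 0, rfl⟩
  rw [Metric.infDist_lt_iff hne] at h1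
  obtain ⟨y, ⟨s, rfl⟩, hy⟩ := h1
  exact ⟨s, by rw [← dist_eq_norm]; exact hy.le⟩

/-- the volume constant -/
noncomputable def cc (n : ℕ) : ℝ≥0∞ := (4 * volume (Metric.closedBall (0 : EE n) n))⁻¹ / n
noncomputable def bb (n : ℕ) : ℝ≥0∞ := volume (Metric.closedBall (0 : EE n) (2 + n + 2 * n * n))

lemma main_count (n : ℕ) (hn : 1 ≤ n) (A : ℕ) (hA : 1 ≤ A) (p v : Fin n → Fin A → EE n)
    (hv1 : ∀ j a, ‖v j a‖ = 1)
    (hv : ∀ j a, ‖v j a - EuclideanSpace.single j (1:ℝ)‖ ≤ (100 * (n:ℝ))⁻¹)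
    (S : Finset (Fin n → ℤ))
    (hS : ∀ k ∈ S, (cube k ∩ ⋂ j : Fin n, ⋃ a : Fin A, cylinder (p j a) (v j a) 1).Nonempty)
    (d : ℕ) (hd : S.card < (d+1)^n) :
    (S.card : ℝ≥0∞) * cc n ≤ ((n * A * (n * d * (2 * (2 * n + 2) + 3)^n) : ℕ) : ℝ≥0∞) * bb n := by
  classical
  obtain ⟨P, hP, hdeg, hbis⟩ := ham_sandwich n d S.card hd (fun i => cube (S.equivFin.symm i).1)
    (fun i => by rw [cube_vol]; simp)
  have hbis' : ∀ k ∈ S, ∫ x in cube k, Real.sign (ep P x) = 0 := by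
    intro k hk
    have := hbis (S.equivFin ⟨k, hk⟩)
    simpa using this
  have hfm : Measurable (fun x => Real.sign (ep P x)) := sign_meas.comp (ep_cont P).measurable
  have hf1 : ∀ᵐ x : EE n, Real.sign (ep P x) = 1 ∨ Real.sign (ep P x) = -1 := by
    filter_upwards [ep_ae P hP] with x hx
    exact (Real.sign_apply_eq_of_ne_zero _ hx).symm
  have hex : ∀ k : Fin n → ℤ, ∃ (ja : Fin n × Fin A) (s t : ℝ) (w : EE n), k ∈ S → 
      (|t| ≤ 2 * n ∧ ‖w‖ ≤ 2 * n * n ∧ (∃ y ∈ cube k, ‖y - (p ja.1 ja.2 + s • v ja.1 ja.2)‖ ≤ 2) ∧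
      cc n ≤ volume (cube k ∩ {x | Real.sign (ep P (x + w + t • v ja.1 ja.2)) ≠ Real.sign (ep P (x + w))})) := by
    intro k
    by_cases hk : k ∈ S
    · obtain ⟨q, hq, hqI⟩ := hS k hk
      simp only [Set.mem_iInter, Set.mem_iUnion] at hqI
      choose a ha using hqI
      obtain ⟨j, t, w, h1, h2, h3⟩ := cube_dir hn _ hfm hf1 k (hbis' k hk) (fun j => v j (a j))
        (fun j => hv1 _ _) (fun j => hv _ _)
      obtain ⟨s, hs⟩ := cyl_near _ _ _ (ha j)
      exact ⟨(j, a j), s, t, w, fun _ => ⟨h1, h2, ⟨q, hq, hs⟩, h3⟩⟩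
    · exact ⟨(⟨0, hn⟩, ⟨0, hA⟩), 0, 0, 0, fun h => absurd h hk⟩
  choose ja s t w hall using hex
  have hcard : S.card = ∑ b : Fin n × Fin A, (S.filter (fun k => ja k = b)).card :=
    Finset.card_eq_sum_card_fiberwise (fun k _ => Finset.mem_coe.mpr (Finset.mem_univ _))
  rw [hcard]
  push_cast
  rw [Finset.sum_mul]
  calc _ ≤ ∑ b : Fin n × Fin A, ((n * d * (2 * (2 * n + 2) + 3)^n : ℕ) : ℝ≥0∞) * bb n := by
        refine Finset.sum_le_sum (fun b _ => ?_)
        refine cyl_count P hP (n * d) hdeg (p b.1 b.2) (v b.1 b.2) (hv1 _ _) _ s t w (2 * n) (2 * n * n) _ le_rfl (cc n) ?_ ?_ ?_ ?_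
        all_goals
          intro k hk
          rw [Finset.mem_filter] at hk
          obtain ⟨hk, rfl⟩ := hk
          obtain ⟨h1, h2, h3, h4⟩ := hall k hk
        · push_cast; exact h1
        · exact h2
        · exact h3
        · exact h4
    _ = _ := by
      simp only [Finset.sum_const, Finset.card_univ, Fintype.card_prod, Fintype.card_fin, nsmul_eq_mul]
      push_cast
      ring

end KA

namespace KA

lemma cc_ne_zero (n : ℕ) : cc n ≠ 0 := by
  unfold cc
  have h : volume (Metric.closedBall (0 : EE n) n) ≠ ⊤ := measure_closedBall_lt_top.ne
  have h2 : 4 * volume (Metric.closedBall (0 : EE n) n) ≠ ⊤ := ENNReal.mul_ne_top (by simp) h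
  intro h0
  rw [ENNReal.div_eq_zero_iff] at h0
  rcases h0 with h0 | h0
  · exact h2 (ENNReal.inv_eq_zero.mp h0)
  · exact ENNReal.natCast_ne_top n h0

lemma cc_ne_top (n : ℕ) (hn : 1 ≤ n) : cc n ≠ ⊤ := by
  unfold cc
  have hpos : (0:ℝ) < n := by exact_mod_cast hn
  have h : volume (Metric.closedBall (0 : EE n) n) ≠ 0 := (Metric.measure_closedBall_pos volume _ hpos).ne'
  refine ENNReal.div_ne_top ?_ (by exact_mod_cast (by omega : n ≠ 0))
  rw [Ne, ENNReal.inv_eq_top]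
  exact mul_ne_zero (by simp) h

lemma bb_ne_top (n : ℕ) : bb n ≠ ⊤ := measure_closedBall_lt_top.ne

/-- the linear constant -/
noncomputable def c1 (n : ℕ) : ℝ := ((n * (n * (2 * (2 * n + 2) + 3)^n) : ℕ) : ℝ) * (bb n).toReal / (cc n).toReal

lemma c1_nonneg (n : ℕ) : 0 ≤ c1 n := by
  unfold c1; positivity

lemma main_real (n : ℕ) (hn : 1 ≤ n) (A d N : ℕ)
    (h : (N : ℝ≥0∞) * cc n ≤ ((n * A * (n * d * (2 * (2 * n + 2) + 3)^n) : ℕ) : ℝ≥0∞) * bb n) :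
    (N : ℝ) ≤ c1 n * A * d := by
  have hc : 0 < (cc n).toReal := ENNReal.toReal_pos (cc_ne_zero n) (cc_ne_top n hn)
  have h2 := ENNReal.toReal_mono (ENNReal.mul_ne_top (ENNReal.natCast_ne_top _) (bb_ne_top n)) h
  rw [ENNReal.toReal_mul, ENNReal.toReal_mul, ENNReal.toReal_natCast, ENNReal.toReal_natCast] at h2
  have h3 : (N : ℝ) ≤ ((n * A * (n * d * (2 * (2 * n + 2) + 3)^n) : ℕ) : ℝ) * (bb n).toReal / (cc n).toReal := by
    rw [le_div_iff₀ hc]; exact h2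
  refine h3.trans (le_of_eq ?_)
  unfold c1
  push_cast
  ring

lemma arith (n : ℕ) (hn : 2 ≤ n) (c : ℝ) (hc : 0 ≤ c) (A N : ℕ)
    (h : ∀ d : ℕ, N < (d+1)^n → (N : ℝ) ≤ c * A * d) :
    (N : ℝ) ≤ (c ^ ((n:ℝ) / ((n:ℝ) - 1)) + 1) * (A : ℝ) ^ ((n:ℝ) / ((n:ℝ) - 1)) := by
  have hn2 : (2:ℝ) ≤ n := by exact_mod_cast hn
  have hn1 : (0:ℝ) < (n:ℝ) - 1 := by linarith
  have hA0 : (0:ℝ) ≤ A := Nat.cast_nonneg _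
  rcases Nat.eq_zero_or_pos N with rfl | hN
  · simp only [Nat.cast_zero]; positivity
  have hNr : (0:ℝ) < N := by exact_mod_cast hN
  set r : ℝ := (N:ℝ) ^ ((1:ℝ)/n) with hr
  have hrp : 0 < r := Real.rpow_pos_of_pos hNr _
  have hrn : r ^ n = N := by
    rw [hr, ← Real.rpow_natCast, ← Real.rpow_mul hNr.le, one_div, inv_mul_cancel₀ (by linarith), Real.rpow_one]
  have h1 : N < (⌊r⌋₊ + 1)^n := by
    have h2 : r ^ n < ((⌊r⌋₊:ℝ) + 1)^n := pow_lt_pow_left₀ (Nat.lt_floor_add_one r) hrp.le (by omega)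
    rw [hrn] at h2
    exact_mod_cast h2
  have h2 := h _ h1
  have h3 : (N:ℝ) ≤ c * A * r := h2.trans (mul_le_mul_of_nonneg_left (Nat.floor_le hrp.le) (by positivity))
  have h4 : r ^ (n-1) ≤ c * A := by
    have e : r ^ (n-1) * r = N := by rw [← pow_succ, ← hrn]; congr 1; omega
    rw [← e] at h3
    exact le_of_mul_le_mul_right h3 hrp
  have h5 : (N:ℝ) ≤ (c * A) ^ ((n:ℝ) / ((n:ℝ) - 1)) := by
    have h6 := Real.rpow_le_rpow (by positivity) h4 (by positivity : 0 ≤ (n:ℝ) / ((n:ℝ) - 1))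
    refine le_trans (le_of_eq ?_) h6
    rw [← Real.rpow_natCast r (n-1), ← Real.rpow_mul hrp.le, Nat.cast_sub (by omega), Nat.cast_one,
      mul_div_cancel₀ _ hn1.ne', Real.rpow_natCast, hrn]
  rw [Real.mul_rpow hc hA0] at h5
  have : 0 ≤ (A : ℝ) ^ ((n:ℝ) / ((n:ℝ) - 1)) := by positivity
  linarith

lemma vol_le {n : ℕ} (I : Set (EE n)) (B : ℝ)
    (h : ∀ S : Finset (Fin n → ℤ), (∀ k ∈ S, (cube k ∩ I).Nonempty) → (S.card : ℝ) ≤ B) :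
    volume I ≤ ENNReal.ofReal B := by
  classical
  have hsub : I ⊆ ⋃ k : {k : Fin n → ℤ // (cube k ∩ I).Nonempty}, cube k.1 := by
    intro x hx
    have hxc : x ∈ cube (fun i => ⌊x i⌋) := fun i => ⟨Int.floor_le _, Int.lt_floor_add_one _⟩
    exact Set.mem_iUnion.mpr ⟨⟨_, ⟨x, hxc, hx⟩⟩, hxc⟩
  refine (measure_mono hsub).trans ((measure_iUnion_le _).trans ?_)
  simp only [cube_vol]
  rw [ENNReal.tsum_eq_iSup_sum]
  refine iSup_le (fun T => ?_)
  have h1 := h (T.map (Function.Embedding.subtype _)) (by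
    intro k hk
    rw [Finset.mem_map] at hk
    obtain ⟨a, _, rfl⟩ := hk
    exact a.2)
  rw [Finset.card_map] at h1
  simp only [Finset.sum_const, nsmul_eq_mul, mul_one]
  rw [← ENNReal.ofReal_natCast]
  exact ENNReal.ofReal_le_ofReal h1

end KA

theorem kakeya_axes (n : ℕ) (hn : 2 ≤ n) :
    ∃ C : ℝ, 0 < C ∧
      ∀ (A : ℕ), 1 ≤ A →
      ∀ (p v : Fin n → Fin A → EuclideanSpace ℝ (Fin n)),
        (∀ j a, ‖v j a‖ = 1) →
        (∀ j a, ‖v j a - EuclideanSpace.single j (1:ℝ)‖ ≤ (100 * (n:ℝ))⁻¹) →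
        volume (⋂ j : Fin n, ⋃ a : Fin A, cylinder (p j a) (v j a) 1)
          ≤ ENNReal.ofReal (C * (A : ℝ) ^ ((n:ℝ) / ((n:ℝ) - 1))) := by
  have hc := KA.c1_nonneg n
  refine ⟨KA.c1 n ^ ((n:ℝ) / ((n:ℝ) - 1)) + 1, by positivity, ?_⟩
  intro A hA p v hv1 hv
  refine KA.vol_le _ _ (fun S hS => ?_)
  exact KA.arith n hn _ hc A S.card (fun d hd =>
    KA.main_real n (by omega) A d S.card (KA.main_count n (by omega) A hA p v hv1 hv S hS d hd))
end
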